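/- Let H ∈ (0,1/2), T > 0, ρ_1, ρ_2 ∈ ℝ ∖ {0}, let B^H be a one-dimensional fractional Brownian motion with Hurst parameter H having continuous paths and W a standard one-dimensional Brownian motion independent of B^H. Suppose b : [0,T] × ℝ → ℝ has the decomposition b = b̃ + b̂, where b̃ is measurable and bounded and b̂ is measurable, Lipschitz continuous in the spatial variable uniformly in time and of linear growth uniformly in time. For x ∈ ℝ let X^x be the unique strong solution of X^x_t = x + ∫_0^t b(u,X^x_u)du + ρ_1 B^H_t + ρ_2 W_t on [0,T]. Then for every Φ ∈ C_c^∞(ℝ) the function u : ℝ → ℝ defined by u(x) := E[Φ(X^x_T)] is continuously differentiable on ℝ. -/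

import Mathlib

open MeasureTheory ProbabilityTheory Real Set
open scoped ENNReal NNReal BigOperators

noncomputable section

/-- A one-dimensional centered Gaussian process with the fractional Brownian motion
covariance structure with Hurst parameter `H`.  For `H = 1/2` this is a standard
one-dimensional Brownian motion. -/
structure IsFBM {Ω : Type*} [MeasurableSpace Ω] (μ : Measure Ω) (H : ℝ) (B : ℝ → Ω → ℝ) :
    Prop where
  meas : ∀ t, Measurable (B t)
  gaussian : ∀ (n : ℕ) (t : Fin n → ℝ) (c : Fin n → ℝ),
    ∃ v : ℝ≥0, μ.map (fun ω => ∑ i, c i * B (t i) ω) = gaussianReal 0 v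
  cov : ∀ s t : ℝ, 0 ≤ s → 0 ≤ t →
    ∫ ω, B t ω * B s ω ∂μ = (t ^ (2 * H) + s ^ (2 * H) - |t - s| ^ (2 * H)) / 2

/-- The `μ`-augmentation of the σ-algebra generated by `(B_s, W_s)_{0 ≤ s ≤ t}`. -/
def augPairFiltration {Ω : Type*} [MeasurableSpace Ω] (μ : Measure Ω)
    (B W : ℝ → Ω → ℝ) (t : ℝ) : MeasurableSpace Ω :=
  (⨆ s ∈ Set.Icc (0 : ℝ) t,
      MeasurableSpace.comap (B s) inferInstance ⊔ MeasurableSpace.comap (W s) inferInstance) ⊔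
    MeasurableSpace.generateFrom {A : Set Ω | μ A = 0}

/-!
Conditionally on the path of `B`, the process `Y = X - ρ₁ B` solves a Brownian equation whose drift
is the sum of a bounded part and a Lipschitz part. Freezing the drift along the backward
characteristics of the Lipschitz part gives a Gaussian parametrix; in the error kernel the Lipschitz
part enters only through its increments over distances of order `√(t - r)`, so the kernel has
`L¹`-norm `O((t - r) ^ (-1/2))` and

  `E g(Y^x_t) = ∫ g p_t(x, ·) + ∫_0^t E (R_r g)(Y^x_r) dr`,  `‖R_r g‖_∞ ≤ C (t - r) ^ (-1/2) ‖g‖_∞`.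

The initial value appears on the right only in the Gaussian density and, through the same kind of
expectation, at earlier times. A Grönwall argument with a singular kernel therefore transfers the
bound `√(|h| + |k|) t ^ (-3/4)` for the difference of two slopes of the Gaussian density to
`x ↦ E g(Y^x_t)`, simultaneously for all bounded `g`. Hence the difference quotients converge
uniformly, and the limit is continuous.
-/

/-! ### The heat kernel -/

section HeatKernel

/-- The centered Gaussian density of variance `v`, as a function of a real variance. -/
def heatKernel (v y : ℝ) : ℝ := (√(2 * π * v))⁻¹ * rexp (-y ^ 2 / (2 * v))

/-- The first spatial derivative of `heatKernel v`. -/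
def heatKernelDeriv (v y : ℝ) : ℝ := -(y / v) * heatKernel v y

/-- The second spatial derivative of `heatKernel v`. -/
def heatKernelDeriv₂ (v y : ℝ) : ℝ := (y ^ 2 / v ^ 2 - 1 / v) * heatKernel v y

lemma heatKernel_nonneg (v y : ℝ) : 0 ≤ heatKernel v y := by unfold heatKernel; positivity

lemma heatKernel_neg (v y : ℝ) : heatKernel v (-y) = heatKernel v y := by simp [heatKernel]

@[fun_prop]
lemma continuous_heatKernel (v : ℝ) : Continuous (heatKernel v) := by unfold heatKernel; fun_prop

@[fun_prop]
lemma continuous_heatKernelDeriv (v : ℝ) : Continuous (heatKernelDeriv v) := by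
  unfold heatKernelDeriv; fun_prop

@[fun_prop]
lemma continuous_heatKernelDeriv₂ (v : ℝ) : Continuous (heatKernelDeriv₂ v) := by
  unfold heatKernelDeriv₂; fun_prop

lemma measurable_uncurry_heatKernel : Measurable fun p : ℝ × ℝ => heatKernel p.1 p.2 := by
  unfold heatKernel; fun_prop

lemma measurable_uncurry_heatKernelDeriv :
    Measurable fun p : ℝ × ℝ => heatKernelDeriv p.1 p.2 := by
  have := measurable_uncurry_heatKernel
  unfold heatKernelDeriv; fun_prop

lemma continuousOn_uncurry_heatKernelDeriv :
    ContinuousOn (fun p : ℝ × ℝ => heatKernelDeriv p.1 p.2) {p | 0 < p.1} := by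
  have hne : ∀ p ∈ {p : ℝ × ℝ | 0 < p.1}, p.1 ≠ 0 := fun p hp => ne_of_gt hp
  unfold heatKernelDeriv heatKernel
  refine .mul (.neg (.div (by fun_prop) (by fun_prop) hne)) (.mul (.inv₀ (by fun_prop) ?_)
    (.rexp (.div (by fun_prop) (by fun_prop) fun p hp => mul_ne_zero two_ne_zero (hne p hp))))
  intro p hp
  have : 0 < p.1 := hp
  positivity

lemma hasDerivAt_heatKernel (v y : ℝ) :
    HasDerivAt (heatKernel v) (heatKernelDeriv v y) y := by
  have h : HasDerivAt (fun y : ℝ => -y ^ 2 / (2 * v)) (-(y / v)) y := by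
    refine ((hasDerivAt_pow 2 y).neg.div_const (2 * v)).congr_deriv ?_
    by_cases hv : v = 0
    · simp [hv]
    · field_simp; norm_num
  refine (h.exp.const_mul (√(2 * π * v))⁻¹).congr_deriv ?_
  rw [heatKernelDeriv, heatKernel]; ring

lemma hasDerivAt_heatKernelDeriv (v y : ℝ) :
    HasDerivAt (heatKernelDeriv v) (heatKernelDeriv₂ v y) y := by
  have h : HasDerivAt (fun y : ℝ => -(y / v)) (-(1 / v)) y := ((hasDerivAt_id y).div_const v).neg
  refine (h.mul (hasDerivAt_heatKernel v y)).congr_deriv ?_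
  rw [heatKernelDeriv₂, heatKernelDeriv]; ring

lemma mul_heatKernel_mul_sq {v s : ℝ} (hv : 0 < v) (hs : 0 < s) (u : ℝ) :
    s * heatKernel (v * s ^ 2) (s * u) = heatKernel v u := by
  have h₁ : √(2 * π * (v * s ^ 2)) = √(2 * π * v) * s := by
    rw [← mul_assoc, sqrt_mul (by positivity), sqrt_sq hs.le]
  have h₂ : -(s * u) ^ 2 / (2 * (v * s ^ 2)) = -u ^ 2 / (2 * v) := by field_simp
  rw [heatKernel, heatKernel, h₁, h₂, mul_inv]
  field_simp

variable {v : ℝ}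

lemma heatKernel_eq_gaussianPDFReal (hv : 0 < v) :
    heatKernel v = gaussianPDFReal 0 v.toNNReal := by
  ext y
  simp [heatKernel, gaussianPDFReal, hv.le]

lemma integrable_heatKernel (hv : 0 < v) : Integrable (heatKernel v) := by
  rw [heatKernel_eq_gaussianPDFReal hv]; exact integrable_gaussianPDFReal _ _

lemma integral_heatKernel (hv : 0 < v) : ∫ y, heatKernel v y = 1 := by
  rw [heatKernel_eq_gaussianPDFReal hv]
  exact integral_gaussianPDFReal_eq_one 0 (by simpa using hv)

lemma lintegral_ofReal_heatKernel (hv : 0 < v) : ∫⁻ y, ENNReal.ofReal (heatKernel v y) = 1 := by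
  rw [← ofReal_integral_eq_lintegral_ofReal (integrable_heatKernel hv)
    (ae_of_all _ (heatKernel_nonneg v)), integral_heatKernel hv, ENNReal.ofReal_one]

lemma integral_heatKernel_add_mul_gaussianReal {w ρ : ℝ} (hv : 0 < v) (hw : 0 < w) (y : ℝ) :
    ∫ n, heatKernel v (y + ρ * n) ∂(gaussianReal 0 w.toNNReal) =
      heatKernel (v + ρ ^ 2 * w) y := by
  set V := v + ρ ^ 2 * w with hV
  have hVp : 0 < V := by positivity
  have hu : 0 < v * w / V := by positivity
  have complete_square : ∀ n, heatKernel w n • heatKernel v (y + ρ * n) =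
      heatKernel V y * heatKernel (v * w / V) (n + ρ * w / V * y) := by
    intro n
    simp only [smul_eq_mul, heatKernel]
    have e₁ : √(2 * π * w) * √(2 * π * v) = √(2 * π * V) * √(2 * π * (v * w / V)) := by
      rw [← sqrt_mul (by positivity), ← sqrt_mul (by positivity)]
      congr 1; field_simp
    have e₂ : rexp (-n ^ 2 / (2 * w)) * rexp (-(y + ρ * n) ^ 2 / (2 * v)) =
        rexp (-y ^ 2 / (2 * V)) * rexp (-(n + ρ * w / V * y) ^ 2 / (2 * (v * w / V))) := by
      rw [← exp_add, ← exp_add]; congr 1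
      field_simp
      rw [hV]; ring
    calc _ = (√(2 * π * w) * √(2 * π * v))⁻¹ *
          (rexp (-n ^ 2 / (2 * w)) * rexp (-(y + ρ * n) ^ 2 / (2 * v))) := by
          rw [mul_inv]; ring
      _ = _ := by rw [e₁, e₂, mul_inv]; ring
  rw [integral_gaussianReal_eq_integral_smul (by simpa using hw),
    ← heatKernel_eq_gaussianPDFReal hw]
  simp_rw [complete_square]
  rw [integral_const_mul, integral_add_right_eq_self (μ := volume) (heatKernel (v * w / V)),
    integral_heatKernel hu, mul_one]

lemma heatKernel_le_inv_sqrt (hv : 0 < v) (y : ℝ) : heatKernel v y ≤ (√v)⁻¹ := by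
  have : √v ≤ √(2 * π * v) := sqrt_le_sqrt (by nlinarith [pi_gt_three])
  have := sqrt_pos.2 hv
  have hexp : rexp (-y ^ 2 / (2 * v)) ≤ 1 := exp_le_one_iff.2
    (div_nonpos_of_nonpos_of_nonneg (neg_nonpos.2 (sq_nonneg y)) (by positivity))
  calc heatKernel v y ≤ (√(2 * π * v))⁻¹ * 1 := by rw [heatKernel]; gcongr
    _ ≤ (√v)⁻¹ := by rw [mul_one]; gcongr

lemma heatKernel_eq_mul_heatKernel_two_mul (hv : 0 < v) (y : ℝ) :
    heatKernel v y = √2 * rexp (-(y ^ 2 / (4 * v))) * heatKernel (2 * v) y := by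
  have e : √(2 * π * (2 * v)) = √2 * √(2 * π * v) := by
    rw [← sqrt_mul (by norm_num)]; congr 1; ring
  have h : rexp (-y ^ 2 / (2 * v)) =
      rexp (-(y ^ 2 / (4 * v))) * rexp (-y ^ 2 / (2 * (2 * v))) := by
    rw [← exp_add]; congr 1; field_simp; ring
  have : 0 < √(2 * π * v) := sqrt_pos.2 (by positivity)
  rw [heatKernel, heatKernel, e, h]
  field_simp

lemma add_sq_div_mul_heatKernel_le (hv : 0 < v) (y : ℝ) :
    (1 + y ^ 2 / v) * heatKernel v y ≤ 6 * heatKernel (2 * v) y := by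
  set s := y ^ 2 / (4 * v) with hs
  have hsq : y ^ 2 / v = 4 * s := by rw [hs]; field_simp
  have hexp : (1 + 4 * s) * rexp (-s) ≤ 4 := by
    rw [exp_neg, ← div_eq_mul_inv, div_le_iff₀ (exp_pos s)]
    linarith [add_one_le_exp s]
  have hsqrt : √(2 : ℝ) ≤ 3 / 2 := by rw [sqrt_le_left (by norm_num)]; norm_num
  calc (1 + y ^ 2 / v) * heatKernel v y
      = √2 * ((1 + 4 * s) * rexp (-s)) * heatKernel (2 * v) y := by
        rw [heatKernel_eq_mul_heatKernel_two_mul hv, hsq]; ring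
    _ ≤ 3 / 2 * 4 * heatKernel (2 * v) y := by
        have := heatKernel_nonneg (2 * v) y
        gcongr
    _ = 6 * heatKernel (2 * v) y := by ring

lemma abs_mul_abs_heatKernelDeriv_le (hv : 0 < v) (y : ℝ) :
    |y| * |heatKernelDeriv v y| ≤ 6 * heatKernel (2 * v) y := by
  have h := heatKernel_nonneg v y
  calc |y| * |heatKernelDeriv v y| = y ^ 2 / v * heatKernel v y := by
        rw [heatKernelDeriv, abs_mul, abs_neg, abs_div, abs_of_pos hv, abs_of_nonneg h,
          ← sq_abs y]
        ring
    _ ≤ (1 + y ^ 2 / v) * heatKernel v y := by gcongr; linarith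
    _ ≤ 6 * heatKernel (2 * v) y := add_sq_div_mul_heatKernel_le hv y

lemma abs_heatKernelDeriv_le (hv : 0 < v) (y : ℝ) :
    |heatKernelDeriv v y| ≤ 3 * (√v)⁻¹ * heatKernel (2 * v) y := by
  have h := heatKernel_nonneg v y
  have : 0 < √v := sqrt_pos.2 hv
  have amgm : |y| / √v ≤ (1 + y ^ 2 / v) / 2 := by
    have : y ^ 2 / v = (|y| / √v) ^ 2 := by rw [div_pow, sq_abs, sq_sqrt hv.le]
    nlinarith [sq_nonneg (|y| / √v - 1)]
  calc |heatKernelDeriv v y| = (√v)⁻¹ * (|y| / √v * heatKernel v y) := by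
        rw [heatKernelDeriv, abs_mul, abs_neg, abs_div, abs_of_pos hv, abs_of_nonneg h]
        nth_rw 1 [← mul_self_sqrt hv.le]
        field_simp
    _ ≤ (√v)⁻¹ * ((1 + y ^ 2 / v) / 2 * heatKernel v y) := by gcongr
    _ = (√v)⁻¹ / 2 * ((1 + y ^ 2 / v) * heatKernel v y) := by ring
    _ ≤ (√v)⁻¹ / 2 * (6 * heatKernel (2 * v) y) := by
        exact mul_le_mul_of_nonneg_left (add_sq_div_mul_heatKernel_le hv y) (by positivity)
    _ = 3 * (√v)⁻¹ * heatKernel (2 * v) y := by ring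

lemma abs_heatKernelDeriv₂_le (hv : 0 < v) (y : ℝ) :
    |heatKernelDeriv₂ v y| ≤ 6 * v⁻¹ * heatKernel (2 * v) y := by
  have h := heatKernel_nonneg v y
  have hfactor : |y ^ 2 / v ^ 2 - 1 / v| ≤ v⁻¹ * (1 + y ^ 2 / v) := by
    have hv2 : y ^ 2 / v ^ 2 = v⁻¹ * (y ^ 2 / v) := by field_simp
    have := inv_pos.2 hv
    have : 0 ≤ v⁻¹ * (y ^ 2 / v) := by positivity
    rw [hv2, one_div, abs_le]
    constructor <;> nlinarith
  calc |heatKernelDeriv₂ v y| = |y ^ 2 / v ^ 2 - 1 / v| * heatKernel v y := by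
        rw [heatKernelDeriv₂, abs_mul, abs_of_nonneg h]
    _ ≤ v⁻¹ * (1 + y ^ 2 / v) * heatKernel v y := by gcongr
    _ = v⁻¹ * ((1 + y ^ 2 / v) * heatKernel v y) := by ring
    _ ≤ v⁻¹ * (6 * heatKernel (2 * v) y) := by
        exact mul_le_mul_of_nonneg_left (add_sq_div_mul_heatKernel_le hv y) (by positivity)
    _ = 6 * v⁻¹ * heatKernel (2 * v) y := by ring

lemma abs_heatKernelDeriv_le_inv (hv : 0 < v) (y : ℝ) : |heatKernelDeriv v y| ≤ 3 * v⁻¹ := by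
  have h₂ : heatKernel (2 * v) y ≤ (√v)⁻¹ :=
    (heatKernel_le_inv_sqrt (by positivity) y).trans
      (inv_anti₀ (sqrt_pos.2 hv) (sqrt_le_sqrt (by linarith)))
  calc |heatKernelDeriv v y| ≤ 3 * (√v)⁻¹ * heatKernel (2 * v) y := abs_heatKernelDeriv_le hv y
    _ ≤ 3 * (√v)⁻¹ * (√v)⁻¹ := by gcongr
    _ = 3 * v⁻¹ := by rw [mul_assoc, ← mul_inv, mul_self_sqrt hv.le]

lemma lintegral_enorm_le_of_abs_le_heatKernel {f : ℝ → ℝ} {C : ℝ} (hv : 0 < v)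
    (hf : ∀ y, |f y| ≤ C * heatKernel v y) : ∫⁻ y, ‖f y‖ₑ ≤ ENNReal.ofReal C := by
  have hC : 0 ≤ C := by
    have hpos : 0 < heatKernel v 0 := by unfold heatKernel; positivity
    exact nonneg_of_mul_nonneg_left ((abs_nonneg _).trans (hf 0)) hpos
  calc ∫⁻ y, ‖f y‖ₑ ≤ ∫⁻ y, ENNReal.ofReal C * ENNReal.ofReal (heatKernel v y) := by
        refine lintegral_mono fun y => ?_
        rw [Real.enorm_eq_ofReal_abs, ← ENNReal.ofReal_mul hC]
        exact ENNReal.ofReal_le_ofReal (hf y)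
    _ = ENNReal.ofReal C := by
        rw [lintegral_const_mul' _ _ ENNReal.ofReal_ne_top, lintegral_ofReal_heatKernel hv, mul_one]

lemma lintegral_enorm_heatKernelDeriv_le (hv : 0 < v) :
    ∫⁻ y, ‖heatKernelDeriv v y‖ₑ ≤ ENNReal.ofReal (3 * (√v)⁻¹) :=
  lintegral_enorm_le_of_abs_le_heatKernel (by positivity) (abs_heatKernelDeriv_le hv)

lemma lintegral_enorm_heatKernelDeriv₂_le (hv : 0 < v) :
    ∫⁻ y, ‖heatKernelDeriv₂ v y‖ₑ ≤ ENNReal.ofReal (6 * v⁻¹) :=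
  lintegral_enorm_le_of_abs_le_heatKernel (by positivity) (abs_heatKernelDeriv₂_le hv)

end HeatKernel

/-! ### Difference quotients in `L¹` -/

section SlopeL1

lemma lintegral_enorm_intervalIntegral_le {α : Type*} [MeasurableSpace α] {μ : Measure α}
    [SFinite μ] {f : α → ℝ → ℝ} (hf : Measurable (Function.uncurry f)) {a b : ℝ} {C : ℝ≥0∞}
    (hC : ∀ s ∈ uIoc a b, ∫⁻ w, ‖f w s‖ₑ ∂μ ≤ C) :
    ∫⁻ w, ‖∫ s in a..b, f w s‖ₑ ∂μ ≤ ENNReal.ofReal |b - a| * C := by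
  calc ∫⁻ w, ‖∫ s in a..b, f w s‖ₑ ∂μ ≤ ∫⁻ w, (∫⁻ s in uIoc a b, ‖f w s‖ₑ) ∂μ := by
        refine lintegral_mono fun w => ?_
        rw [← enorm_norm, intervalIntegral.norm_integral_eq_norm_integral_uIoc, enorm_norm]
        exact enorm_integral_le_lintegral_enorm _
    _ = ∫⁻ s in uIoc a b, ∫⁻ w, ‖f w s‖ₑ ∂μ := lintegral_lintegral_swap hf.enorm.aemeasurable
    _ ≤ ∫⁻ _ in uIoc a b, C := setLIntegral_mono measurable_const hC
    _ = ENNReal.ofReal |b - a| * C := by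
        rw [setLIntegral_const, uIoc, volume_Ioc, max_sub_min_eq_abs, mul_comm]

variable {F F' : ℝ → ℝ}

lemma lintegral_enorm_translate_sub_le (hF : ∀ y, HasDerivAt F (F' y) y) (hF' : Continuous F')
    (δ : ℝ) : ∫⁻ w, ‖F (w + δ) - F w‖ₑ ≤ ENNReal.ofReal |δ| * ∫⁻ w, ‖F' w‖ₑ := by
  have ftc : ∀ w, F (w + δ) - F w = ∫ s in (0 : ℝ)..δ, F' (w + s) := fun w => by
    rw [intervalIntegral.integral_comp_add_left F' w, add_zero,
      intervalIntegral.integral_eq_sub_of_hasDerivAt (fun x _ => hF x)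
        (hF'.intervalIntegrable _ _)]
  simp_rw [ftc]
  refine (lintegral_enorm_intervalIntegral_le (C := ∫⁻ w, ‖F' w‖ₑ) (by fun_prop)
    fun s _ => ?_).trans_eq (by rw [sub_zero])
  exact (lintegral_add_right_eq_self (fun w => ‖F' w‖ₑ) s).le

/-- The difference of the slopes of `F` over `[x, x + h]` and over `[x, x + k]`. -/
def slopeDiff (F : ℝ → ℝ) (x h k : ℝ) : ℝ := (F (x + h) - F x) / h - (F (x + k) - F x) / k

lemma lintegral_enorm_slopeDiff_le (hF : ∀ y, HasDerivAt F (F' y) y) (hF' : Continuous F')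
    {h k : ℝ} (hh : h ≠ 0) (hk : k ≠ 0) {C : ℝ≥0∞}
    (hC : ∀ δ, |δ| ≤ |h| + |k| → ∫⁻ w, ‖F' (w + δ) - F' w‖ₑ ≤ C) (x : ℝ) :
    ∫⁻ w, ‖slopeDiff (fun s => F (s - w)) x h k‖ₑ ≤ C := by
  have ftc : ∀ {a u}, a ≠ 0 → (F (u + a) - F u) / a = ∫ s in (0 : ℝ)..1, F' (u + a * s) := by
    intro a u ha
    rw [intervalIntegral.integral_comp_add_mul F' ha, mul_zero, add_zero, mul_one,
      intervalIntegral.integral_eq_sub_of_hasDerivAt (fun x _ => hF x)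
        (hF'.intervalIntegrable _ _), smul_eq_mul, div_eq_inv_mul]
  have hslopes : ∀ w, slopeDiff (fun s => F (s - w)) x h k =
      ∫ s in (0 : ℝ)..1, (F' (x - w + h * s) - F' (x - w + k * s)) := by
    intro w
    rw [slopeDiff, add_sub_right_comm x h, add_sub_right_comm x k, ftc hh, ftc hk,
      intervalIntegral.integral_sub] <;>
    · exact Continuous.intervalIntegrable (by fun_prop) _ _
  simp_rw [hslopes]
  refine (lintegral_enorm_intervalIntegral_le (C := C) (by fun_prop) fun s hs => ?_).trans_eq
    (by simp)
  rw [uIoc_of_le zero_le_one] at hs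
  calc ∫⁻ w, ‖F' (x - w + h * s) - F' (x - w + k * s)‖ₑ
      = ∫⁻ w, ‖F' ((x + k * s) - w + (h * s - k * s)) - F' ((x + k * s) - w)‖ₑ := by
        congr! 3; ring_nf
    _ = ∫⁻ w, ‖F' (w + (h * s - k * s)) - F' w‖ₑ :=
        lintegral_sub_left_eq_self (fun w => ‖F' (w + (h * s - k * s)) - F' w‖ₑ) (x + k * s)
    _ ≤ C := by
        refine hC _ ?_
        rw [← sub_mul, abs_mul, abs_of_pos hs.1]
        exact (mul_le_of_le_one_right (abs_nonneg _) hs.2).trans (abs_sub _ _)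

/-- The exponent `-3/4` comes from interpolating `‖k_v'‖₁ ≲ v ^ (-1/2)` and
`‖k_v''‖₁ ≲ v ^ (-1)`; it is integrable at `0`, unlike the exponent of the second bound. -/
lemma lintegral_enorm_heatKernelDeriv_translate_sub_le {v : ℝ} (hv : 0 < v) (δ : ℝ) :
    ∫⁻ w, ‖heatKernelDeriv v (w + δ) - heatKernelDeriv v w‖ₑ ≤
      ENNReal.ofReal (6 * √|δ| * v ^ (-(3 / 4) : ℝ)) := by
  have crude : ∫⁻ w, ‖heatKernelDeriv v (w + δ) - heatKernelDeriv v w‖ₑ ≤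
      ENNReal.ofReal (6 * (√v)⁻¹) := by
    calc _ ≤ ∫⁻ w, (‖heatKernelDeriv v (w + δ)‖ₑ + ‖heatKernelDeriv v w‖ₑ) :=
          lintegral_mono fun w => enorm_sub_le
      _ = (∫⁻ w, ‖heatKernelDeriv v w‖ₑ) + ∫⁻ w, ‖heatKernelDeriv v w‖ₑ := by
          rw [lintegral_add_right _ (by fun_prop),
            lintegral_add_right_eq_self (fun w => ‖heatKernelDeriv v w‖ₑ) δ]
      _ ≤ ENNReal.ofReal (3 * (√v)⁻¹) + ENNReal.ofReal (3 * (√v)⁻¹) := by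
          gcongr <;> exact lintegral_enorm_heatKernelDeriv_le hv
      _ = ENNReal.ofReal (6 * (√v)⁻¹) := by
          rw [← ENNReal.ofReal_add (by positivity) (by positivity)]; congr 1; ring
  have smooth : ∫⁻ w, ‖heatKernelDeriv v (w + δ) - heatKernelDeriv v w‖ₑ ≤
      ENNReal.ofReal (|δ| * (6 * v⁻¹)) := by
    rw [ENNReal.ofReal_mul (abs_nonneg _)]
    exact (lintegral_enorm_translate_sub_le (hasDerivAt_heatKernelDeriv v)
      (continuous_heatKernelDeriv₂ v) δ).trans
        (by gcongr; exact lintegral_enorm_heatKernelDeriv₂_le hv)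
  have hfin := ne_top_of_le_ne_top ENNReal.ofReal_ne_top crude
  rw [ENNReal.le_ofReal_iff_toReal_le hfin (by positivity)] at crude smooth ⊢
  have hrpow : (v ^ (-(3 / 4) : ℝ)) ^ 2 = v⁻¹ * (√v)⁻¹ := by
    rw [← rpow_natCast, ← rpow_mul hv.le, sqrt_eq_rpow, ← rpow_neg_one, ← rpow_neg hv.le,
      ← rpow_add hv]
    norm_num
  refine le_of_sq_le_sq ?_ (by positivity)
  calc _ ≤ (6 * (√v)⁻¹) * (|δ| * (6 * v⁻¹)) := by
        rw [sq]; exact mul_le_mul crude smooth ENNReal.toReal_nonneg (by positivity)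
    _ = (6 * √|δ| * v ^ (-(3 / 4) : ℝ)) ^ 2 := by
        rw [mul_pow, mul_pow, hrpow, sq_sqrt (abs_nonneg _)]; ring

lemma lintegral_enorm_slopeDiff_heatKernel_le {v h k : ℝ} (hv : 0 < v) (hh : h ≠ 0) (hk : k ≠ 0)
    (x : ℝ) :
    ∫⁻ w, ‖slopeDiff (fun s => heatKernel v (s - w)) x h k‖ₑ ≤
      ENNReal.ofReal (6 * √(|h| + |k|) * v ^ (-(3 / 4) : ℝ)) :=
  lintegral_enorm_slopeDiff_le (hasDerivAt_heatKernel v) (continuous_heatKernelDeriv v) hh hk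
    (fun δ hδ => (lintegral_enorm_heatKernelDeriv_translate_sub_le hv δ).trans (by gcongr)) x

end SlopeL1

/-! ### Grönwall's inequality in integral form -/

section Gronwall

lemma integral_le_integral_exp_mul_of_le_add_mul_integral {f A : ℝ → ℝ} (hf : Continuous f)
    (hA : Continuous A) {K τ : ℝ} (hτ : 0 ≤ τ)
    (h : ∀ s ∈ Icc 0 τ, f s ≤ A s + K * ∫ r in (0 : ℝ)..s, f r) :
    ∫ r in (0 : ℝ)..τ, f r ≤ ∫ r in (0 : ℝ)..τ, rexp (K * (τ - r)) * A r := by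
  set P : ℝ → ℝ := fun x => rexp (-(K * x)) * (∫ r in (0 : ℝ)..x, f r) -
    ∫ r in (0 : ℝ)..x, rexp (-(K * r)) * A r
  have hP : ∀ x, HasDerivAt P
      (rexp (-(K * x)) * (f x - K * ∫ r in (0 : ℝ)..x, f r) - rexp (-(K * x)) * A x) x := by
    intro x
    have hexp : HasDerivAt (fun x => rexp (-(K * x))) (rexp (-(K * x)) * -(K * 1)) x :=
      ((hasDerivAt_id x).const_mul K).neg.exp
    refine ((hexp.mul (hf.integral_hasStrictDerivAt 0 x).hasDerivAt).sub
      (Continuous.integral_hasStrictDerivAt (f := fun r => rexp (-(K * r)) * A r) (by fun_prop)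
        0 x).hasDerivAt).congr_deriv ?_
    ring
  have hanti : AntitoneOn P (Icc 0 τ) := by
    refine antitoneOn_of_deriv_nonpos (convex_Icc _ _)
      (fun x _ => (hP x).continuousAt.continuousWithinAt)
      (fun x _ => (hP x).differentiableAt.differentiableWithinAt) fun x hx => ?_
    rw [(hP x).deriv, ← mul_sub]
    have := h x (interior_subset hx)
    exact mul_nonpos_of_nonneg_of_nonpos (exp_pos _).le (by linarith)
  have hPτ : rexp (-(K * τ)) * (∫ r in (0 : ℝ)..τ, f r) ≤
      ∫ r in (0 : ℝ)..τ, rexp (-(K * r)) * A r := by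
    simpa [P] using hanti ⟨le_rfl, hτ⟩ ⟨hτ, le_rfl⟩ hτ
  calc ∫ r in (0 : ℝ)..τ, f r
      = rexp (K * τ) * (rexp (-(K * τ)) * ∫ r in (0 : ℝ)..τ, f r) := by
        rw [← mul_assoc, ← exp_add, add_neg_cancel, exp_zero, one_mul]
    _ ≤ rexp (K * τ) * ∫ r in (0 : ℝ)..τ, rexp (-(K * r)) * A r := by gcongr
    _ = ∫ r in (0 : ℝ)..τ, rexp (K * (τ - r)) * A r := by
        rw [← intervalIntegral.integral_const_mul]
        simp only [← mul_assoc, ← exp_add]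
        ring_nf

lemma integral_le_exp_mul_integral_of_le_add_mul_integral {f A : ℝ → ℝ} (hf : Continuous f)
    (hA : Continuous A) {K τ : ℝ} (hK : 0 ≤ K) (hτ : 0 ≤ τ) (hA₀ : ∀ s, 0 ≤ A s)
    (h : ∀ s ∈ Icc 0 τ, f s ≤ A s + K * ∫ r in (0 : ℝ)..s, f r) :
    ∫ r in (0 : ℝ)..τ, f r ≤ rexp (K * τ) * ∫ r in (0 : ℝ)..τ, A r := by
  refine (integral_le_integral_exp_mul_of_le_add_mul_integral hf hA hτ h).trans ?_
  rw [← intervalIntegral.integral_const_mul]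
  refine intervalIntegral.integral_mono_on hτ (Continuous.intervalIntegrable (by fun_prop) _ _)
    (Continuous.intervalIntegrable (by fun_prop) _ _) fun r hr => ?_
  have := hA₀ r
  have := hr.1
  gcongr
  linarith

lemma le_mul_exp_of_le_add_mul_integral {f : ℝ → ℝ} (hf : Continuous f) {c K τ : ℝ}
    (hK : 0 ≤ K) (hτ : 0 ≤ τ) (h : ∀ s ∈ Icc 0 τ, f s ≤ c + K * ∫ r in (0 : ℝ)..s, f r) :
    f τ ≤ c * rexp (K * τ) := by
  have hexp : ∫ r in (0 : ℝ)..τ, K * (rexp (K * (τ - r)) * c) = c * rexp (K * τ) - c := by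
    rw [intervalIntegral.integral_eq_sub_of_hasDerivAt (f := fun r => -(c * rexp (K * (τ - r))))]
    · simp; ring
    · intro r _
      refine ((((hasDerivAt_id r).const_sub τ).const_mul K).exp.const_mul c).neg.congr_deriv ?_
      simp only [id]; ring
    · exact Continuous.intervalIntegrable (by fun_prop) _ _
  calc f τ ≤ c + K * ∫ r in (0 : ℝ)..τ, f r := h τ ⟨hτ, le_rfl⟩
    _ ≤ c + K * ∫ r in (0 : ℝ)..τ, rexp (K * (τ - r)) * c := by
        gcongr
        exact integral_le_integral_exp_mul_of_le_add_mul_integral hf continuous_const hτ h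
    _ = c * rexp (K * τ) := by rw [← intervalIntegral.integral_const_mul, hexp]; ring

lemma abs_intervalIntegral_le_of_abs_le_comp_dist {u w : ℝ → ℝ} (hw : Continuous w) (t : ℝ)
    (huw : ∀ r, |u r| ≤ w |r - t|) (s : ℝ) :
    |∫ r in t..s, u r| ≤ ∫ r in (0 : ℝ)..|s - t|, w r := by
  rcases le_total t s with hts | hst
  · have hint : ∫ r in (0 : ℝ)..|s - t|, w r = ∫ r in t..s, w |r - t| := by
      rw [abs_of_nonneg (sub_nonneg.2 hts), ← sub_self t,
        ← intervalIntegral.integral_comp_sub_right w t]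
      refine intervalIntegral.integral_congr fun r hr => ?_
      rw [uIcc_of_le hts] at hr
      simp only [abs_of_nonneg (sub_nonneg.2 hr.1)]
    rw [hint]
    exact intervalIntegral.norm_integral_le_of_norm_le (f := u)
      (g := fun r => w |r - t|) hts (ae_of_all _ fun r _ => huw r)
      (Continuous.intervalIntegrable (by fun_prop) _ _)
  · have hint : ∫ r in (0 : ℝ)..|s - t|, w r = ∫ r in s..t, w |r - t| := by
      rw [abs_of_nonpos (sub_nonpos.2 hst), neg_sub, ← sub_self t,
        ← intervalIntegral.integral_comp_sub_left w t]
      refine intervalIntegral.integral_congr fun r hr => ?_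
      rw [uIcc_of_le hst] at hr
      simp only [abs_of_nonpos (sub_nonpos.2 hr.2), neg_sub]
    rw [hint, intervalIntegral.integral_symm, abs_neg]
    exact intervalIntegral.norm_integral_le_of_norm_le (f := u)
      (g := fun r => w |r - t|) hst (ae_of_all _ fun r _ => huw r)
      (Continuous.intervalIntegrable (by fun_prop) _ _)

lemma le_mul_exp_abs_of_le_add_mul_abs_integral {f : ℝ → ℝ} (hf : Continuous f)
    (hf₀ : ∀ s, 0 ≤ f s) {c K t : ℝ} (hK : 0 ≤ K)
    (h : ∀ s, f s ≤ c + K * |∫ r in t..s, f r|) (s : ℝ) :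
    f s ≤ c * rexp (K * |s - t|) := by
  rcases le_total t s with hts | hst
  · have := le_mul_exp_of_le_add_mul_integral (f := fun u => f (t + u)) (c := c) (by fun_prop) hK
      (sub_nonneg.2 hts) fun u hu => by
        refine (h _).trans_eq ?_
        rw [intervalIntegral.integral_comp_add_left, add_zero, abs_of_nonneg
          (intervalIntegral.integral_nonneg (by linarith [hu.1]) fun r _ => hf₀ r)]
    rwa [add_sub_cancel, ← abs_of_nonneg (sub_nonneg.2 hts)] at this
  · have := le_mul_exp_of_le_add_mul_integral (f := fun u => f (t - u)) (c := c) (by fun_prop) hK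
      (sub_nonneg.2 hst) fun u hu => by
        refine (h _).trans_eq ?_
        rw [intervalIntegral.integral_comp_sub_left, sub_zero, intervalIntegral.integral_symm,
          abs_neg, abs_of_nonneg
          (intervalIntegral.integral_nonneg (by linarith [hu.1]) fun r _ => hf₀ r)]
    rwa [sub_sub_cancel, ← neg_sub s t, ← abs_of_nonpos (sub_nonpos.2 hst)] at this

end Gronwall

/-! ### Carathéodory differential equations -/

section Caratheodory

/-- `f` solves the integral form of `f' = a(·, f)`. -/
structure IsCaratheodorySolution (a : ℝ → ℝ → ℝ) (f : ℝ → ℝ) : Prop where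
  continuous : Continuous f
  sub_eq : ∀ s t, f t - f s = ∫ r in s..t, a r (f r)

variable {a : ℝ → ℝ → ℝ} {K : ℝ≥0} {C : ℝ} {f g : ℝ → ℝ}

lemma abs_le_add_mul_abs_of_lipschitzWith {φ : ℝ → ℝ} (hφ : LipschitzWith K φ) (y : ℝ) :
    |φ y| ≤ |φ 0| + K * |y| := by
  have := hφ.dist_le_mul y 0
  rw [Real.dist_eq, Real.dist_eq, sub_zero] at this
  calc |φ y| = |φ 0 + (φ y - φ 0)| := by ring_nf
    _ ≤ |φ 0| + K * |y| := (abs_add_le _ _).trans (by gcongr)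

lemma intervalIntegrable_comp_of_lipschitzWith (ha : Measurable (Function.uncurry a))
    (hlip : ∀ r, LipschitzWith K (a r)) (hC : ∀ r, |a r 0| ≤ C) (hf : Continuous f) (s t : ℝ) :
    IntervalIntegrable (fun r => a r (f r)) volume s t := by
  have hbound : Continuous fun r => C + K * |f r| := by fun_prop
  refine (hbound.intervalIntegrable s t).mono_fun
    (ha.comp (measurable_id.prodMk hf.measurable)).aestronglyMeasurable (ae_of_all _ fun r => ?_)
  exact ((abs_le_add_mul_abs_of_lipschitzWith (hlip r) _).trans
    (add_le_add_left (hC r) _)).trans (le_abs_self _)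

namespace IsCaratheodorySolution

lemma sub_sub_sub_eq (ha : Measurable (Function.uncurry a))
    (hlip : ∀ r, LipschitzWith K (a r)) (hC : ∀ r, |a r 0| ≤ C)
    (hf : IsCaratheodorySolution a f) (hg : IsCaratheodorySolution a g) (s t : ℝ) :
    (f t - f s) - (g t - g s) = ∫ r in s..t, (a r (f r) - a r (g r)) := by
  rw [hf.sub_eq, hg.sub_eq, intervalIntegral.integral_sub
    (intervalIntegrable_comp_of_lipschitzWith ha hlip hC hf.continuous _ _)
    (intervalIntegrable_comp_of_lipschitzWith ha hlip hC hg.continuous _ _)]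

lemma abs_sub_le (ha : Measurable (Function.uncurry a)) (hlip : ∀ r, LipschitzWith K (a r))
    (hC : ∀ r, |a r 0| ≤ C) (hf : IsCaratheodorySolution a f) (hg : IsCaratheodorySolution a g)
    (s t : ℝ) : |f s - g s| ≤ |f t - g t| * rexp (K * |s - t|) := by
  have := hf.continuous
  have := hg.continuous
  refine le_mul_exp_abs_of_le_add_mul_abs_integral (f := fun s => |f s - g s|) (by fun_prop)
    (fun _ => abs_nonneg _) K.coe_nonneg (fun s => ?_) s
  have hincr := hf.sub_sub_sub_eq ha hlip hC hg t s
  have hint : |∫ r in t..s, (a r (f r) - a r (g r))| ≤ K * |∫ r in t..s, (|f r - g r|)| := by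
    rw [← abs_of_nonneg K.coe_nonneg, ← abs_mul, ← intervalIntegral.integral_const_mul]
    refine intervalIntegral.norm_integral_le_abs_of_norm_le
      (f := fun r => a r (f r) - a r (g r)) (g := fun r => K * |f r - g r|)
      (ae_of_all _ fun r => (hlip r).dist_le_mul (f r) (g r))
      (Continuous.intervalIntegrable (by fun_prop) _ _)
  calc |f s - g s| = |(f t - g t) + ∫ r in t..s, (a r (f r) - a r (g r))| := by
        rw [← hincr]; ring_nf
    _ ≤ |f t - g t| + K * |∫ r in t..s, (|f r - g r|)| := (abs_add_le _ _).trans (by gcongr)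

lemma abs_sub_sub_sub_le (ha : Measurable (Function.uncurry a))
    (hlip : ∀ r, LipschitzWith K (a r)) (hC : ∀ r, |a r 0| ≤ C)
    (hf : IsCaratheodorySolution a f) (hg : IsCaratheodorySolution a g) (s t : ℝ) :
    |(f t - f s) - (g t - g s)| ≤ K * rexp (K * |s - t|) * |s - t| * |f t - g t| := by
  rw [hf.sub_sub_sub_eq ha hlip hC hg, ← Real.norm_eq_abs]
  refine (intervalIntegral.norm_integral_le_of_norm_le_const
    (C := K * (|f t - g t| * rexp (K * |s - t|))) fun r hr => ?_).trans_eq (by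
      rw [abs_sub_comm t s]; ring)
  have hrt : |r - t| ≤ |s - t| := by
    rw [abs_sub_comm r t, abs_sub_comm s t]
    exact abs_sub_right_of_mem_uIcc (uIoc_subset_uIcc hr)
  calc ‖a r (f r) - a r (g r)‖ ≤ K * |f r - g r| := (hlip r).dist_le_mul _ _
    _ ≤ K * (|f t - g t| * rexp (K * |r - t|)) := by
        gcongr; exact hf.abs_sub_le ha hlip hC hg r t
    _ ≤ K * (|f t - g t| * rexp (K * |s - t|)) := by gcongr

end IsCaratheodorySolution

lemma abs_integral_sub_integral_le_half (ha : Measurable (Function.uncurry a))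
    (hlip : ∀ r, LipschitzWith K (a r)) (hC : ∀ r, |a r 0| ≤ C) (hf : Continuous f)
    (hg : Continuous g) {D t : ℝ} (h : ∀ r, |f r - g r| ≤ D * rexp ((2 * K + 1) * |r - t|))
    (s : ℝ) :
    |(∫ r in t..s, a r (f r)) - ∫ r in t..s, a r (g r)| ≤
      D / 2 * rexp ((2 * K + 1) * |s - t|) := by
  have := K.coe_nonneg
  have hD : 0 ≤ D := (abs_nonneg _).trans ((h t).trans_eq (by simp))
  have hprim : ∀ u, ∫ r in (0 : ℝ)..u, K * (D * rexp ((2 * K + 1) * r)) =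
      K * D / (2 * K + 1) * (rexp ((2 * K + 1) * u) - 1) := by
    intro u
    rw [intervalIntegral.integral_eq_sub_of_hasDerivAt
      (f := fun r => K * D / (2 * K + 1) * rexp ((2 * K + 1) * r))]
    · simp only [mul_zero, exp_zero]; ring
    · intro r _
      refine (((hasDerivAt_id r).const_mul _).exp.const_mul _).congr_deriv ?_
      simp only [id]; field_simp
    · exact Continuous.intervalIntegrable (by fun_prop) _ _
  rw [← intervalIntegral.integral_sub (intervalIntegrable_comp_of_lipschitzWith ha hlip hC hf _ _)
    (intervalIntegrable_comp_of_lipschitzWith ha hlip hC hg _ _)]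
  calc |∫ r in t..s, (a r (f r) - a r (g r))|
      ≤ ∫ r in (0 : ℝ)..|s - t|, K * (D * rexp ((2 * K + 1) * r)) :=
        abs_intervalIntegral_le_of_abs_le_comp_dist (by fun_prop) t
          (fun r => ((hlip r).dist_le_mul _ _).trans (by gcongr; exact h r)) s
    _ = K * D / (2 * K + 1) * (rexp ((2 * K + 1) * |s - t|) - 1) := hprim _
    _ ≤ D / 2 * rexp ((2 * K + 1) * |s - t|) := by
        gcongr ?_ * ?_
        · rw [sub_nonneg, one_le_exp_iff]; positivity
        · rw [div_le_div_iff₀ (by positivity) two_pos]; nlinarith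
        · linarith

/-- The Picard iterates of the equation `f' = a(·, f)`, `f t = z`. -/
def picardIterate (a : ℝ → ℝ → ℝ) (t z : ℝ) : ℕ → ℝ → ℝ
  | 0 => fun _ => z
  | n + 1 => fun s => z + ∫ r in t..s, a r (picardIterate a t z n r)

lemma continuous_picardIterate (ha : Measurable (Function.uncurry a))
    (hlip : ∀ r, LipschitzWith K (a r)) (hC : ∀ r, |a r 0| ≤ C) (t z : ℝ) :
    ∀ n, Continuous (picardIterate a t z n)
  | 0 => continuous_const
  | n + 1 => continuous_const.add <| intervalIntegral.continuous_primitive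
      (intervalIntegrable_comp_of_lipschitzWith ha hlip hC
        (continuous_picardIterate ha hlip hC t z n)) t

lemma abs_picardIterate_sub_succ_le (ha : Measurable (Function.uncurry a))
    (hlip : ∀ r, LipschitzWith K (a r)) (hC : ∀ r, |a r 0| ≤ C) (t z : ℝ) (n : ℕ) (s : ℝ) :
    |picardIterate a t z n s - picardIterate a t z (n + 1) s| ≤
      (C + K * |z|) / 2 ^ n * rexp ((2 * K + 1) * |s - t|) := by
  have hcont := continuous_picardIterate ha hlip hC t z
  induction n generalizing s with
  | zero =>
    have hbound : ∀ r ∈ uIoc t s, ‖a r z‖ ≤ C + K * |z| := fun r _ =>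
      (abs_le_add_mul_abs_of_lipschitzWith (hlip r) z).trans (by gcongr; exact hC r)
    have hCz : 0 ≤ C + K * |z| := by
      have := (abs_nonneg _).trans (hC 0)
      positivity
    have hexp : |s - t| ≤ rexp ((2 * K + 1) * |s - t|) := by
      have := add_one_le_exp ((2 * K + 1) * |s - t|)
      nlinarith [abs_nonneg (s - t), K.coe_nonneg]
    calc |picardIterate a t z 0 s - picardIterate a t z 1 s|
        = ‖∫ r in t..s, a r z‖ := by simp [picardIterate]
      _ ≤ (C + K * |z|) * |s - t| := intervalIntegral.norm_integral_le_of_norm_le_const hbound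
      _ ≤ (C + K * |z|) / 2 ^ 0 * rexp ((2 * K + 1) * |s - t|) := by
        rw [pow_zero, div_one]; gcongr
  | succ n ih =>
    calc |picardIterate a t z (n + 1) s - picardIterate a t z (n + 1 + 1) s|
        = |(∫ r in t..s, a r (picardIterate a t z n r)) -
            ∫ r in t..s, a r (picardIterate a t z (n + 1) r)| := by
          simp only [picardIterate, add_sub_add_left_eq_sub]
      _ ≤ (C + K * |z|) / 2 ^ n / 2 * rexp ((2 * K + 1) * |s - t|) :=
          abs_integral_sub_integral_le_half ha hlip hC (hcont n) (hcont (n + 1)) ih s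
      _ = (C + K * |z|) / 2 ^ (n + 1) * rexp ((2 * K + 1) * |s - t|) := by
          rw [pow_succ, div_div]

lemma exists_abs_picardIterate_sub_le (ha : Measurable (Function.uncurry a))
    (hlip : ∀ r, LipschitzWith K (a r)) (hC : ∀ r, |a r 0| ≤ C) (t z : ℝ) :
    ∃ f : ℝ → ℝ, ∀ n s, |picardIterate a t z n s - f s| ≤
      2 * (C + K * |z|) / 2 ^ n * rexp ((2 * K + 1) * |s - t|) := by
  have hgeom : ∀ s n, dist (picardIterate a t z n s) (picardIterate a t z (n + 1) s) ≤
      2 * (C + K * |z|) * rexp ((2 * K + 1) * |s - t|) / 2 / 2 ^ n := fun s n =>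
    (abs_picardIterate_sub_succ_le ha hlip hC t z n s).trans_eq (by ring)
  choose f hf using fun s => cauchySeq_tendsto_of_complete (cauchySeq_of_le_geometric_two (hgeom s))
  exact ⟨f, fun n s => (dist_le_of_le_geometric_two_of_tendsto (hgeom s) (hf s) n).trans_eq
    (by ring)⟩

lemma tendsto_mul_div_two_pow (c d : ℝ) :
    Filter.Tendsto (fun n : ℕ => c / 2 ^ n * d) Filter.atTop (nhds 0) := by
  simpa [div_eq_mul_inv] using
    ((tendsto_pow_atTop_nhds_zero_of_lt_one (r := (2⁻¹ : ℝ)) (by norm_num)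
      (by norm_num)).const_mul c).mul_const d

lemma exists_isCaratheodorySolution_tendsto (ha : Measurable (Function.uncurry a))
    (hlip : ∀ r, LipschitzWith K (a r)) (hC : ∀ r, |a r 0| ≤ C) (t z : ℝ) :
    ∃ f, IsCaratheodorySolution a f ∧ f t = z ∧
      ∀ s, Filter.Tendsto (fun n => picardIterate a t z n s) Filter.atTop (nhds (f s)) := by
  obtain ⟨f, hf⟩ := exists_abs_picardIterate_sub_le ha hlip hC t z
  have hcont := continuous_picardIterate ha hlip hC t z
  have hlim : ∀ s, Filter.Tendsto (fun n => picardIterate a t z n s) Filter.atTop (nhds (f s)) :=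
    fun s => tendsto_iff_dist_tendsto_zero.2 <| squeeze_zero (fun _ => dist_nonneg)
      (fun n => hf n s) (tendsto_mul_div_two_pow _ _)
  have hunif : TendstoLocallyUniformly (picardIterate a t z) f Filter.atTop := by
    refine tendstoLocallyUniformly_iff_forall_isCompact.2 fun S hS => ?_
    obtain ⟨R, hR⟩ := (hS.image (f := fun s => rexp ((2 * K + 1) * |s - t|))
      (by fun_prop)).bddAbove
    refine Metric.tendstoUniformlyOn_iff.2 fun ε hε => ?_
    filter_upwards [(tendsto_mul_div_two_pow (2 * |(C + K * |z|)|) |R|).eventually_lt_const hε]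
      with n hn s hs
    rw [dist_comm]
    refine (hf n s).trans_lt (lt_of_le_of_lt ?_ hn)
    gcongr
    · exact le_abs_self _
    · exact (hR (mem_image_of_mem _ hs)).trans (le_abs_self R)
  have hfcont : Continuous f := hunif.continuous (Filter.Frequently.of_forall hcont)
  have heq : ∀ s, f s = z + ∫ r in t..s, a r (f r) := by
    intro s
    refine tendsto_nhds_unique ((hlim s).comp (Filter.tendsto_add_atTop_nat 1)) ?_
    refine Filter.Tendsto.const_add z <| tendsto_iff_dist_tendsto_zero.2 <|
      squeeze_zero (fun _ => dist_nonneg) (fun n => ?_)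
      (tendsto_mul_div_two_pow (2 * (C + K * |z|)) (rexp ((2 * K + 1) * |s - t|) / 2))
    exact (abs_integral_sub_integral_le_half ha hlip hC (hcont n) hfcont (hf n) s).trans_eq
      (by ring)
  have hint := intervalIntegrable_comp_of_lipschitzWith ha hlip hC hfcont
  refine ⟨f, ⟨hfcont, fun s s' => ?_⟩, by simpa using heq t, hlim⟩
  rw [heq s, heq s', add_sub_add_left_eq_sub,
    intervalIntegral.integral_interval_sub_left (hint _ _) (hint _ _)]

variable {S : Type*} [MeasurableSpace S] {A : S → ℝ → ℝ → ℝ}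

lemma measurable_picardIterate (hA : Measurable fun p : S × ℝ × ℝ => A p.1 p.2.1 p.2.2)
    (hlip : ∀ σ r, LipschitzWith K (A σ r)) (hC : ∀ σ, ∃ C, ∀ r, |A σ r 0| ≤ C) (t : ℝ) :
    ∀ n, Measurable fun p : (S × ℝ) × ℝ => picardIterate (A p.1.1) t p.1.2 n p.2
  | 0 => by simp only [picardIterate]; fun_prop
  | n + 1 => by
    have hAσ : ∀ σ, Measurable (Function.uncurry (A σ)) := fun σ =>
      hA.comp (measurable_const.prodMk measurable_id)
    have hcont : ∀ p : S × ℝ, Continuous fun s => picardIterate (A p.1) t p.2 (n + 1) s := by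
      intro p
      obtain ⟨C, hC⟩ := hC p.1
      exact continuous_picardIterate (hAσ p.1) (hlip p.1) hC t p.2 (n + 1)
    refine measurable_uncurry_of_continuous_of_measurable (ι := ℝ)
      (u := fun s (p : S × ℝ) => picardIterate (A p.1) t p.2 (n + 1) s) hcont (fun s => ?_)
      |>.comp measurable_swap
    have hint : Measurable fun q : (S × ℝ) × ℝ =>
        A q.1.1 q.2 (picardIterate (A q.1.1) t q.1.2 n q.2) :=
      hA.comp (measurable_fst.fst.prodMk
        (measurable_snd.prodMk (measurable_picardIterate hA hlip hC t n)))
    have hIoc : ∀ I : Set ℝ, Measurable fun p : S × ℝ =>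
        ∫ r in I, A p.1 r (picardIterate (A p.1) t p.2 n r) := fun I =>
      (hint.stronglyMeasurable.integral_prod_right' (ν := volume.restrict I)).measurable
    exact measurable_snd.add ((hIoc (Ioc t s)).sub (hIoc (Ioc s t)))

lemma exists_measurable_flow (hA : Measurable fun p : S × ℝ × ℝ => A p.1 p.2.1 p.2.2)
    (hlip : ∀ σ r, LipschitzWith K (A σ r)) (hC : ∀ σ, ∃ C, ∀ r, |A σ r 0| ≤ C) (t : ℝ) :
    ∃ θ : S → ℝ → ℝ → ℝ, (Measurable fun p : (S × ℝ) × ℝ => θ p.1.1 p.1.2 p.2) ∧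
      (∀ σ z, IsCaratheodorySolution (A σ) (θ σ z)) ∧ ∀ σ z, θ σ z t = z := by
  have hsol : ∀ σ z, ∃ f, IsCaratheodorySolution (A σ) f ∧ f t = z ∧
      ∀ s, Filter.Tendsto (fun n => picardIterate (A σ) t z n s) Filter.atTop (nhds (f s)) := by
    intro σ z
    obtain ⟨C, hC⟩ := hC σ
    exact exists_isCaratheodorySolution_tendsto (a := A σ)
      (hA.comp (measurable_const.prodMk measurable_id)) (hlip σ) hC t z
  choose θ hθ hθt hlim using hsol
  exact ⟨θ, measurable_of_tendsto_metrizable (measurable_picardIterate hA hlip hC t)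
    (tendsto_pi_nhds.2 fun p => hlim p.1.1 p.1.2 p.2), hθ, hθt⟩

end Caratheodory

/-! ### Brownian motion as a fractional Brownian motion -/

section

variable {Ω : Type*} [MeasurableSpace Ω] {μ : Measure Ω} {H : ℝ} {B W : ℝ → Ω → ℝ}

lemma IsFBM.exists_map_sum_eq_gaussianReal (hB : IsFBM μ H B) {ι : Type*} [Fintype ι]
    (c t : ι → ℝ) : ∃ v : ℝ≥0, μ.map (fun ω => ∑ i, c i * B (t i) ω) = gaussianReal 0 v := by
  let e := (Fintype.equivFin ι).symm
  obtain ⟨v, hv⟩ := hB.gaussian (Fintype.card ι) (t ∘ e) (c ∘ e)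
  refine ⟨v, hv ▸ congrArg μ.map (funext fun ω => ?_)⟩
  exact (e.sum_comp fun i => c i * B (t i) ω).symm

lemma IsFBM.isGaussianProcess (hB : IsFBM μ H B) : IsGaussianProcess B μ := by
  classical
  refine ⟨fun I => ⟨isGaussian_of_map_eq_gaussianReal fun L => ?_⟩⟩
  obtain ⟨v, hv⟩ := hB.exists_map_sum_eq_gaussianReal
    (fun i : I => L fun j => if i = j then 1 else 0) (fun i => i)
  refine ⟨0, v, ?_⟩
  have hmeas : Measurable fun ω => I.restrict fun r => B r ω :=
    measurable_pi_iff.2 fun i => hB.meas i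
  rw [← hv, Measure.map_map (by fun_prop) hmeas]
  congr 1 with ω
  exact (L.toLinearMap.pi_apply_eq_sum_univ _).trans
    (Finset.sum_congr rfl fun i _ => mul_comm _ _)

lemma IsFBM.integral_eq_zero (hB : IsFBM μ H B) (t : ℝ) : ∫ ω, B t ω ∂μ = 0 := by
  obtain ⟨v, hv⟩ := hB.exists_map_sum_eq_gaussianReal (fun _ : Unit => 1) (fun _ => t)
  simp only [Finset.univ_unique, Finset.sum_const, Finset.card_singleton, one_smul, one_mul] at hv
  have h := integral_map (μ := μ) (hB.meas t).aemeasurable (f := id) (by fun_prop)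
  simpa [hv] using h.symm

lemma IsFBM.isPreBrownianReal (hW : IsFBM μ (1 / 2) W) :
    IsPreBrownianReal (fun t : ℝ≥0 => W t) μ := by
  have hG := hW.isGaussianProcess
  have := hG.isProbabilityMeasure
  refine (hG.comp_right ((↑) : ℝ≥0 → ℝ)).isPreBrownianReal_of_covariance
    (fun t => hW.integral_eq_zero t) fun s t hst => ?_
  rw [← NNReal.coe_le_coe] at hst
  have hcov := hW.cov t s t.coe_nonneg s.coe_nonneg
  simp only [Function.comp_apply]
  rw [covariance_eq_sub (hG.hasGaussianLaw_eval s).memLp_two (hG.hasGaussianLaw_eval t).memLp_two,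
    hW.integral_eq_zero, zero_mul, sub_zero]
  rw [abs_of_nonpos (sub_nonpos.2 hst)] at hcov
  norm_num at hcov
  simpa using hcov.trans (by ring)

lemma IsFBM.ae_eq_zero (hW : IsFBM μ (1 / 2) W) : ∀ᵐ ω ∂μ, W 0 ω = 0 := by
  simpa using hW.isPreBrownianReal.eval_zero_ae_eq_zero

lemma IsFBM.map_sub_eq_gaussianReal (hW : IsFBM μ (1 / 2) W) {s t : ℝ} (hs : 0 ≤ s)
    (hst : s < t) : μ.map (fun ω => W t ω - W s ω) = gaussianReal 0 (t - s).toNNReal := by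
  have h := hW.isPreBrownianReal.hasLaw_sub ⟨t, hs.trans hst.le⟩ ⟨s, hs⟩
  convert h.map_eq using 2
  · rfl
  refine NNReal.eq ?_
  change _ = |t - s|
  rw [abs_of_pos (sub_pos.2 hst), Real.coe_toNNReal _ (sub_pos.2 hst).le]

lemma IsFBM.indepFun_increment (hW : IsFBM μ (1 / 2) W) {s t : ℝ} (hs : 0 ≤ s) (hst : s < t) :
    IndepFun (fun ω (r : Icc 0 s) => W r ω) (fun ω => W t ω - W s ω) μ := by
  have h := (hW.isPreBrownianReal.indepFun_shift ⟨s, hs⟩).symm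
  have hφ : Measurable fun (f : Iic (⟨s, hs⟩ : ℝ≥0) → ℝ) (r : Icc 0 s) => f ⟨⟨r, r.2.1⟩, r.2.2⟩ :=
    measurable_pi_iff.2 fun r => measurable_pi_apply _
  convert h.comp hφ (measurable_pi_apply ⟨t - s, (sub_pos.2 hst).le⟩) using 1
  · rfl
  · funext ω
    change _ = W (s + (t - s)) ω - W s ω
    rw [add_sub_cancel]

end

/-! ### Riemann sums along a uniform partition -/

section Grid

variable {τ r : ℝ} {n i : ℕ}

/-- The `i`-th point of the partition of `[0, τ]` into `n + 1` intervals of equal length. -/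
def gridPoint (τ : ℝ) (n i : ℕ) : ℝ := i * (τ / (n + 1))

/-- The index `i` of the partition interval `(gridPoint τ n i, gridPoint τ n (i + 1)]`
containing `r ∈ (0, τ]`. -/
def gridIndex (τ : ℝ) (n : ℕ) (r : ℝ) : ℕ := ⌈r / (τ / (n + 1))⌉₊ - 1

@[simp] lemma gridPoint_zero : gridPoint τ n 0 = 0 := by simp [gridPoint]

@[simp] lemma gridPoint_last : gridPoint τ n (n + 1) = τ := by
  rw [gridPoint]; push_cast; field_simp

lemma gridPoint_succ : gridPoint τ n (i + 1) = gridPoint τ n i + τ / (n + 1) := by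
  rw [gridPoint, gridPoint]; push_cast; ring

lemma gridPoint_nonneg (hτ : 0 < τ) : 0 ≤ gridPoint τ n i := by rw [gridPoint]; positivity

lemma gridPoint_lt_succ (hτ : 0 < τ) : gridPoint τ n i < gridPoint τ n (i + 1) := by
  rw [gridPoint_succ]; exact lt_add_of_pos_right _ (by positivity)

lemma gridPoint_le (hτ : 0 < τ) (hi : i ≤ n + 1) : gridPoint τ n i ≤ τ := by
  conv_rhs => rw [← gridPoint_last (τ := τ) (n := n)]
  rw [gridPoint, gridPoint]; gcongr

lemma uIcc_gridPoint_subset (hτ : 0 < τ) (hi : i < n + 1) :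
    uIcc (gridPoint τ n i) (gridPoint τ n (i + 1)) ⊆ uIcc 0 τ := by
  rw [uIcc_of_le (gridPoint_lt_succ hτ).le, uIcc_of_le hτ.le]
  exact Icc_subset_Icc (gridPoint_nonneg hτ) (gridPoint_le hτ hi)

lemma gridIndex_eq_iff (hτ : 0 < τ) (hr : 0 < r) :
    gridIndex τ n r = i ↔ r ∈ Ioc (gridPoint τ n i) (gridPoint τ n (i + 1)) := by
  have hm : 0 < τ / (n + 1) := by positivity
  have hceil : 0 < ⌈r / (τ / (n + 1))⌉₊ := Nat.ceil_pos.2 (by positivity)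
  rw [gridIndex, Nat.sub_eq_iff_eq_add hceil, Nat.ceil_eq_iff i.succ_ne_zero, Nat.succ_sub_one,
    lt_div_iff₀ hm, div_le_iff₀ hm]
  rfl

lemma mem_Ioc_gridPoint_gridIndex (hτ : 0 < τ) (hr : 0 < r) :
    r ∈ Ioc (gridPoint τ n (gridIndex τ n r)) (gridPoint τ n (gridIndex τ n r + 1)) :=
  (gridIndex_eq_iff hτ hr).1 rfl

lemma gridIndex_lt (hτ : 0 < τ) (hr : r ∈ Ioc 0 τ) : gridIndex τ n r < n + 1 := by
  have h := (mem_Ioc_gridPoint_gridIndex (n := n) hτ hr.1).1.trans_le hr.2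
  have : 0 < τ / (n + 1) := by positivity
  by_contra! hle
  refine h.not_ge ?_
  conv_lhs => rw [← gridPoint_last (τ := τ) (n := n)]
  rw [gridPoint, gridPoint]; gcongr

lemma tendsto_mesh (τ : ℝ) :
    Filter.Tendsto (fun n : ℕ => τ / ((n : ℝ) + 1)) Filter.atTop (nhds 0) :=
  tendsto_const_nhds.div_atTop
    (Filter.tendsto_atTop_add_const_right _ _ tendsto_natCast_atTop_atTop)

lemma tendsto_gridPoint_gridIndex (hτ : 0 < τ) (hr : 0 < r) :
    Filter.Tendsto (fun n => gridPoint τ n (gridIndex τ n r)) Filter.atTop (nhds r) := by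
  refine tendsto_of_tendsto_of_tendsto_of_le_of_le
    (by simpa using (tendsto_const_nhds (x := r)).sub (tendsto_mesh τ)) tendsto_const_nhds
    (fun n => ?_) fun n => (mem_Ioc_gridPoint_gridIndex hτ hr).1.le
  have h := (mem_Ioc_gridPoint_gridIndex (n := n) hτ hr).2
  rw [gridPoint_succ] at h
  exact sub_le_iff_le_add.2 h

lemma tendsto_gridPoint_gridIndex_succ (hτ : 0 < τ) (hr : 0 < r) :
    Filter.Tendsto (fun n => gridPoint τ n (gridIndex τ n r + 1)) Filter.atTop (nhds r) := by
  simpa only [gridPoint_succ, add_zero] using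
    (tendsto_gridPoint_gridIndex hτ hr).add (tendsto_mesh τ)

lemma sum_integral_gridPoint {f : ℝ → ℝ} (hτ : 0 < τ) (hf : IntervalIntegrable f volume 0 τ)
    (n : ℕ) : ∑ i ∈ Finset.range (n + 1), ∫ r in gridPoint τ n i..gridPoint τ n (i + 1), f r =
      ∫ r in 0..τ, f r := by
  have h := intervalIntegral.sum_integral_adjacent_intervals (a := gridPoint τ n) (n := n + 1)
    fun i hi => hf.mono_set (uIcc_gridPoint_subset hτ hi)
  rwa [gridPoint_zero, gridPoint_last] at h

lemma tendsto_sum_integral_mul {d g : ℝ → ℝ} {c : ℕ → ℕ → ℝ} {C : ℝ} (hτ : 0 < τ)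
    (hd : IntervalIntegrable d volume 0 τ) (hc : ∀ n i, i < n + 1 → |c n i| ≤ C)
    (hlim : ∀ r ∈ Ioc 0 τ,
      Filter.Tendsto (fun n => c n (gridIndex τ n r)) Filter.atTop (nhds (g r))) :
    Filter.Tendsto (fun n => ∑ i ∈ Finset.range (n + 1),
      (∫ r in gridPoint τ n i..gridPoint τ n (i + 1), d r) * c n i) Filter.atTop
      (nhds (∫ r in 0..τ, d r * g r)) := by
  have hmeas : ∀ n, AEStronglyMeasurable (fun r => d r * c n (gridIndex τ n r))
      (volume.restrict (uIoc 0 τ)) := fun n => by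
    have hidx : Measurable (gridIndex τ n) :=
      (measurable_from_top (f := fun k : ℕ => k - 1)).comp
        (Nat.measurable_ceil.comp (measurable_id.div_const _))
    rw [uIoc_of_le hτ.le]
    exact hd.1.aestronglyMeasurable.mul
      ((measurable_from_top (f := c n)).comp hidx).aestronglyMeasurable
  have hbound : ∀ n, ∀ r ∈ uIoc 0 τ, ‖d r * c n (gridIndex τ n r)‖ ≤ ‖d r‖ * C := by
    intro n r hr
    rw [uIoc_of_le hτ.le] at hr
    rw [norm_mul]
    gcongr
    exact hc n _ (gridIndex_lt hτ hr)
  have hint : ∀ n, IntervalIntegrable (fun r => d r * c n (gridIndex τ n r)) volume 0 τ := fun n =>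
    (hd.norm.mul_const C).mono_fun' (hmeas n)
      (ae_restrict_of_forall_mem measurableSet_uIoc (hbound n))
  have hsum : ∀ n, ∑ i ∈ Finset.range (n + 1),
      (∫ r in gridPoint τ n i..gridPoint τ n (i + 1), d r) * c n i =
        ∫ r in 0..τ, d r * c n (gridIndex τ n r) := by
    intro n
    rw [← sum_integral_gridPoint hτ (hint n)]
    refine Finset.sum_congr rfl fun i _ => ?_
    rw [← intervalIntegral.integral_mul_const]
    refine intervalIntegral.integral_congr_ae (ae_of_all _ fun r hr => ?_)
    rw [uIoc_of_le (gridPoint_lt_succ hτ).le] at hr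
    rw [(gridIndex_eq_iff hτ ((gridPoint_nonneg hτ).trans_lt hr.1)).2 hr]
  simp only [hsum]
  refine intervalIntegral.tendsto_integral_filter_of_dominated_convergence (fun r => ‖d r‖ * C)
    (.of_forall hmeas) (.of_forall fun n => ae_of_all _ (hbound n)) (hd.norm.mul_const C)
    (ae_of_all _ fun r hr => ?_)
  rw [uIoc_of_le hτ.le] at hr
  exact (hlim r hr).const_mul (d r)

lemma exists_sub_eq_mul_of_hasDerivAt {F F' : ℝ → ℝ} (hF : ∀ y, HasDerivAt F (F' y) y)
    (y Δ : ℝ) : ∃ ζ, |ζ - y| ≤ |Δ| ∧ F y - F (y - Δ) = Δ * F' ζ := by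
  have hcont : Continuous F := continuous_iff_continuousAt.2 fun y => (hF y).continuousAt
  rcases lt_trichotomy Δ 0 with h | rfl | h
  · obtain ⟨ζ, hζ, hslope⟩ := exists_hasDerivAt_eq_slope F F' (show y < y - Δ by linarith)
      hcont.continuousOn fun y _ => hF y
    refine ⟨ζ, ?_, ?_⟩
    · rw [abs_of_neg h, abs_of_pos (sub_pos.2 hζ.1)]; linarith [hζ.2]
    · rw [hslope, sub_sub_cancel_left]; field_simp [h.ne]; ring
  · exact ⟨y, by simp, by simp⟩
  · obtain ⟨ζ, hζ, hslope⟩ := exists_hasDerivAt_eq_slope F F' (show y - Δ < y by linarith)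
      hcont.continuousOn fun y _ => hF y
    refine ⟨ζ, ?_, ?_⟩
    · rw [abs_of_pos h, abs_of_neg (sub_neg.2 hζ.2)]; linarith [hζ.1]
    · rw [hslope, sub_sub_cancel]; field_simp [h.ne']

lemma tendsto_integral_gridPoint {d : ℝ → ℝ} (hτ : 0 < τ) (hd : IntervalIntegrable d volume 0 τ)
    (hr : r ∈ Ioc 0 τ) :
    Filter.Tendsto (fun n => ∫ u in gridPoint τ n (gridIndex τ n r)..
      gridPoint τ n (gridIndex τ n r + 1), d u) Filter.atTop (nhds 0) := by
  have hprim : ContinuousOn (fun s => ∫ u in 0..s, d u) (Icc 0 τ) := by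
    simpa [uIcc_of_le hτ.le] using
      intervalIntegral.continuousOn_primitive_interval' (a := 0) hd (by simp)
  have hmem : ∀ n i, i ≤ n + 1 → gridPoint τ n i ∈ Icc 0 τ := fun n i hi =>
    ⟨gridPoint_nonneg hτ, gridPoint_le hτ hi⟩
  have hidx : ∀ n, gridIndex τ n r < n + 1 := fun n => gridIndex_lt hτ hr
  have hlim : ∀ {s : ℕ → ℝ}, (∀ n, s n ∈ Icc 0 τ) → Filter.Tendsto s Filter.atTop (nhds r) →
      Filter.Tendsto (fun n => ∫ u in 0..s n, d u) Filter.atTop (nhds (∫ u in 0..r, d u)) :=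
    fun hs hsr => (hprim r ⟨hr.1.le, hr.2⟩).tendsto.comp
      (tendsto_nhdsWithin_iff.2 ⟨hsr, .of_forall hs⟩)
  have h := (hlim (fun n => hmem n _ (hidx n)) (tendsto_gridPoint_gridIndex_succ hτ hr.1)).sub
    (hlim (fun n => hmem n _ (hidx n).le) (tendsto_gridPoint_gridIndex hτ hr.1))
  rw [sub_self] at h
  refine h.congr fun n => intervalIntegral.integral_interval_sub_left ?_ ?_
  all_goals
    refine hd.mono_set ?_
    rw [uIcc_of_le (gridPoint_nonneg hτ), uIcc_of_le hτ.le]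
  · exact Icc_subset_Icc_right (hmem n _ (hidx n)).2
  · exact Icc_subset_Icc_right (hmem n _ (hidx n).le).2

lemma tendsto_sum_sub_comp_sub_integral {F F' : ℝ → ℝ → ℝ} {d D : ℝ → ℝ} {C : ℝ} (hτ : 0 < τ)
    (hF : ∀ s y, HasDerivAt (F s) (F' s y) y)
    (hF' : ContinuousOn (Function.uncurry F') (Icc 0 τ ×ˢ univ))
    (hC : ∀ s ∈ Icc 0 τ, ∀ y, |F' s y| ≤ C)
    (hd : IntervalIntegrable d volume 0 τ) (hD : Continuous D) :
    Filter.Tendsto (fun n => ∑ i ∈ Finset.range (n + 1),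
      (F (gridPoint τ n (i + 1)) (D (gridPoint τ n (i + 1))) -
        F (gridPoint τ n (i + 1)) (D (gridPoint τ n (i + 1)) -
          ∫ r in gridPoint τ n i..gridPoint τ n (i + 1), d r)))
      Filter.atTop (nhds (∫ r in 0..τ, d r * F' r (D r))) := by
  choose ζ hζ hslope using fun n i => exists_sub_eq_mul_of_hasDerivAt
    (hF (gridPoint τ n (i + 1))) (D (gridPoint τ n (i + 1)))
    (∫ r in gridPoint τ n i..gridPoint τ n (i + 1), d r)
  simp only [hslope]
  refine tendsto_sum_integral_mul hτ hd
    (fun n i hi => hC _ ⟨gridPoint_nonneg hτ, gridPoint_le hτ hi⟩ _) fun r hr => ?_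
  have hs := tendsto_gridPoint_gridIndex_succ hτ hr.1
  have hζlim : Filter.Tendsto (fun n => ζ n (gridIndex τ n r)) Filter.atTop (nhds (D r)) := by
    have h : Filter.Tendsto (fun n => ζ n (gridIndex τ n r) -
        D (gridPoint τ n (gridIndex τ n r + 1))) Filter.atTop (nhds 0) :=
      squeeze_zero_norm (fun n => hζ n (gridIndex τ n r))
        (by simpa using (tendsto_integral_gridPoint hτ hd hr).abs)
    simpa using h.add ((hD.tendsto r).comp hs)
  exact (hF' (r, D r) ⟨⟨hr.1.le, hr.2⟩, mem_univ _⟩).tendsto.comp (tendsto_nhdsWithin_iff.2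
    ⟨hs.prodMk_nhds hζlim, .of_forall fun n =>
      ⟨⟨gridPoint_nonneg hτ, gridPoint_le hτ (gridIndex_lt hτ hr)⟩, mem_univ _⟩⟩)

end Grid

/-! ### Itô's formula for the heat kernel -/

section DriftSum

variable {ρ τ t : ℝ} {d D : ℝ → ℝ}

/-- The sum of the changes of `heatKernel (ρ² (t - s))` along the partition of `[0, τ]` that are
due to the drift `d` of the path `D` alone. -/
def driftSum (ρ τ t : ℝ) (d D : ℝ → ℝ) (n : ℕ) : ℝ :=
  ∑ i ∈ Finset.range (n + 1),
    (heatKernel (ρ ^ 2 * (t - gridPoint τ n (i + 1))) (D (gridPoint τ n (i + 1))) -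
      heatKernel (ρ ^ 2 * (t - gridPoint τ n (i + 1))) (D (gridPoint τ n (i + 1)) -
        ∫ r in gridPoint τ n i..gridPoint τ n (i + 1), d r))

lemma abs_heatKernelDeriv_mul_sub_le (hρ : ρ ≠ 0) (ht : τ < t) {s : ℝ} (hs : s ≤ τ) (y : ℝ) :
    |heatKernelDeriv (ρ ^ 2 * (t - s)) y| ≤ 3 * (ρ ^ 2 * (t - τ))⁻¹ := by
  have h₀ : 0 < ρ ^ 2 * (t - τ) := mul_pos (by positivity) (sub_pos.2 ht)
  have hle : ρ ^ 2 * (t - τ) ≤ ρ ^ 2 * (t - s) := by gcongr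
  refine (abs_heatKernelDeriv_le_inv (h₀.trans_le hle) y).trans ?_
  gcongr

lemma norm_driftSum_le (hρ : ρ ≠ 0) (hτ : 0 < τ) (ht : τ < t)
    (hd : IntervalIntegrable d volume 0 τ) (n : ℕ) :
    ‖driftSum ρ τ t d D n‖ ≤ 3 * (ρ ^ 2 * (t - τ))⁻¹ * ∫ r in 0..τ, |d r| := by
  rw [← sum_integral_gridPoint hτ hd.abs n, Finset.mul_sum]
  refine (norm_sum_le _ _).trans (Finset.sum_le_sum fun i hi => ?_)
  have hle := gridPoint_le hτ (Nat.succ_le_of_lt (Finset.mem_range.1 hi))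
  obtain ⟨ζ, -, hζ⟩ := exists_sub_eq_mul_of_hasDerivAt
    (hasDerivAt_heatKernel (ρ ^ 2 * (t - gridPoint τ n (i + 1))))
    (D (gridPoint τ n (i + 1))) (∫ r in gridPoint τ n i..gridPoint τ n (i + 1), d r)
  rw [hζ, norm_mul, mul_comm]
  exact mul_le_mul (abs_heatKernelDeriv_mul_sub_le hρ ht hle ζ)
    (intervalIntegral.abs_integral_le_integral_abs (gridPoint_lt_succ hτ).le) (norm_nonneg _)
    ((abs_nonneg _).trans (abs_heatKernelDeriv_mul_sub_le hρ ht hle ζ))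

lemma tendsto_driftSum (hρ : ρ ≠ 0) (hτ : 0 < τ) (ht : τ < t)
    (hd : IntervalIntegrable d volume 0 τ) (hD : Continuous D) :
    Filter.Tendsto (driftSum ρ τ t d D) Filter.atTop
      (nhds (∫ r in 0..τ, d r * heatKernelDeriv (ρ ^ 2 * (t - r)) (D r))) := by
  refine tendsto_sum_sub_comp_sub_integral hτ (F := fun s => heatKernel (ρ ^ 2 * (t - s)))
    (F' := fun s => heatKernelDeriv (ρ ^ 2 * (t - s))) (fun s y => hasDerivAt_heatKernel _ y) ?_
    (fun s hs => abs_heatKernelDeriv_mul_sub_le hρ ht hs.2) hd hD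
  refine continuousOn_uncurry_heatKernelDeriv.comp
    (f := fun p : ℝ × ℝ => (ρ ^ 2 * (t - p.1), p.2)) (by fun_prop) fun p hp => ?_
  exact mul_pos (by positivity) (sub_pos.2 (hp.1.2.trans_lt ht))

end DriftSum

section Ito

variable {Ω : Type*} [MeasurableSpace Ω] {μ : Measure Ω}

lemma integrable_mul_heatKernel_comp [IsFiniteMeasure μ] {ξ Y : Ω → ℝ} {v : ℝ} (hξ : Measurable ξ)
    (hξ₁ : ∀ ω, |ξ ω| ≤ 1) (hY : AEMeasurable Y μ) (hv : 0 < v) :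
    Integrable (fun ω => ξ ω * heatKernel v (Y ω)) μ := by
  refine (Integrable.of_bound (C := (√v)⁻¹) ?_ (ae_of_all _ fun ω => ?_)).bdd_mul
    hξ.aestronglyMeasurable (ae_of_all _ hξ₁)
  · exact ((continuous_heatKernel v).measurable.comp_aemeasurable hY).aestronglyMeasurable
  · rw [Real.norm_of_nonneg (heatKernel_nonneg _ _)]
    exact heatKernel_le_inv_sqrt hv _

lemma integral_mul_heatKernel_add_mul [IsProbabilityMeasure μ] {ξ Y Z : Ω → ℝ} {v w ρ : ℝ}
    (hξ : Measurable ξ) (hξ₁ : ∀ ω, |ξ ω| ≤ 1) (hY : Measurable Y) (hZ : Measurable Z)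
    (hv : 0 < v) (hw : 0 < w) (hind : IndepFun (fun ω => (ξ ω, Y ω)) Z μ)
    (hlaw : μ.map Z = gaussianReal 0 w.toNNReal) :
    ∫ ω, ξ ω * heatKernel v (Y ω + ρ * Z ω) ∂μ =
      ∫ ω, ξ ω * heatKernel (v + ρ ^ 2 * w) (Y ω) ∂μ := by
  have hp : Measurable fun ω => (ξ ω, Y ω) := hξ.prodMk hY
  have hpZ : Measurable fun ω => ((ξ ω, Y ω), Z ω) := hp.prodMk hZ
  have hmap := (indepFun_iff_map_prod_eq_prod_map_map hp.aemeasurable hZ.aemeasurable).1 hind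
  have := Measure.isProbabilityMeasure_map (μ := μ) hp.aemeasurable
  have hmeas : StronglyMeasurable fun q : (ℝ × ℝ) × ℝ => q.1.1 * heatKernel v (q.1.2 + ρ * q.2) :=
    Continuous.stronglyMeasurable (by fun_prop)
  have hint : Integrable (fun q : (ℝ × ℝ) × ℝ => q.1.1 * heatKernel v (q.1.2 + ρ * q.2))
      (μ.map fun ω => ((ξ ω, Y ω), Z ω)) :=
    (integrable_map_measure hmeas.aestronglyMeasurable hpZ.aemeasurable).2
      (integrable_mul_heatKernel_comp hξ hξ₁ (hY.add (hZ.const_mul ρ)).aemeasurable hv)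
  rw [← integral_map (f := fun q : (ℝ × ℝ) × ℝ => q.1.1 * heatKernel v (q.1.2 + ρ * q.2))
    hpZ.aemeasurable hmeas.aestronglyMeasurable]
  rw [hmap, hlaw] at hint ⊢
  rw [integral_prod _ hint]
  simp only [integral_const_mul, integral_heatKernel_add_mul_gaussianReal hv hw]
  exact integral_map hp.aemeasurable
    (Continuous.stronglyMeasurable (by fun_prop)).aestronglyMeasurable

/-- `D` is an Itô process `dD = d dt + ρ dW` on `[0, τ]` with random drift `d`, and `ξ` is a
bounded weight. The weight and the state `D s` are only required to be independent of the
increments of `W` after time `s`, which replaces adaptedness to a filtration. -/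
structure IsWeightedItoProcess (μ : Measure Ω) (W : ℝ → Ω → ℝ) (ρ τ : ℝ) (ξ : Ω → ℝ)
    (d D : ℝ → Ω → ℝ) : Prop where
  measurable_weight : Measurable ξ
  abs_weight_le : ∀ ω, |ξ ω| ≤ 1
  measurable : ∀ s, Measurable (D s)
  continuous : ∀ ω, Continuous fun s => D s ω
  intervalIntegrable : ∀ᵐ ω ∂μ, IntervalIntegrable (fun r => d r ω) volume 0 τ
  sub_eq : ∀ᵐ ω ∂μ, ∀ s s', 0 ≤ s → s ≤ s' → s' ≤ τ →
    D s' ω - D s ω = (∫ r in s..s', d r ω) + ρ * (W s' ω - W s ω)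
  indepFun : ∀ s s', 0 ≤ s → s < s' → s' ≤ τ →
    IndepFun (fun ω => (ξ ω, D s ω)) (fun ω => W s' ω - W s ω) μ
  integrable : Integrable (fun p : Ω × ℝ => ξ p.1 * d p.2 p.1)
    (μ.prod (volume.restrict (Ioc 0 τ)))

namespace IsWeightedItoProcess

variable {W : ℝ → Ω → ℝ} {ρ τ t : ℝ} {ξ : Ω → ℝ} {d D : ℝ → Ω → ℝ}

lemma measurable_uncurry (hD : IsWeightedItoProcess μ W ρ τ ξ d D) :
    Measurable fun p : Ω × ℝ => D p.2 p.1 :=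
  (measurable_uncurry_of_continuous_of_measurable (u := D) hD.continuous hD.measurable).comp
    measurable_swap

lemma integrable_mul_heatKernelDeriv (hD : IsWeightedItoProcess μ W ρ τ ξ d D) (hρ : ρ ≠ 0)
    (ht : τ < t) :
    Integrable (fun p : Ω × ℝ => ξ p.1 * d p.2 p.1 *
      heatKernelDeriv (ρ ^ 2 * (t - p.2)) (D p.2 p.1)) (μ.prod (volume.restrict (Ioc 0 τ))) := by
  refine hD.integrable.mul_bdd (c := 3 * (ρ ^ 2 * (t - τ))⁻¹)
    (measurable_uncurry_heatKernelDeriv.comp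
      (f := fun p : Ω × ℝ => (ρ ^ 2 * (t - p.2), D p.2 p.1))
      (Measurable.prodMk (by fun_prop) hD.measurable_uncurry)).aestronglyMeasurable ?_
  have hmem : ∀ᵐ p ∂μ.prod (volume.restrict (Ioc 0 τ)), p.2 ∈ Ioc 0 τ :=
    Measure.quasiMeasurePreserving_snd.ae (ae_restrict_mem measurableSet_Ioc)
  exact hmem.mono fun p hp => abs_heatKernelDeriv_mul_sub_le hρ ht hp.2 _

variable [IsProbabilityMeasure μ]

lemma integral_mul_heatKernel_sub (hD : IsWeightedItoProcess μ W ρ τ ξ d D)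
    (hW : IsFBM μ (1 / 2) W) (hρ : ρ ≠ 0) (ht : τ < t) {s s' : ℝ} (hs : 0 ≤ s) (hss : s < s')
    (hs' : s' ≤ τ) :
    Integrable (fun ω => ξ ω * (heatKernel (ρ ^ 2 * (t - s')) (D s' ω) -
      heatKernel (ρ ^ 2 * (t - s')) (D s' ω - ∫ r in s..s', d r ω))) μ ∧
    ∫ ω, ξ ω * (heatKernel (ρ ^ 2 * (t - s')) (D s' ω) -
      heatKernel (ρ ^ 2 * (t - s')) (D s' ω - ∫ r in s..s', d r ω)) ∂μ =
      (∫ ω, ξ ω * heatKernel (ρ ^ 2 * (t - s')) (D s' ω) ∂μ) -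
        ∫ ω, ξ ω * heatKernel (ρ ^ 2 * (t - s)) (D s ω) ∂μ := by
  have hv : 0 < ρ ^ 2 * (t - s') := mul_pos (by positivity) (by linarith)
  have hZ : Measurable fun ω => W s' ω - W s ω := (hW.meas s').sub (hW.meas s)
  have hDW : ∀ᵐ ω ∂μ, D s ω + ρ * (W s' ω - W s ω) = D s' ω - ∫ r in s..s', d r ω := by
    filter_upwards [hD.sub_eq] with ω hω
    linarith [hω s s' hs hss.le hs']
  have hint := integrable_mul_heatKernel_comp (μ := μ) hD.measurable_weight hD.abs_weight_le
    (hD.measurable s').aemeasurable hv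
  have hint' := integrable_mul_heatKernel_comp (μ := μ) hD.measurable_weight hD.abs_weight_le
    (((hD.measurable s).add (hZ.const_mul ρ)).aemeasurable.congr hDW) hv
  simp only [mul_sub (ξ _)]
  refine ⟨hint.sub hint', ?_⟩
  rw [integral_sub hint hint']
  congr 1
  have hstep := integral_mul_heatKernel_add_mul (μ := μ) (ρ := ρ) hD.measurable_weight
    hD.abs_weight_le (hD.measurable s) hZ hv (sub_pos.2 hss) (hD.indepFun s s' hs hss hs')
    (hW.map_sub_eq_gaussianReal hs hss)
  rw [show ρ ^ 2 * (t - s') + ρ ^ 2 * (s' - s) = ρ ^ 2 * (t - s) by ring] at hstep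
  rw [← hstep]
  exact integral_congr_ae (hDW.mono fun ω hω => by simp only [hω])

lemma integral_mul_driftSum (hD : IsWeightedItoProcess μ W ρ τ ξ d D) (hW : IsFBM μ (1 / 2) W)
    (hρ : ρ ≠ 0) (hτ : 0 < τ) (ht : τ < t) (n : ℕ) :
    Integrable (fun ω => ξ ω * driftSum ρ τ t (d · ω) (D · ω) n) μ ∧
    ∫ ω, ξ ω * driftSum ρ τ t (d · ω) (D · ω) n ∂μ =
      (∫ ω, ξ ω * heatKernel (ρ ^ 2 * (t - τ)) (D τ ω) ∂μ) -
        ∫ ω, ξ ω * heatKernel (ρ ^ 2 * t) (D 0 ω) ∂μ := by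
  have hterm := fun i (hi : i ∈ Finset.range (n + 1)) =>
    hD.integral_mul_heatKernel_sub hW hρ ht (gridPoint_nonneg hτ) (gridPoint_lt_succ hτ)
      (gridPoint_le hτ (Finset.mem_range.1 hi))
  simp only [driftSum, Finset.mul_sum]
  refine ⟨integrable_finsetSum _ fun i hi => (hterm i hi).1, ?_⟩
  rw [integral_finsetSum _ fun i hi => (hterm i hi).1,
    Finset.sum_congr rfl fun i hi => (hterm i hi).2,
    Finset.sum_range_sub fun i => ∫ ω, ξ ω *
      heatKernel (ρ ^ 2 * (t - gridPoint τ n i)) (D (gridPoint τ n i) ω) ∂μ]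
  simp

theorem integral_mul_heatKernel_eq (hD : IsWeightedItoProcess μ W ρ τ ξ d D)
    (hW : IsFBM μ (1 / 2) W) (hρ : ρ ≠ 0) (hτ : 0 < τ) (ht : τ < t) :
    ∫ ω, ξ ω * heatKernel (ρ ^ 2 * (t - τ)) (D τ ω) ∂μ =
      ∫ ω, ξ ω * heatKernel (ρ ^ 2 * t) (D 0 ω) ∂μ +
        ∫ p : Ω × ℝ, ξ p.1 * d p.2 p.1 * heatKernelDeriv (ρ ^ 2 * (t - p.2)) (D p.2 p.1)
          ∂μ.prod (volume.restrict (Ioc 0 τ)) := by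
  rw [integral_prod _ (hD.integrable_mul_heatKernelDeriv hρ ht), ← sub_eq_iff_eq_add']
  have hlim : ∀ᵐ ω ∂μ, Filter.Tendsto (fun n => ξ ω * driftSum ρ τ t (d · ω) (D · ω) n) Filter.atTop
      (nhds (∫ r in Ioc 0 τ, ξ ω * d r ω * heatKernelDeriv (ρ ^ 2 * (t - r)) (D r ω))) := by
    filter_upwards [hD.intervalIntegrable] with ω hω
    simp only [mul_assoc, intervalIntegral.integral_const_mul,
      ← intervalIntegral.integral_of_le hτ.le]
    exact (tendsto_driftSum hρ hτ ht hω (hD.continuous ω)).const_mul (ξ ω)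
  have hdom : ∀ n, ∀ᵐ ω ∂μ, ‖ξ ω * driftSum ρ τ t (d · ω) (D · ω) n‖ ≤
      3 * (ρ ^ 2 * (t - τ))⁻¹ * ∫ r in Ioc 0 τ, ‖ξ ω * d r ω‖ := by
    intro n
    filter_upwards [hD.intervalIntegrable] with ω hω
    simp only [norm_mul, intervalIntegral.integral_const_mul,
      ← intervalIntegral.integral_of_le hτ.le]
    rw [mul_left_comm]
    exact mul_le_mul_of_nonneg_left (norm_driftSum_le hρ hτ ht hω n) (norm_nonneg _)
  have hdct := tendsto_integral_of_dominated_convergence _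
    (fun n => (hD.integral_mul_driftSum hW hρ hτ ht n).1.aestronglyMeasurable)
    (hD.integrable.norm.integral_prod_left.const_mul _) hdom hlim
  simp only [(hD.integral_mul_driftSum hW hρ hτ ht _).2] at hdct
  exact tendsto_nhds_unique tendsto_const_nhds hdct

end IsWeightedItoProcess

end Ito

/-! ### The parametrix kernel of a random drift -/

section Parametrix

lemma lintegral_comp_le_of_antilipschitz {φ : ℝ → ℝ} (hφ : Measurable φ) {L : ℝ}
    (hL : ∀ z z', |z - z'| ≤ L * |φ z - φ z'|) {F : ℝ → ℝ≥0∞} (hF : Measurable F) :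
    ∫⁻ z, F (φ z) ≤ ENNReal.ofReal L * ∫⁻ w, F w := by
  have hanti : AntilipschitzWith L.toNNReal φ := AntilipschitzWith.of_le_mul_dist fun z z' =>
    (hL z z').trans (mul_le_mul_of_nonneg_right (le_coe_toNNReal L) (abs_nonneg _))
  have hmap : volume.map φ ≤ ENNReal.ofReal L • (volume : Measure ℝ) := by
    refine Measure.le_iff.2 fun s hs => ?_
    have := hanti.hausdorffMeasure_preimage_le zero_le_one s
    rw [hausdorffMeasure_real, ENNReal.rpow_one] at this
    rwa [Measure.map_apply hφ hs]
  calc ∫⁻ z, F (φ z) = ∫⁻ w, F w ∂volume.map φ := (lintegral_map hF hφ).symm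
    _ ≤ ∫⁻ w, F w ∂(ENNReal.ofReal L • volume) := lintegral_mono' hmap le_rfl
    _ = ENNReal.ofReal L * ∫⁻ w, F w := lintegral_smul_measure _ _

/-- A drift coefficient depending on a random environment `σ`, split into a bounded part and a part
which is Lipschitz in space. -/
structure RandomDrift (S : Type*) [MeasurableSpace S] where
  bdd : S → ℝ → ℝ → ℝ
  lip : S → ℝ → ℝ → ℝ
  M : ℝ≥0
  K : ℝ≥0
  measurable_bdd : Measurable fun p : S × ℝ × ℝ => bdd p.1 p.2.1 p.2.2
  measurable_lip : Measurable fun p : S × ℝ × ℝ => lip p.1 p.2.1 p.2.2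
  abs_bdd_le : ∀ σ r y, |bdd σ r y| ≤ M
  lipschitzWith_lip : ∀ σ r, LipschitzWith K (lip σ r)
  exists_abs_lip_zero_le : ∀ σ, ∃ C, ∀ r, |lip σ r 0| ≤ C

namespace RandomDrift

variable {S : Type*} [MeasurableSpace S] (a : RandomDrift S) (σ : S)

/-- The full drift coefficient. -/
def drift (r y : ℝ) : ℝ := a.bdd σ r y + a.lip σ r y

/-- The backward characteristic `r ↦ a.flow t σ z r` of the Lipschitz part that passes through `z`
at time `t`. -/
def flow (t : ℝ) : S → ℝ → ℝ → ℝ :=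
  (exists_measurable_flow a.measurable_lip a.lipschitzWith_lip a.exists_abs_lip_zero_le t).choose

/-- The parametrix kernel: the generator of `dY = drift dt + ρ dW` minus that of the process whose
drift is frozen along the characteristic through `(t, z)`, applied to the frozen transition
density. Only the difference of the Lipschitz parts appears. -/
def parametrixKernel (ρ t r y z : ℝ) : ℝ :=
  (a.drift σ r y - a.lip σ r (a.flow t σ z r)) * heatKernelDeriv (ρ ^ 2 * (t - r))
    (y - a.flow t σ z r)

section Measurability

variable {E : Type*} [MeasurableSpace E] {s : E → S} {f g : E → ℝ}

@[fun_prop]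
lemma measurable_bdd_comp (hs : Measurable s) (hf : Measurable f) (hg : Measurable g) :
    Measurable fun e => a.bdd (s e) (f e) (g e) :=
  a.measurable_bdd.comp (hs.prodMk (hf.prodMk hg))

@[fun_prop]
lemma measurable_lip_comp (hs : Measurable s) (hf : Measurable f) (hg : Measurable g) :
    Measurable fun e => a.lip (s e) (f e) (g e) :=
  a.measurable_lip.comp (hs.prodMk (hf.prodMk hg))

@[fun_prop]
lemma measurable_drift_comp (hs : Measurable s) (hf : Measurable f) (hg : Measurable g) :
    Measurable fun e => a.drift (s e) (f e) (g e) := by unfold drift; fun_prop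

@[fun_prop]
lemma measurable_flow_comp {t : ℝ} (hs : Measurable s) (hf : Measurable f) (hg : Measurable g) :
    Measurable fun e => a.flow t (s e) (f e) (g e) :=
  (exists_measurable_flow a.measurable_lip a.lipschitzWith_lip
    a.exists_abs_lip_zero_le t).choose_spec.1.comp ((hs.prodMk hf).prodMk hg)

@[fun_prop]
lemma measurable_parametrixKernel_comp {ρ t : ℝ} {h : E → ℝ} (hs : Measurable s)
    (hf : Measurable f) (hg : Measurable g) (hh : Measurable h) :
    Measurable fun e => a.parametrixKernel (s e) ρ t (f e) (g e) (h e) := by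
  refine Measurable.mul (by fun_prop) ?_
  exact measurable_uncurry_heatKernelDeriv.comp
    (f := fun e => (ρ ^ 2 * (t - f e), g e - a.flow t (s e) (h e) (f e))) (by fun_prop)

end Measurability

lemma isCaratheodorySolution_flow (t z : ℝ) :
    IsCaratheodorySolution (a.lip σ) (a.flow t σ z) :=
  (exists_measurable_flow a.measurable_lip a.lipschitzWith_lip
    a.exists_abs_lip_zero_le t).choose_spec.2.1 σ z

lemma flow_self (t z : ℝ) : a.flow t σ z t = z :=
  (exists_measurable_flow a.measurable_lip a.lipschitzWith_lip
    a.exists_abs_lip_zero_le t).choose_spec.2.2 σ z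

@[fun_prop]
lemma continuous_flow (t z : ℝ) : Continuous (a.flow t σ z) :=
  (a.isCaratheodorySolution_flow σ t z).continuous

lemma measurable_uncurry_lip : Measurable (Function.uncurry (a.lip σ)) := by
  unfold Function.uncurry; fun_prop

lemma intervalIntegrable_lip_comp {f : ℝ → ℝ} (hf : Continuous f) (s t : ℝ) :
    IntervalIntegrable (fun r => a.lip σ r (f r)) volume s t :=
  intervalIntegrable_comp_of_lipschitzWith (a.measurable_uncurry_lip σ) (a.lipschitzWith_lip σ)
    (a.exists_abs_lip_zero_le σ).choose_spec hf s t

lemma intervalIntegrable_drift_comp {f : ℝ → ℝ} (hf : Continuous f) (s t : ℝ) :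
    IntervalIntegrable (fun r => a.drift σ r (f r)) volume s t := by
  have hf' := hf.measurable
  refine .add (intervalIntegrable_const (c := (a.M : ℝ)).mono_fun
    (by fun_prop : Measurable fun r => a.bdd σ r (f r)).aestronglyMeasurable ?_)
    (a.intervalIntegrable_lip_comp σ hf s t)
  exact ae_of_all _ fun r => (a.abs_bdd_le σ r _).trans (le_abs_self _)

lemma abs_drift_sub_lip_le (r y y' : ℝ) :
    |a.drift σ r y - a.lip σ r y'| ≤ a.M + a.K * |y - y'| := by
  rw [drift, add_sub_assoc]
  exact (abs_add_le _ _).trans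
    (add_le_add (a.abs_bdd_le σ r y) ((a.lipschitzWith_lip σ r).dist_le_mul y y'))

lemma abs_flow_sub_flow_le (t z z' s : ℝ) :
    |a.flow t σ z s - a.flow t σ z' s| ≤ |z - z'| * rexp (a.K * |s - t|) := by
  simpa only [flow_self] using (a.isCaratheodorySolution_flow σ t z).abs_sub_le
    (a.measurable_uncurry_lip σ) (a.lipschitzWith_lip σ) (a.exists_abs_lip_zero_le σ).choose_spec
    (a.isCaratheodorySolution_flow σ t z') s t

lemma abs_sub_le_abs_flow_sub_flow (t z z' s : ℝ) :
    |z - z'| ≤ rexp (a.K * |t - s|) * |a.flow t σ z s - a.flow t σ z' s| := by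
  rw [mul_comm]
  simpa only [flow_self] using (a.isCaratheodorySolution_flow σ t z).abs_sub_le
    (a.measurable_uncurry_lip σ) (a.lipschitzWith_lip σ) (a.exists_abs_lip_zero_le σ).choose_spec
    (a.isCaratheodorySolution_flow σ t z') t s

lemma abs_sub_flow_sub_sub_flow_le (t z z' s : ℝ) :
    |(z - a.flow t σ z s) - (z' - a.flow t σ z' s)| ≤
      a.K * rexp (a.K * |s - t|) * |s - t| * |z - z'| := by
  simpa only [flow_self] using (a.isCaratheodorySolution_flow σ t z).abs_sub_sub_sub_le
    (a.measurable_uncurry_lip σ) (a.lipschitzWith_lip σ) (a.exists_abs_lip_zero_le σ).choose_spec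
    (a.isCaratheodorySolution_flow σ t z') s t

lemma lintegral_comp_flow_le (t s : ℝ) {F : ℝ → ℝ≥0∞} (hF : Measurable F) :
    ∫⁻ z, F (a.flow t σ z s) ≤ ENNReal.ofReal (rexp (a.K * |t - s|)) * ∫⁻ w, F w :=
  lintegral_comp_le_of_antilipschitz (by fun_prop)
    (fun z z' => a.abs_sub_le_abs_flow_sub_flow σ t z z' s) hF

variable {t r s T ρ v : ℝ}

lemma lintegral_heatKernel_sub_flow_le (hv : 0 < v) (y : ℝ) :
    ∫⁻ z, ENNReal.ofReal (heatKernel v (y - a.flow t σ z s)) ≤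
      ENNReal.ofReal (rexp (a.K * |t - s|)) := by
  refine (a.lintegral_comp_flow_le σ t s (F := fun w => ENNReal.ofReal (heatKernel v (y - w)))
    (by fun_prop)).trans_eq ?_
  rw [lintegral_sub_left_eq_self (fun w => ENNReal.ofReal (heatKernel v w)) y,
    lintegral_ofReal_heatKernel hv, mul_one]

lemma abs_parametrixKernel_le (hρ : ρ ≠ 0) (hr : r < t) (y z : ℝ) :
    |a.parametrixKernel σ ρ t r y z| ≤ (3 * a.M * (√(ρ ^ 2 * (t - r)))⁻¹ + 6 * a.K) *
      heatKernel (2 * (ρ ^ 2 * (t - r))) (y - a.flow t σ z r) := by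
  have hv : 0 < ρ ^ 2 * (t - r) := mul_pos (by positivity) (sub_pos.2 hr)
  rw [parametrixKernel, abs_mul]
  set v := ρ ^ 2 * (t - r)
  set w := y - a.flow t σ z r
  calc _ ≤ (a.M + a.K * |w|) * |heatKernelDeriv v w| := by
        gcongr; exact a.abs_drift_sub_lip_le σ r _ _
    _ = a.M * |heatKernelDeriv v w| + a.K * (|w| * |heatKernelDeriv v w|) := by ring
    _ ≤ a.M * (3 * (√v)⁻¹ * heatKernel (2 * v) w) + a.K * (6 * heatKernel (2 * v) w) := by
        exact add_le_add
          (mul_le_mul_of_nonneg_left (abs_heatKernelDeriv_le hv w) a.M.coe_nonneg)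
          (mul_le_mul_of_nonneg_left (abs_mul_abs_heatKernelDeriv_le hv w) a.K.coe_nonneg)
    _ = _ := by ring

/-- The constant in the `L¹` bound `parametrixConst * (t - r) ^ (-1/2)` for the parametrix kernel
on the time interval `[0, T]`. -/
def parametrixConst (ρ T : ℝ) : ℝ := rexp (a.K * T) * (3 * a.M / |ρ| + 6 * a.K * √T)

lemma parametrixConst_nonneg : 0 ≤ a.parametrixConst ρ T := by
  unfold parametrixConst; positivity

lemma mul_exp_le_parametrixConst_mul (hρ : ρ ≠ 0) (hr₀ : 0 ≤ r) (hr : r < t) (htT : t ≤ T) :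
    (3 * a.M * (√(ρ ^ 2 * (t - r)))⁻¹ + 6 * a.K) * rexp (a.K * |t - r|) ≤
      a.parametrixConst ρ T * (t - r) ^ (-(1 / 2) : ℝ) := by
  have htr := sub_pos.2 hr
  have hsqrt : 0 < √(t - r) := Real.sqrt_pos.2 htr
  have hle : (1 : ℝ) ≤ √T * (√(t - r))⁻¹ := by
    rw [← div_eq_mul_inv, one_le_div hsqrt]
    exact Real.sqrt_le_sqrt (by linarith)
  rw [Real.rpow_neg htr.le, ← Real.sqrt_eq_rpow, Real.sqrt_mul (sq_nonneg _), Real.sqrt_sq_eq_abs,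
    abs_of_pos htr]
  calc (3 * a.M * (|ρ| * √(t - r))⁻¹ + 6 * a.K) * rexp (a.K * (t - r))
      ≤ (3 * a.M * (|ρ| * √(t - r))⁻¹ + 6 * a.K * (√T * (√(t - r))⁻¹)) * rexp (a.K * T) := by
        refine mul_le_mul (add_le_add_right (le_mul_of_one_le_right (by positivity) hle) _)
          (exp_le_exp.2 ?_) (exp_pos _).le (by positivity)
        exact mul_le_mul_of_nonneg_left (by linarith) a.K.coe_nonneg
    _ = a.parametrixConst ρ T * (√(t - r))⁻¹ := by
        rw [parametrixConst, mul_inv]; ring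

lemma lintegral_enorm_parametrixKernel_le (hρ : ρ ≠ 0) (hr₀ : 0 ≤ r) (hr : r < t) (htT : t ≤ T)
    (y : ℝ) : ∫⁻ z, ‖a.parametrixKernel σ ρ t r y z‖ₑ ≤
      ENNReal.ofReal (a.parametrixConst ρ T * (t - r) ^ (-(1 / 2) : ℝ)) := by
  have : 0 < ρ ^ 2 * (t - r) := mul_pos (by positivity) (sub_pos.2 hr)
  set c := 3 * a.M * (√(ρ ^ 2 * (t - r)))⁻¹ + 6 * a.K
  have hc : 0 ≤ c := by positivity
  calc ∫⁻ z, ‖a.parametrixKernel σ ρ t r y z‖ₑ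
      ≤ ∫⁻ z, ENNReal.ofReal c *
          ENNReal.ofReal (heatKernel (2 * (ρ ^ 2 * (t - r))) (y - a.flow t σ z r)) := by
        refine lintegral_mono fun z => ?_
        rw [← ENNReal.ofReal_mul hc, Real.enorm_eq_ofReal_abs]
        exact ENNReal.ofReal_le_ofReal (a.abs_parametrixKernel_le σ hρ hr y z)
    _ ≤ ENNReal.ofReal c * ENNReal.ofReal (rexp (a.K * |t - r|)) := by
        rw [lintegral_const_mul _ (by fun_prop)]
        gcongr
        exact a.lintegral_heatKernel_sub_flow_le σ (by positivity) y
    _ ≤ _ := by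
        rw [← ENNReal.ofReal_mul hc]
        exact ENNReal.ofReal_le_ofReal (a.mul_exp_le_parametrixConst_mul hρ hr₀ hr htT)

end RandomDrift
end Parametrix

/-! ### Solutions in a random environment -/

section Moments

lemma lintegral_enorm_gaussianReal_le (v : ℝ≥0) :
    ∫⁻ y, ‖y‖ₑ ∂gaussianReal 0 v ≤ ENNReal.ofReal (1 + v) := by
  have hsq : Integrable (fun y : ℝ => y ^ 2) (gaussianReal 0 v) :=
    (memLp_id_gaussianReal (μ := 0) (v := v) 2).integrable_sq
  have hvar : ∫ y, y ^ 2 ∂gaussianReal 0 v = v := by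
    have h := variance_id_gaussianReal (μ := 0) (v := v)
    rwa [variance_of_integral_eq_zero (by fun_prop) (by simp)] at h
  have hint : Integrable (fun y : ℝ => 1 + y ^ 2) (gaussianReal 0 v) :=
    (integrable_const 1).add hsq
  calc ∫⁻ y, ‖y‖ₑ ∂gaussianReal 0 v ≤ ∫⁻ y, ENNReal.ofReal (1 + y ^ 2) ∂gaussianReal 0 v := by
        refine lintegral_mono fun y => ?_
        rw [Real.enorm_eq_ofReal_abs]
        refine ENNReal.ofReal_le_ofReal ?_
        nlinarith [sq_nonneg (|y| - 1), sq_abs y, abs_nonneg y]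
    _ = ENNReal.ofReal (1 + v) := by
        rw [← ofReal_integral_eq_lintegral_ofReal hint (ae_of_all _ fun y => by positivity),
          integral_add (integrable_const _) hsq, hvar]
        simp

variable {Ω : Type*} [MeasurableSpace Ω] {μ : Measure Ω} {W : ℝ → Ω → ℝ} {T : ℝ}

lemma IsFBM.integrable_sub_zero [IsProbabilityMeasure μ] (hW : IsFBM μ (1 / 2) W)
    (hWc : ∀ ω, Continuous fun t => W t ω) :
    Integrable (fun p : Ω × ℝ => W p.2 p.1 - W 0 p.1) (μ.prod (volume.restrict (Ioc 0 T))) := by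
  have hWm : Measurable fun p : Ω × ℝ => W p.2 p.1 :=
    (measurable_uncurry_of_continuous_of_measurable (u := W) hWc hW.meas).comp measurable_swap
  have hm : Measurable fun p : Ω × ℝ => W p.2 p.1 - W 0 p.1 :=
    hWm.sub ((hW.meas 0).comp measurable_fst)
  have hle : ∀ r ∈ Ioc 0 T, ∫⁻ ω, ‖W r ω - W 0 ω‖ₑ ∂μ ≤ ENNReal.ofReal (1 + T) := by
    intro r hr
    have hmap := lintegral_map (μ := μ) (f := fun y : ℝ => ‖y‖ₑ) measurable_enorm
      (by have := hW.meas; fun_prop : Measurable fun ω => W r ω - W 0 ω)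
    rw [← hmap, hW.map_sub_eq_gaussianReal le_rfl hr.1]
    refine (lintegral_enorm_gaussianReal_le _).trans (ENNReal.ofReal_le_ofReal ?_)
    rw [sub_zero, Real.coe_toNNReal r hr.1.le]
    linarith [hr.2]
  refine ⟨hm.aestronglyMeasurable, ?_⟩
  rw [hasFiniteIntegral_iff_enorm, lintegral_prod_symm _ hm.enorm.aemeasurable]
  refine (setLIntegral_mono measurable_const hle).trans_lt ?_
  rw [lintegral_const]
  exact ENNReal.mul_lt_top ENNReal.ofReal_lt_top (measure_lt_top _ _)

lemma integrable_of_ae_integral_abs_le {G : Ω × ℝ → ℝ} (hG : Measurable G)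
    (hGi : ∀ ω, IntegrableOn (fun r => G (ω, r)) (Ioc 0 T)) {U : Ω × ℝ → ℝ}
    (hU : Integrable U (μ.prod (volume.restrict (Ioc 0 T)))) {C : ℝ}
    (hle : ∀ᵐ ω ∂μ, ∫ r in Ioc 0 T, |G (ω, r)| ≤ C * ∫ r in Ioc 0 T, U (ω, r)) :
    Integrable G (μ.prod (volume.restrict (Ioc 0 T))) := by
  refine (integrable_prod_iff hG.aestronglyMeasurable).2 ⟨ae_of_all _ hGi, ?_⟩
  refine Integrable.mono' (hU.integral_prod_left.const_mul C)
    hG.norm.stronglyMeasurable.integral_prod_right'.aestronglyMeasurable ?_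
  filter_upwards [hle] with ω hω
  rw [Real.norm_of_nonneg (integral_nonneg fun _ => norm_nonneg _)]
  exact hω

end Moments

section Deviation

variable {Ω S : Type*} [MeasurableSpace S] {a : RandomDrift S} {pr : Ω → S} {Y : ℝ → Ω → ℝ}

/-- The displacement of `Y` from the characteristic through `(t, z)`. -/
def deviation (a : RandomDrift S) (pr : Ω → S) (Y : ℝ → Ω → ℝ) (t z s : ℝ) (ω : Ω) : ℝ :=
  Y s ω - a.flow t (pr ω) z s

/-- The drift of the displacement of `Y` from the characteristic through `(t, z)`. -/
def deviationDrift (a : RandomDrift S) (pr : Ω → S) (Y : ℝ → Ω → ℝ) (t z r : ℝ) (ω : Ω) : ℝ :=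
  a.drift (pr ω) r (Y r ω) - a.lip (pr ω) r (a.flow t (pr ω) z r)

lemma abs_deviationDrift_le (t z r : ℝ) (ω : Ω) :
    |deviationDrift a pr Y t z r ω| ≤ a.M + a.K * |deviation a pr Y t z r ω| :=
  a.abs_drift_sub_lip_le _ _ _ _

variable [MeasurableSpace Ω] {μ : Measure Ω} {W : ℝ → Ω → ℝ} {ρ T x : ℝ}

/-- `Y` solves `dY = a(Y) dt + ρ dW` on `[0, T]` in the environment `pr` with `Y 0 = x`. Instead of
adaptedness to a filtration only the independence of the increments of `W` from the pair formed by
the environment and the current position is recorded. -/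
structure IsDrivenSolution (μ : Measure Ω) (a : RandomDrift S) (pr : Ω → S) (W : ℝ → Ω → ℝ)
    (ρ T x : ℝ) (Y : ℝ → Ω → ℝ) : Prop where
  measurable_env : Measurable pr
  measurable : ∀ s, Measurable (Y s)
  continuous : ∀ ω, Continuous fun s => Y s ω
  ae_eq : ∀ᵐ ω ∂μ, ∀ s ∈ Icc 0 T,
    Y s ω = x + (∫ r in 0..s, a.drift (pr ω) r (Y r ω)) + ρ * (W s ω - W 0 ω)
  indepFun : ∀ s s', 0 ≤ s → s < s' → s' ≤ T →
    IndepFun (fun ω => (pr ω, Y s ω)) (fun ω => W s' ω - W s ω) μ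

namespace IsDrivenSolution

lemma measurable_uncurry (hY : IsDrivenSolution μ a pr W ρ T x Y) :
    Measurable fun p : Ω × ℝ => Y p.2 p.1 :=
  (measurable_uncurry_of_continuous_of_measurable (u := Y) hY.continuous hY.measurable).comp
    measurable_swap

lemma measurable_deviation (hY : IsDrivenSolution μ a pr W ρ T x Y) (t z s : ℝ) :
    Measurable (deviation a pr Y t z s) := by
  have := hY.measurable_env
  have := hY.measurable s
  unfold deviation; fun_prop

lemma continuous_deviation (hY : IsDrivenSolution μ a pr W ρ T x Y) (t z : ℝ) (ω : Ω) :
    Continuous fun s => deviation a pr Y t z s ω :=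
  (hY.continuous ω).sub (a.continuous_flow _ t z)

lemma measurable_uncurry_deviation (hY : IsDrivenSolution μ a pr W ρ T x Y) (t z : ℝ) :
    Measurable fun p : Ω × ℝ => deviation a pr Y t z p.2 p.1 := by
  have := hY.measurable_env
  exact hY.measurable_uncurry.sub (by fun_prop)

lemma measurable_uncurry_deviationDrift (hY : IsDrivenSolution μ a pr W ρ T x Y) (t z : ℝ) :
    Measurable fun p : Ω × ℝ => deviationDrift a pr Y t z p.2 p.1 := by
  have := hY.measurable_env
  exact (a.measurable_drift_comp (hY.measurable_env.comp measurable_fst) measurable_snd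
    hY.measurable_uncurry).sub (by fun_prop)

lemma intervalIntegrable_deviationDrift (hY : IsDrivenSolution μ a pr W ρ T x Y)
    (t z s s' : ℝ) (ω : Ω) :
    IntervalIntegrable (fun r => deviationDrift a pr Y t z r ω) volume s s' :=
  (a.intervalIntegrable_drift_comp _ (hY.continuous ω) s s').sub
    (a.intervalIntegrable_lip_comp _ (a.continuous_flow _ t z) s s')

lemma ae_deviation_zero_eq (hY : IsDrivenSolution μ a pr W ρ T x Y) (hT : 0 ≤ T) (t z : ℝ) :
    ∀ᵐ ω ∂μ, deviation a pr Y t z 0 ω = x - a.flow t (pr ω) z 0 := by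
  filter_upwards [hY.ae_eq] with ω hω
  rw [deviation, hω 0 ⟨le_rfl, hT⟩]
  simp

lemma ae_deviation_sub_eq (hY : IsDrivenSolution μ a pr W ρ T x Y) (t z : ℝ) :
    ∀ᵐ ω ∂μ, ∀ s s', 0 ≤ s → s ≤ s' → s' ≤ T →
      deviation a pr Y t z s' ω - deviation a pr Y t z s ω =
        (∫ r in s..s', deviationDrift a pr Y t z r ω) + ρ * (W s' ω - W s ω) := by
  filter_upwards [hY.ae_eq] with ω hω s s' hs hss hs'
  have hdrift := a.intervalIntegrable_drift_comp (pr ω) (hY.continuous ω)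
  have hlip := a.intervalIntegrable_lip_comp (pr ω) (a.continuous_flow (pr ω) t z)
  have hflow := (a.isCaratheodorySolution_flow (pr ω) t z).sub_eq s s'
  have hadd := intervalIntegral.integral_add_adjacent_intervals (hdrift 0 s) (hdrift s s')
  simp only [deviation, deviationDrift]
  rw [intervalIntegral.integral_sub (hdrift s s') (hlip s s'), hω s ⟨hs, hss.trans hs'⟩,
    hω s' ⟨hs.trans hss, hs'⟩]
  linarith

lemma ae_abs_deviation_le (hY : IsDrivenSolution μ a pr W ρ T x Y) (t z : ℝ) :
    ∀ᵐ ω ∂μ, ∀ s ∈ Icc 0 T, |deviation a pr Y t z s ω| ≤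
      (|x - a.flow t (pr ω) z 0| + a.M * T + |ρ| * |W s ω - W 0 ω|) +
        a.K * ∫ r in 0..s, |deviation a pr Y t z r ω| := by
  filter_upwards [hY.ae_eq, hY.ae_deviation_sub_eq t z] with ω hω hsub s hs
  have hzero : deviation a pr Y t z 0 ω = x - a.flow t (pr ω) z 0 := by
    rw [deviation, hω 0 ⟨le_rfl, hs.1.trans hs.2⟩]
    simp
  have hcont := (hY.continuous_deviation t z ω).abs
  have hbound : Continuous fun r => a.M + a.K * |deviation a pr Y t z r ω| := by fun_prop
  have hint : |∫ r in 0..s, deviationDrift a pr Y t z r ω| ≤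
      a.M * T + a.K * ∫ r in 0..s, |deviation a pr Y t z r ω| := by
    calc |∫ r in 0..s, deviationDrift a pr Y t z r ω|
        ≤ ∫ r in 0..s, (a.M + a.K * |deviation a pr Y t z r ω|) :=
          (Real.norm_eq_abs _).symm.trans_le <| intervalIntegral.norm_integral_le_of_norm_le hs.1
            (ae_of_all _ fun r _ => abs_deviationDrift_le t z r ω) (hbound.intervalIntegrable 0 s)
      _ = a.M * s + a.K * ∫ r in 0..s, |deviation a pr Y t z r ω| := by
          rw [intervalIntegral.integral_add (by simp)
            ((hcont.intervalIntegrable _ _).const_mul _), intervalIntegral.integral_const_mul,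
            intervalIntegral.integral_const, sub_zero, smul_eq_mul, mul_comm s]
      _ ≤ _ := by
          gcongr
          exact hs.2
  have heq := hsub 0 s le_rfl hs.1 hs.2
  rw [sub_eq_iff_eq_add, hzero] at heq
  rw [heq, add_comm]
  refine (abs_add_le _ _).trans ?_
  linarith [abs_add_le (∫ r in 0..s, deviationDrift a pr Y t z r ω) (ρ * (W s ω - W 0 ω)),
    abs_mul ρ (W s ω - W 0 ω)]

variable [IsProbabilityMeasure μ] {A : Set S} {N t z : ℝ}

lemma integrable_indicator_mul_deviation (hY : IsDrivenSolution μ a pr W ρ T x Y)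
    (hW : IsFBM μ (1 / 2) W) (hWc : ∀ ω, Continuous fun t => W t ω) (hT : 0 ≤ T)
    (hA : MeasurableSet A) (hAN : ∀ σ ∈ A, |a.flow t σ z 0| ≤ N) :
    Integrable (fun p : Ω × ℝ => A.indicator 1 (pr p.1) * deviation a pr Y t z p.2 p.1)
      (μ.prod (volume.restrict (Ioc 0 T))) := by
  have hdev := hY.measurable_uncurry_deviation t z
  have hξ : Measurable fun p : Ω × ℝ => A.indicator (1 : S → ℝ) (pr p.1) :=
    (measurable_one.indicator hA).comp (hY.measurable_env.comp measurable_fst)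
  set U : Ω × ℝ → ℝ := fun p => |x| + |N| + a.M * T + |ρ| * |W p.2 p.1 - W 0 p.1|
  have hU₀ : ∀ p, 0 ≤ U p := fun p => by positivity
  refine integrable_of_ae_integral_abs_le (U := U) (C := rexp (a.K * T)) (hξ.mul hdev)
    (fun ω => ((hY.continuous_deviation t z ω).const_mul (A.indicator 1 (pr ω))).integrableOn_Ioc)
    ((integrable_const _).add ((hW.integrable_sub_zero hWc).abs.const_mul _)) ?_
  filter_upwards [hY.ae_abs_deviation_le t z] with ω hω
  by_cases hωA : pr ω ∈ A
  · simp only [indicator_of_mem hωA, Pi.one_apply, one_mul]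
    rw [← intervalIntegral.integral_of_le hT, ← intervalIntegral.integral_of_le hT]
    have hWω := hWc ω
    refine integral_le_exp_mul_integral_of_le_add_mul_integral (hY.continuous_deviation t z ω).abs
      (A := fun s => U (ω, s)) (by simp only [U]; fun_prop) a.K.coe_nonneg hT (fun s => hU₀ _)
      fun s hs => (hω s hs).trans (add_le_add_left ?_ _)
    have hx : |x - a.flow t (pr ω) z 0| ≤ |x| + |N| :=
      (abs_sub _ _).trans (add_le_add_right ((hAN _ hωA).trans (le_abs_self N)) _)
    simp only [U]
    gcongr
  · simp only [indicator_of_notMem hωA, zero_mul, abs_zero, integral_zero]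
    exact mul_nonneg (exp_pos _).le (integral_nonneg fun r => hU₀ _)

lemma isWeightedItoProcess_deviation (hY : IsDrivenSolution μ a pr W ρ T x Y)
    (hW : IsFBM μ (1 / 2) W) (hWc : ∀ ω, Continuous fun t => W t ω) {τ : ℝ} (hτ : 0 ≤ τ)
    (hτT : τ ≤ T) (hA : MeasurableSet A) (hAN : ∀ σ ∈ A, |a.flow t σ z 0| ≤ N) :
    IsWeightedItoProcess μ W ρ τ (fun ω => A.indicator 1 (pr ω)) (deviationDrift a pr Y t z)
      (deviation a pr Y t z) where
  measurable_weight := (measurable_one.indicator hA).comp hY.measurable_env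
  abs_weight_le ω := by
    by_cases h : pr ω ∈ A <;> simp [h]
  measurable := hY.measurable_deviation t z
  continuous := hY.continuous_deviation t z
  intervalIntegrable := ae_of_all _ (hY.intervalIntegrable_deviationDrift t z 0 τ)
  sub_eq := by
    filter_upwards [hY.ae_deviation_sub_eq t z] with ω hω s s' hs hss hs'
    exact hω s s' hs hss (hs'.trans hτT)
  indepFun s s' hs hss hs' := by
    refine (hY.indepFun s s' hs hss (hs'.trans hτT)).comp
      (φ := fun q : S × ℝ => (A.indicator (1 : S → ℝ) q.1, q.2 - a.flow t q.1 z s)) ?_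
      measurable_id
    exact ((measurable_one.indicator hA).comp measurable_fst).prodMk (by fun_prop)
  integrable := by
    have hξ : Measurable fun p : Ω × ℝ => A.indicator (1 : S → ℝ) (pr p.1) :=
      (measurable_one.indicator hA).comp (hY.measurable_env.comp measurable_fst)
    have hdev := (hY.integrable_indicator_mul_deviation hW hWc (hτ.trans hτT) hA hAN).mono_measure
      (Measure.prod_mono le_rfl (Measure.restrict_mono (Ioc_subset_Ioc_right hτT) le_rfl))
    refine ((integrable_const (a.M : ℝ)).add (hdev.norm.const_mul a.K)).mono'
      (hξ.mul (hY.measurable_uncurry_deviationDrift t z)).aestronglyMeasurable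
      (ae_of_all _ fun p => ?_)
    by_cases h : pr p.1 ∈ A
    · simpa [h] using abs_deviationDrift_le t z p.2 p.1
    · simp [h]

lemma integral_indicator_mul_heatKernel_eq (hY : IsDrivenSolution μ a pr W ρ T x Y)
    (hW : IsFBM μ (1 / 2) W) (hWc : ∀ ω, Continuous fun t => W t ω) (hρ : ρ ≠ 0) {τ : ℝ}
    (hτ : 0 < τ) (hτt : τ < t) (htT : t ≤ T) (hA : MeasurableSet A)
    (hAN : ∀ σ ∈ A, |a.flow t σ z 0| ≤ N) :
    ∫ ω, A.indicator 1 (pr ω) * heatKernel (ρ ^ 2 * (t - τ)) (Y τ ω - a.flow t (pr ω) z τ) ∂μ =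
      ∫ ω, A.indicator 1 (pr ω) * heatKernel (ρ ^ 2 * t) (x - a.flow t (pr ω) z 0) ∂μ +
      ∫ p : Ω × ℝ, A.indicator 1 (pr p.1) * a.parametrixKernel (pr p.1) ρ t p.2 (Y p.2 p.1) z
        ∂μ.prod (volume.restrict (Ioc 0 τ)) := by
  have hIto := (hY.isWeightedItoProcess_deviation hW hWc hτ.le (hτt.le.trans htT) hA
    hAN).integral_mul_heatKernel_eq hW hρ hτ hτt
  simp only [deviationDrift, deviation, mul_assoc] at hIto
  simp only [RandomDrift.parametrixKernel]
  rw [hIto]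
  congr 1
  refine integral_congr_ae ?_
  filter_upwards [hY.ae_deviation_zero_eq (by linarith) t z] with ω hω
  simp only [deviation] at hω
  simp only [hω]

end IsDrivenSolution
end Deviation

/-! ### Approximate identities and uniqueness of kernels -/

section ApproximateIdentity

open scoped Topology BoundedContinuousFunction

lemma integral_eq_integral_mul_comp_add_mul {s : ℝ} (hs : 0 < s) (w : ℝ) (g : ℝ → ℝ) :
    ∫ z, g z = ∫ ζ, s * g (w + s * ζ) := by
  have h := Measure.integral_comp_mul_left (fun z => g (w + z)) s
  rw [abs_of_pos (inv_pos.2 hs), smul_eq_mul] at h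
  rw [integral_const_mul, h, mul_inv_cancel_left₀ hs.ne', integral_add_left_eq_self]

lemma heatKernel_le_mul_heatKernel_of_abs_add_le {v u ζ : ℝ} (hv : 0 < v)
    (h : |u + ζ| ≤ 1 + |ζ| / 2) :
    heatKernel v u ≤ √8 * rexp (1 / (2 * v)) * heatKernel (8 * v) ζ := by
  have hu : |ζ| / 2 - 1 ≤ |u| := by
    have := abs_sub (u + ζ) u
    rw [add_sub_cancel_left] at this
    linarith
  have hsq : ζ ^ 2 / 8 - 1 ≤ u ^ 2 := by
    rw [← sq_abs ζ, ← sq_abs u]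
    nlinarith [sq_nonneg (|u| - 1), abs_nonneg ζ, abs_nonneg u]
  have hsqrt : √(2 * π * (8 * v)) = √8 * √(2 * π * v) := by
    rw [← Real.sqrt_mul (by norm_num)]
    ring_nf
  calc heatKernel v u = (√(2 * π * v))⁻¹ * rexp (-u ^ 2 / (2 * v)) := rfl
    _ ≤ (√(2 * π * v))⁻¹ * rexp (-(ζ ^ 2 / 8 - 1) / (2 * v)) := by gcongr
    _ = (√(2 * π * v))⁻¹ * (rexp (1 / (2 * v)) * rexp (-ζ ^ 2 / (2 * (8 * v)))) := by
        rw [← Real.exp_add]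
        congr 2
        field_simp
        ring
    _ = √8 * rexp (1 / (2 * v)) * heatKernel (8 * v) ζ := by
        rw [heatKernel, hsqrt]
        field_simp

lemma abs_div_add_le_of_abs_sub_sub_le {φ : ℝ → ℝ} {L s : ℝ} (hs : 0 < s)
    (hφ : ∀ z z', |(z - φ z) - (z' - φ z')| ≤ L * s ^ 2 * |z - z'|) (hL : 0 ≤ L) (x y ζ : ℝ) :
    |(x - φ (x + (y - φ y) + s * ζ)) / s + ζ| ≤ L * s * |x - φ y| + L * s ^ 2 * |ζ| := by
  set z := x + (y - φ y) + s * ζ with hz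
  have heq : (x - φ z) / s + ζ = ((z - φ z) - (y - φ y)) / s := by
    rw [hz]; field_simp; ring
  have hzy : |z - y| ≤ |x - φ y| + s * |ζ| := by
    rw [show z - y = (x - φ y) + s * ζ by rw [hz]; ring]
    exact (abs_add_le _ _).trans_eq (by rw [abs_mul, abs_of_pos hs])
  rw [heq, abs_div, abs_of_pos hs, div_le_iff₀ hs]
  calc |(z - φ z) - (y - φ y)| ≤ L * s ^ 2 * |z - y| := hφ z y
    _ ≤ L * s ^ 2 * (|x - φ y| + s * |ζ|) := by gcongr
    _ = _ := by ring

variable {ι : Type*} {l : Filter ι} {v L y : ℝ} {s x : ι → ℝ} {φ : ι → ℝ → ℝ}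

lemma tendsto_integral_mul_heatKernel_of_abs_add_le [l.IsCountablyGenerated] {z u : ι → ℝ → ℝ}
    {c d : ι → ℝ} (f : ℝ →ᵇ ℝ) (hv : 0 < v) (hzm : ∀ i, Measurable (z i))
    (hum : ∀ i, Measurable (u i)) (hz : ∀ ζ, Filter.Tendsto (fun i => z i ζ) l (𝓝 y))
    (hu : ∀ᶠ i in l, ∀ ζ, |u i ζ + ζ| ≤ c i + d i * |ζ|) (hc : Filter.Tendsto c l (𝓝 0))
    (hd : Filter.Tendsto d l (𝓝 0)) :
    Filter.Tendsto (fun i => ∫ ζ, f (z i ζ) * heatKernel v (u i ζ)) l (𝓝 (f y)) := by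
  have hulim : ∀ ζ, Filter.Tendsto (fun i => u i ζ) l (𝓝 (-ζ)) := by
    intro ζ
    have hsum : Filter.Tendsto (fun i => u i ζ + ζ) l (𝓝 0) :=
      squeeze_zero_norm' (hu.mono fun i hi => hi ζ) (by simpa using hc.add (hd.mul_const |ζ|))
    simpa using hsum.sub_const ζ
  have hval : f y = ∫ ζ, f y * heatKernel v (-ζ) := by
    simp only [heatKernel_neg]
    rw [integral_const_mul, integral_heatKernel hv, mul_one]
  rw [hval]
  refine tendsto_integral_filter_of_dominated_convergence
    (fun ζ => ‖f‖ * (√8 * rexp (1 / (2 * v)) * heatKernel (8 * v) ζ)) ?_ ?_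
    (((integrable_heatKernel (by positivity)).const_mul _).const_mul _) ?_
  · refine .of_forall fun i => Measurable.aestronglyMeasurable ?_
    have := f.continuous.measurable
    fun_prop
  · filter_upwards [hu, hc.eventually (gt_mem_nhds one_pos),
      hd.eventually (gt_mem_nhds one_half_pos)] with i hi h₁ h₂
    refine ae_of_all _ fun ζ => ?_
    rw [norm_mul, Real.norm_of_nonneg (heatKernel_nonneg _ _)]
    refine mul_le_mul (f.norm_coe_le_norm _)
      (heatKernel_le_mul_heatKernel_of_abs_add_le hv ((hi ζ).trans ?_)) (heatKernel_nonneg _ _)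
      (norm_nonneg _)
    nlinarith [abs_nonneg ζ]
  · exact ae_of_all _ fun ζ => ((f.continuous.tendsto y).comp (hz ζ)).mul
      (((continuous_heatKernel v).tendsto (-ζ)).comp (hulim ζ))

lemma tendsto_integral_mul_heatKernel [l.IsCountablyGenerated] (f : ℝ →ᵇ ℝ) (hv : 0 < v)
    (hL : 0 ≤ L) (hs : ∀ᶠ i in l, 0 < s i) (hs₀ : Filter.Tendsto s l (𝓝 0))
    (hx : Filter.Tendsto x l (𝓝 y)) (hφm : ∀ i, Measurable (φ i))
    (hφ : ∀ᶠ i in l, ∀ z z', |(z - φ i z) - (z' - φ i z')| ≤ L * s i ^ 2 * |z - z'|)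
    (hφy : Filter.Tendsto (fun i => φ i y) l (𝓝 y)) :
    Filter.Tendsto (fun i => ∫ z, f z * heatKernel (v * s i ^ 2) (x i - φ i z)) l
      (𝓝 (f y)) := by
  set z : ι → ℝ → ℝ := fun i ζ => x i + (y - φ i y) + s i * ζ
  set u : ι → ℝ → ℝ := fun i ζ => (x i - φ i (z i ζ)) / s i
  have hz : ∀ ζ, Filter.Tendsto (fun i => z i ζ) l (𝓝 y) := fun ζ => by
    simpa using (hx.add (hφy.const_sub y)).add (hs₀.mul_const ζ)
  have hxφ : Filter.Tendsto (fun i => |x i - φ i y|) l (𝓝 0) := by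
    simpa using (hx.sub hφy).abs
  have hu : ∀ᶠ i in l, ∀ ζ, |u i ζ + ζ| ≤ L * s i * |x i - φ i y| + L * s i ^ 2 * |ζ| := by
    filter_upwards [hs, hφ] with i hi hφi ζ
    exact abs_div_add_le_of_abs_sub_sub_le hi hφi hL _ _ ζ
  have hcov : (fun i => ∫ ζ, f (z i ζ) * heatKernel v (u i ζ)) =ᶠ[l]
      fun i => ∫ z, f z * heatKernel (v * s i ^ 2) (x i - φ i z) := by
    filter_upwards [hs] with i hi
    refine Eq.trans ?_ (integral_eq_integral_mul_comp_add_mul hi (x i + (y - φ i y)) _).symm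
    refine integral_congr_ae (ae_of_all _ fun ζ => ?_)
    simp only [u, ← mul_heatKernel_mul_sq hv hi (_ / s i), mul_div_cancel₀ _ hi.ne']
    ring
  refine (tendsto_integral_mul_heatKernel_of_abs_add_le f hv (fun i => by fun_prop) (fun i => ?_) hz
    hu ?_ ?_).congr' hcov
  · have := hφm i
    fun_prop
  · simpa using (hs₀.const_mul L).mul hxφ
  · simpa using (hs₀.pow 2).const_mul L

end ApproximateIdentity

section Uniqueness

open scoped BoundedContinuousFunction

lemma abs_indicator_one_mul_le {S : Type*} (A : Set S) (f : ℝ →ᵇ ℝ) (p : S × ℝ) :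
    |A.indicator (1 : S → ℝ) p.1 * f p.2| ≤ ‖f‖ := by
  by_cases h : p.1 ∈ A
  · simpa [h] using f.norm_coe_le_norm p.2
  · simp [h]

variable {E S : Type*} [MeasurableSpace E] [MeasurableSpace S]

lemma measurable_indicator_one_mul {A : Set S} (hA : MeasurableSet A) (f : ℝ →ᵇ ℝ) :
    Measurable fun p : S × ℝ => A.indicator (1 : S → ℝ) p.1 * f p.2 :=
  ((measurable_one.indicator hA).comp measurable_fst).mul
    (f.continuous.measurable.comp measurable_snd)

lemma prod_measure_ext_of_integral_indicator_mul {m n : Measure (S × ℝ)} [IsFiniteMeasure m]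
    [IsFiniteMeasure n] {s : ℕ → Set S} (hs : ∀ i, MeasurableSet (s i)) (hcov : ⋃ i, s i = univ)
    (h : ∀ i, ∀ A ⊆ s i, MeasurableSet A → ∀ f : ℝ →ᵇ ℝ,
      ∫ p : S × ℝ, A.indicator 1 p.1 * f p.2 ∂m = ∫ p : S × ℝ, A.indicator 1 p.1 * f p.2 ∂n) :
    m = n := by
  have hmarginal : ∀ i, ∀ A ⊆ s i, MeasurableSet A →
      (m.restrict (A ×ˢ univ)).map Prod.snd = (n.restrict (A ×ˢ univ)).map Prod.snd := by
    intro i A hAs hA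
    refine ext_of_forall_integral_eq_of_IsFiniteMeasure fun f => ?_
    have hint : ∀ m : Measure (S × ℝ), ∫ z, f z ∂((m.restrict (A ×ˢ univ)).map Prod.snd) =
        ∫ p : S × ℝ, A.indicator 1 p.1 * f p.2 ∂m := by
      intro m
      rw [integral_map measurable_snd.aemeasurable f.continuous.measurable.aestronglyMeasurable,
        ← integral_indicator (hA.prod MeasurableSet.univ)]
      refine integral_congr_ae (ae_of_all _ fun p => ?_)
      by_cases hp : p.1 ∈ A <;> simp [hp, indicator]
    rw [hint, hint, h i A hAs hA f]
  refine (Measure.ext_iff_of_iUnion_eq_univ (s := fun i => s i ×ˢ univ) ?_).2 fun i =>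
    Measure.ext_prod fun {A B} hA hB => ?_
  · rw [← iUnion_prod_const, hcov, univ_prod_univ]
  · have heq : A ×ˢ B ∩ s i ×ˢ univ = Prod.snd ⁻¹' B ∩ (A ∩ s i) ×ˢ univ := by
      ext p; simp only [mem_inter_iff, mem_prod, mem_univ, mem_preimage]; tauto
    have hB' := congrArg (· B) (hmarginal i (A ∩ s i) inter_subset_right (hA.inter (hs i)))
    simp only [Measure.map_apply measurable_snd hB,
      Measure.restrict_apply (measurable_snd hB)] at hB'
    rw [Measure.restrict_apply (hA.prod hB), Measure.restrict_apply (hA.prod hB), heq, hB']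

/-- The image under `φ` of the measure with density `k⁺` with respect to `m`. -/
def mapPosPart {F : Type*} [MeasurableSpace F] (m : Measure E) (φ : E → F) (k : E → ℝ) :
    Measure F :=
  (m.withDensity fun e => ENNReal.ofReal (k e)).map φ

section PosPart

variable {F : Type*} [MeasurableSpace F] {m : Measure E} {φ : E → F} {k : E → ℝ} {g : F → ℝ}
  {C : ℝ}

lemma isFiniteMeasure_mapPosPart (hk : Integrable k m) : IsFiniteMeasure (mapPosPart m φ k) := by
  have := isFiniteMeasure_withDensity_ofReal hk.2
  unfold mapPosPart
  infer_instance

lemma integral_mapPosPart (hφ : Measurable φ) (hk : Measurable k) (hg : Measurable g) :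
    ∫ z, g z ∂mapPosPart m φ k = ∫ e, g (φ e) * max (k e) 0 ∂m := by
  rw [mapPosPart, integral_map hφ.aemeasurable hg.aestronglyMeasurable,
    integral_withDensity_eq_integral_toReal_smul (by fun_prop) (by simp)]
  simp only [smul_eq_mul, ENNReal.toReal_ofReal', mul_comm]

lemma integral_mul_eq_integral_mapPosPart_sub (hφ : Measurable φ) (hkm : Measurable k)
    (hk : Integrable k m) (hg : Measurable g) (hgC : ∀ z, |g z| ≤ C) :
    ∫ e, g (φ e) * k e ∂m =
      ∫ z, g z ∂mapPosPart m φ k - ∫ z, g z ∂mapPosPart m φ (fun e => -k e) := by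
  have hgφ : AEStronglyMeasurable (fun e => g (φ e)) m := (hg.comp hφ).aestronglyMeasurable
  have hneg : Integrable (fun e => max (-k e) 0) m := hk.neg.pos_part
  rw [integral_mapPosPart hφ hkm hg, integral_mapPosPart (k := fun e => -k e) hφ hkm.neg hg,
    ← integral_sub (hk.pos_part.bdd_mul hgφ (ae_of_all _ fun e => hgC _))
    (hneg.bdd_mul hgφ (ae_of_all _ fun e => hgC _))]
  refine integral_congr_ae (ae_of_all _ fun e => ?_)
  rcases le_total (k e) 0 with h | h <;> simp [h]

end PosPart

lemma integral_eq_add_integral_mul_of_forall_indicator {m₁ m₂ : Measure (S × ℝ)}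
    [IsFiniteMeasure m₁] [IsFiniteMeasure m₂] {m : Measure E} {φ : E → S × ℝ} (hφ : Measurable φ)
    {k : E → ℝ} (hkm : Measurable k) (hk : Integrable k m) {s : ℕ → Set S}
    (hs : ∀ i, MeasurableSet (s i)) (hcov : ⋃ i, s i = univ)
    (h : ∀ i, ∀ A ⊆ s i, MeasurableSet A → ∀ f : ℝ →ᵇ ℝ,
      ∫ p : S × ℝ, A.indicator 1 p.1 * f p.2 ∂m₁ =
        ∫ p : S × ℝ, A.indicator 1 p.1 * f p.2 ∂m₂ +
          ∫ e, A.indicator 1 (φ e).1 * f (φ e).2 * k e ∂m)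
    {g : S × ℝ → ℝ} (hg : Measurable g) {C : ℝ} (hgC : ∀ p, |g p| ≤ C) :
    ∫ p, g p ∂m₁ = ∫ p, g p ∂m₂ + ∫ e, g (φ e) * k e ∂m := by
  have := isFiniteMeasure_mapPosPart (φ := φ) hk
  have := isFiniteMeasure_mapPosPart (φ := φ) hk.neg
  have hint : ∀ (m : Measure (S × ℝ)) [IsFiniteMeasure m] {g : S × ℝ → ℝ} {C : ℝ},
      Measurable g → (∀ p, |g p| ≤ C) → Integrable g m := fun _ _ _ _ hg hgC =>
    .of_bound hg.aestronglyMeasurable _ (ae_of_all _ hgC)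
  have hmeas : m₁ + mapPosPart m φ (fun e => -k e) = m₂ + mapPosPart m φ k := by
    refine prod_measure_ext_of_integral_indicator_mul hs hcov fun i A hAs hA f => ?_
    have hAf := measurable_indicator_one_mul hA f
    have hb := abs_indicator_one_mul_le A f
    have hk' := integral_mul_eq_integral_mapPosPart_sub hφ hkm hk hAf hb
    rw [integral_add_measure (hint _ hAf hb) (hint _ hAf hb),
      integral_add_measure (hint _ hAf hb) (hint _ hAf hb), h i A hAs hA f]
    linarith
  have hg' := congrArg (fun m => ∫ p, g p ∂m) hmeas
  rw [integral_add_measure (hint _ hg hgC) (hint _ hg hgC),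
    integral_add_measure (hint _ hg hgC) (hint _ hg hgC)] at hg'
  linarith [integral_mul_eq_integral_mapPosPart_sub hφ hkm hk hg hgC]

end Uniqueness

/-! ### The parametrix expansion -/

lemma integrableOn_const_mul_sub_rpow {e t : ℝ} (he : -1 < e) (ht : 0 ≤ t) (c : ℝ) :
    IntegrableOn (fun r => c * (t - r) ^ e) (Ioc 0 t) := by
  have h := (intervalIntegral.intervalIntegrable_rpow' (a := 0) (b := t) he).comp_sub_left t
  rw [sub_zero, sub_self] at h
  exact ((intervalIntegrable_iff_integrableOn_Ioc_of_le ht).1 h.symm).const_mul c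

lemma abs_integral_mul_le_of_lintegral_enorm_le {E : Type*} [MeasurableSpace E] [Nonempty E]
    {m : Measure E} {g k : E → ℝ} {G C : ℝ} (hC : 0 ≤ C) (hg : ∀ e, |g e| ≤ G)
    (hk : ∫⁻ e, ‖k e‖ₑ ∂m ≤ ENNReal.ofReal C) : |∫ e, g e * k e ∂m| ≤ G * C := by
  have hG : 0 ≤ G := (abs_nonneg _).trans (hg (Classical.arbitrary E))
  have h : ‖∫ e, g e * k e ∂m‖ₑ ≤ ENNReal.ofReal (G * C) := calc
    _ ≤ ∫⁻ e, ‖g e * k e‖ₑ ∂m := enorm_integral_le_lintegral_enorm _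
    _ ≤ ∫⁻ e, ENNReal.ofReal G * ‖k e‖ₑ ∂m := by
        refine lintegral_mono fun e => ?_
        rw [enorm_mul, Real.enorm_eq_ofReal_abs (g e)]
        gcongr
        exact hg e
    _ ≤ ENNReal.ofReal (G * C) := by
        rw [lintegral_const_mul' _ _ ENNReal.ofReal_ne_top, ENNReal.ofReal_mul hG]
        gcongr
  rw [← ofReal_norm] at h
  exact (ENNReal.ofReal_le_ofReal_iff (by positivity)).1 h

lemma tendsto_setIntegral_Ioc_nhdsLT {E : Type*} [NormedAddCommGroup E] [NormedSpace ℝ E]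
    {f : ℝ → E} {a b : ℝ} (hab : a < b) (hf : IntegrableOn f (Ioc a b)) :
    Filter.Tendsto (fun s => ∫ r in Ioc a s, f r) (nhdsWithin b (Iio b))
      (nhds (∫ r in Ioc a b, f r)) := by
  have hf' := (integrableOn_Icc_iff_integrableOn_Ioc (by simp)).2 hf
  exact ((intervalIntegral.continuousOn_primitive hf') b ⟨hab.le, le_rfl⟩).tendsto.mono_left
    (nhdsWithin_le_iff.2 (Filter.mem_of_superset (Ioo_mem_nhdsLT hab) Ioo_subset_Icc_self))

section ParametrixExpansion

open scoped Topology BoundedContinuousFunction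

variable {Ω S : Type*} [MeasurableSpace Ω] [MeasurableSpace S] {μ : Measure Ω}
  {a : RandomDrift S} {pr : Ω → S} {Y W : ℝ → Ω → ℝ} {g : S × ℝ → ℝ} {ρ T G r t x v N : ℝ}
  {A : Set S}

/-- The action `g ↦ ∫ g(·, z) q(·, z) dz` of the parametrix kernel `q` on functions of the
environment and the position. -/
def RandomDrift.parametrixOperator (a : RandomDrift S) (ρ t r : ℝ) (g : S × ℝ → ℝ)
    (p : S × ℝ) : ℝ :=
  ∫ z, g (p.1, z) * a.parametrixKernel p.1 ρ t r p.2 z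

lemma RandomDrift.measurable_parametrixOperator (hg : Measurable g) :
    Measurable (a.parametrixOperator ρ t r g) := by
  have h : Measurable fun p : (S × ℝ) × ℝ =>
      g (p.1.1, p.2) * a.parametrixKernel p.1.1 ρ t r p.1.2 p.2 := by fun_prop
  exact h.stronglyMeasurable.integral_prod_right'.measurable

lemma RandomDrift.abs_parametrixOperator_le (hρ : ρ ≠ 0) (hr₀ : 0 ≤ r) (hr : r < t) (htT : t ≤ T)
    (hgG : ∀ p, |g p| ≤ G) (p : S × ℝ) :
    |a.parametrixOperator ρ t r g p| ≤
      G * (a.parametrixConst ρ T * (t - r) ^ (-(1 / 2) : ℝ)) :=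
  abs_integral_mul_le_of_lintegral_enorm_le
    (mul_nonneg a.parametrixConst_nonneg (Real.rpow_nonneg (sub_nonneg.2 hr.le) _))
    (fun z => hgG (p.1, z)) (a.lintegral_enorm_parametrixKernel_le p.1 hρ hr₀ hr htT p.2)

lemma IsDrivenSolution.measurable_parametrixKernel (hY : IsDrivenSolution μ a pr W ρ T x Y)
    (t : ℝ) :
    Measurable fun p : (Ω × ℝ) × ℝ =>
      a.parametrixKernel (pr p.1.1) ρ t p.1.2 (Y p.1.2 p.1.1) p.2 :=
  a.measurable_parametrixKernel_comp (hY.measurable_env.comp (by fun_prop)) (by fun_prop)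
    (hY.measurable_uncurry.comp measurable_fst) measurable_snd

lemma RandomDrift.tendsto_integral_mul_heatKernel_sub_flow (hρ : ρ ≠ 0) {y : ℝ → ℝ}
    (hy : Continuous y) (f : ℝ →ᵇ ℝ) (σ : S) :
    Filter.Tendsto (fun τ => ∫ z, f z * heatKernel (ρ ^ 2 * (t - τ)) (y τ - a.flow t σ z τ))
      (𝓝[<] t) (𝓝 (f (y t))) := by
  have hτ : ∀ᶠ τ in 𝓝[<] t, τ ∈ Ioo (t - 1) t := Ioo_mem_nhdsLT (sub_one_lt t)
  have hsqrt : Filter.Tendsto (fun τ => √(t - τ)) (𝓝[<] t) (𝓝 0) := by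
    have h : Continuous fun τ => √(t - τ) := by fun_prop
    simpa using (h.tendsto t).mono_left nhdsWithin_le_nhds
  have hflow : Filter.Tendsto (fun τ => a.flow t σ (y t) τ) (𝓝[<] t) (𝓝 (y t)) := by
    simpa only [RandomDrift.flow_self] using
      ((a.continuous_flow σ t (y t)).tendsto t).mono_left nhdsWithin_le_nhds
  have hlip : ∀ᶠ τ in 𝓝[<] t, ∀ z z',
      |(z - a.flow t σ z τ) - (z' - a.flow t σ z' τ)| ≤
        a.K * rexp a.K * √(t - τ) ^ 2 * |z - z'| := by
    filter_upwards [hτ] with τ hτ z z'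
    have htτ := sub_pos.2 hτ.2
    refine (a.abs_sub_flow_sub_sub_flow_le σ t z z' τ).trans ?_
    rw [Real.sq_sqrt htτ.le, abs_sub_comm τ t, abs_of_pos htτ]
    gcongr
    exact mul_le_of_le_one_right a.K.coe_nonneg (by linarith [hτ.1])
  refine (tendsto_integral_mul_heatKernel f (by positivity : 0 < ρ ^ 2) (by positivity)
    (hτ.mono fun τ hτ => Real.sqrt_pos.2 (sub_pos.2 hτ.2)) hsqrt
    ((hy.tendsto t).mono_left nhdsWithin_le_nhds) (fun τ => by fun_prop) hlip hflow).congr' ?_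
  filter_upwards [hτ] with τ hτ
  rw [Real.sq_sqrt (sub_pos.2 hτ.2).le]

lemma RandomDrift.abs_integral_mul_heatKernel_sub_flow_le (hv : 0 < v) {f : ℝ → ℝ} {C : ℝ}
    (hf : ∀ z, |f z| ≤ C) (σ : S) (y t s : ℝ) :
    |∫ z, f z * heatKernel v (y - a.flow t σ z s)| ≤ C * rexp (a.K * |t - s|) := by
  refine abs_integral_mul_le_of_lintegral_enorm_le (exp_pos _).le hf ?_
  simp only [Real.enorm_of_nonneg (heatKernel_nonneg _ _)]
  exact a.lintegral_heatKernel_sub_flow_le σ hv y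

variable [IsProbabilityMeasure μ]

lemma RandomDrift.integrable_heatKernel_sub_flow (hpr : Measurable pr) (hv : 0 < v) {X : Ω → ℝ}
    (hX : Measurable X) (t s : ℝ) :
    Integrable (fun p : Ω × ℝ => heatKernel v (X p.1 - a.flow t (pr p.1) p.2 s))
      (μ.prod volume) := by
  have hm : Measurable fun p : Ω × ℝ => heatKernel v (X p.1 - a.flow t (pr p.1) p.2 s) := by
    fun_prop
  refine ⟨hm.aestronglyMeasurable, ?_⟩
  rw [hasFiniteIntegral_iff_enorm, lintegral_prod _ hm.enorm.aemeasurable]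
  calc ∫⁻ ω, ∫⁻ z, ‖heatKernel v (X ω - a.flow t (pr ω) z s)‖ₑ ∂volume ∂μ
      ≤ ∫⁻ _, ENNReal.ofReal (rexp (a.K * |t - s|)) ∂μ := by
        refine lintegral_mono fun ω => ?_
        simp only [Real.enorm_of_nonneg (heatKernel_nonneg _ _)]
        exact a.lintegral_heatKernel_sub_flow_le (pr ω) hv (X ω)
    _ < ∞ := by simp

lemma RandomDrift.integrable_mul_heatKernel_sub_flow (hpr : Measurable pr) (hv : 0 < v) {X : Ω → ℝ}
    (hX : Measurable X) (hg : Measurable g) (hgG : ∀ p, |g p| ≤ G) (t s : ℝ) :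
    Integrable (fun p : Ω × ℝ => g (pr p.1, p.2) *
      heatKernel v (X p.1 - a.flow t (pr p.1) p.2 s)) (μ.prod volume) :=
  (a.integrable_heatKernel_sub_flow hpr hv hX t s).bdd_mul
    (hg.comp (by fun_prop)).aestronglyMeasurable (ae_of_all _ fun _ => hgG _)

namespace IsDrivenSolution

lemma integrable_parametrixKernel (hY : IsDrivenSolution μ a pr W ρ T x Y) (hρ : ρ ≠ 0)
    (ht : 0 ≤ t) (htT : t ≤ T) :
    Integrable (fun p : (Ω × ℝ) × ℝ =>
        a.parametrixKernel (pr p.1.1) ρ t p.1.2 (Y p.1.2 p.1.1) p.2)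
      ((μ.prod (volume.restrict (Ioc 0 t))).prod volume) := by
  have hm := hY.measurable_parametrixKernel t
  refine ⟨hm.aestronglyMeasurable, ?_⟩
  rw [hasFiniteIntegral_iff_enorm, lintegral_prod _ hm.enorm.aemeasurable,
    lintegral_prod_symm _ (hm.enorm.lintegral_prod_right').aemeasurable]
  have hpow : IntegrableOn (fun r => a.parametrixConst ρ T * (t - r) ^ (-(1 / 2) : ℝ)) (Ioc 0 t) :=
    integrableOn_const_mul_sub_rpow (by norm_num) ht _
  refine lt_of_le_of_lt (lintegral_mono_ae ?_) hpow.2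
  filter_upwards [ae_restrict_mem measurableSet_Ioc, Measure.ae_ne (volume.restrict _) t]
    with r hr hrt
  refine (lintegral_mono fun ω => a.lintegral_enorm_parametrixKernel_le (pr ω) hρ hr.1.le
    (hr.2.lt_of_ne hrt) htT (Y r ω)).trans ?_
  rw [lintegral_const, measure_univ, mul_one, Real.enorm_eq_ofReal_abs]
  exact ENNReal.ofReal_le_ofReal (le_abs_self _)

lemma integrable_mul_parametrixKernel (hY : IsDrivenSolution μ a pr W ρ T x Y) (hρ : ρ ≠ 0)
    (ht : 0 ≤ t) (htT : t ≤ T) (hg : Measurable g) (hgG : ∀ p, |g p| ≤ G) :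
    Integrable (fun p : (Ω × ℝ) × ℝ => g (pr p.1.1, p.2) *
        a.parametrixKernel (pr p.1.1) ρ t p.1.2 (Y p.1.2 p.1.1) p.2)
      ((μ.prod (volume.restrict (Ioc 0 t))).prod volume) := by
  have := hY.measurable_env
  exact (hY.integrable_parametrixKernel hρ ht htT).bdd_mul
    (hg.comp (by fun_prop)).aestronglyMeasurable (ae_of_all _ fun _ => hgG _)

lemma integrableOn_integral_parametrixOperator (hY : IsDrivenSolution μ a pr W ρ T x Y)
    (hρ : ρ ≠ 0) (ht : 0 ≤ t) (htT : t ≤ T) (hg : Measurable g) (hgG : ∀ p, |g p| ≤ G) :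
    IntegrableOn (fun r => ∫ ω, a.parametrixOperator ρ t r g (pr ω, Y r ω) ∂μ) (Ioc 0 t) :=
  (hY.integrable_mul_parametrixKernel hρ ht htT hg hgG).integral_prod_left.integral_prod_right

lemma integral_prod_mul_parametrixKernel (hY : IsDrivenSolution μ a pr W ρ T x Y)
    (hρ : ρ ≠ 0) (ht : 0 ≤ t) (htT : t ≤ T) (hg : Measurable g) (hgG : ∀ p, |g p| ≤ G) {τ : ℝ}
    (hτt : τ ≤ t) :
    ∫ p : (Ω × ℝ) × ℝ, g (pr p.1.1, p.2) *
          a.parametrixKernel (pr p.1.1) ρ t p.1.2 (Y p.1.2 p.1.1) p.2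
        ∂(μ.prod (volume.restrict (Ioc 0 τ))).prod volume =
      ∫ r in Ioc 0 τ, ∫ ω, a.parametrixOperator ρ t r g (pr ω, Y r ω) ∂μ := by
  have hI := (hY.integrable_mul_parametrixKernel hρ ht htT hg hgG).mono_measure
    (Measure.prod_mono (Measure.prod_mono le_rfl
      (Measure.restrict_mono (Ioc_subset_Ioc_right hτt) le_rfl)) le_rfl)
  rw [integral_prod _ hI, integral_prod_symm _ hI.integral_prod_left]
  rfl

lemma integral_indicator_mul_integral_mul_heatKernel_eq
    (hY : IsDrivenSolution μ a pr W ρ T x Y) (hW : IsFBM μ (1 / 2) W)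
    (hWc : ∀ ω, Continuous fun t => W t ω) (hρ : ρ ≠ 0) {τ : ℝ} (hτ : 0 < τ) (hτt : τ < t)
    (htT : t ≤ T) (hA : MeasurableSet A) (hAN : ∀ σ ∈ A, |a.flow t σ 0 0| ≤ N) (f : ℝ →ᵇ ℝ) :
    ∫ ω, (A.indicator 1 (pr ω) *
        ∫ z, f z * heatKernel (ρ ^ 2 * (t - τ)) (Y τ ω - a.flow t (pr ω) z τ)) ∂μ =
      ∫ p : Ω × ℝ, A.indicator 1 (pr p.1) * f p.2 *
          heatKernel (ρ ^ 2 * t) (x - a.flow t (pr p.1) p.2 0) ∂μ.prod volume +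
      ∫ r in Ioc 0 τ, ∫ ω, a.parametrixOperator ρ t r
        (fun p => A.indicator 1 p.1 * f p.2) (pr ω, Y r ω) ∂μ := by
  have ht : 0 < t := hτ.trans hτt
  have hgm := measurable_indicator_one_mul hA f
  have hgb := abs_indicator_one_mul_le A f
  have hI₁ := a.integrable_mul_heatKernel_sub_flow (μ := μ) hY.measurable_env
    (mul_pos (by positivity) (sub_pos.2 hτt) : 0 < ρ ^ 2 * (t - τ)) (hY.measurable τ) hgm hgb t τ
  have hI₂ := a.integrable_mul_heatKernel_sub_flow (μ := μ) hY.measurable_env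
    (by positivity : 0 < ρ ^ 2 * t) (measurable_const (a := x)) hgm hgb t 0
  have hI₃ := (hY.integrable_mul_parametrixKernel hρ ht.le htT hgm hgb).mono_measure
    (Measure.prod_mono (Measure.prod_mono le_rfl
      (Measure.restrict_mono (Ioc_subset_Ioc_right hτt.le) le_rfl)) le_rfl)
  have hflow : ∀ z, ∀ σ ∈ A, |a.flow t σ z 0| ≤ N + |z| * rexp (a.K * |0 - t|) := by
    intro z σ hσ
    have h := a.abs_flow_sub_flow_le σ t z 0 0
    rw [sub_zero] at h
    linarith [abs_sub_abs_le_abs_sub (a.flow t σ z 0) (a.flow t σ 0 0), hAN σ hσ]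
  have hz : ∀ z, ∫ ω, A.indicator 1 (pr ω) * f z *
        heatKernel (ρ ^ 2 * (t - τ)) (Y τ ω - a.flow t (pr ω) z τ) ∂μ =
      ∫ ω, A.indicator 1 (pr ω) * f z * heatKernel (ρ ^ 2 * t) (x - a.flow t (pr ω) z 0) ∂μ +
      ∫ p : Ω × ℝ, A.indicator 1 (pr p.1) * f z *
        a.parametrixKernel (pr p.1) ρ t p.2 (Y p.2 p.1) z ∂μ.prod (volume.restrict (Ioc 0 τ)) := by
    intro z
    simp only [mul_right_comm _ (f z), integral_mul_const, ← add_mul]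
    rw [hY.integral_indicator_mul_heatKernel_eq hW hWc hρ hτ hτt htT hA (hflow z)]
  rw [← hY.integral_prod_mul_parametrixKernel hρ ht.le htT hgm hgb hτt.le,
    integral_prod_symm _ hI₂, integral_prod_symm _ hI₃,
    ← integral_add hI₂.integral_prod_right hI₃.integral_prod_right, ← funext hz]
  simp only [← integral_const_mul, ← mul_assoc]
  exact integral_integral_swap (f := fun ω z => A.indicator 1 (pr ω) * f z *
    heatKernel (ρ ^ 2 * (t - τ)) (Y τ ω - a.flow t (pr ω) z τ)) hI₁

lemma tendsto_integral_indicator_mul_integral_mul_heatKernel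
    (hY : IsDrivenSolution μ a pr W ρ T x Y) (hρ : ρ ≠ 0) (ht : 0 < t) (hA : MeasurableSet A)
    (f : ℝ →ᵇ ℝ) :
    Filter.Tendsto (fun τ => ∫ ω, (A.indicator 1 (pr ω) *
        ∫ z, f z * heatKernel (ρ ^ 2 * (t - τ)) (Y τ ω - a.flow t (pr ω) z τ)) ∂μ) (𝓝[<] t)
      (𝓝 (∫ ω, A.indicator 1 (pr ω) * f (Y t ω) ∂μ)) := by
  have hpr := hY.measurable_env
  have hf := f.continuous.measurable
  have hind : Measurable fun ω => A.indicator (1 : S → ℝ) (pr ω) :=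
    (measurable_one.indicator hA).comp hpr
  have hτ : ∀ᶠ τ in 𝓝[<] t, τ ∈ Ioo 0 t := Ioo_mem_nhdsLT ht
  refine tendsto_integral_filter_of_dominated_convergence
    (fun _ => ‖f‖ * rexp (a.K * t)) ?_ ?_ (integrable_const _) (ae_of_all _ fun ω => ?_)
  · refine .of_forall fun τ => (hind.mul ?_).aestronglyMeasurable
    have := hY.measurable τ
    have hm : Measurable fun p : Ω × ℝ => f p.2 *
      heatKernel (ρ ^ 2 * (t - τ)) (Y τ p.1 - a.flow t (pr p.1) p.2 τ) := by fun_prop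
    exact hm.stronglyMeasurable.integral_prod_right'.measurable
  · filter_upwards [hτ] with τ hτ
    refine ae_of_all _ fun ω => ?_
    have hv : 0 < ρ ^ 2 * (t - τ) := mul_pos (by positivity) (sub_pos.2 hτ.2)
    have hle : |∫ z, f z * heatKernel (ρ ^ 2 * (t - τ)) (Y τ ω - a.flow t (pr ω) z τ)| ≤
        ‖f‖ * rexp (a.K * t) := by
      refine (a.abs_integral_mul_heatKernel_sub_flow_le hv f.norm_coe_le_norm _ _ t τ).trans ?_
      rw [abs_of_pos (sub_pos.2 hτ.2)]
      gcongr
      linarith [hτ.1]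
    by_cases h : pr ω ∈ A
    · simpa [h] using hle
    · simp only [h, not_false_eq_true, indicator_of_notMem, zero_mul, norm_zero]
      positivity
  · exact .const_mul _ <|
      RandomDrift.tendsto_integral_mul_heatKernel_sub_flow hρ (hY.continuous ω) f (pr ω)

lemma integral_indicator_mul_eq (hY : IsDrivenSolution μ a pr W ρ T x Y) (hW : IsFBM μ (1 / 2) W)
    (hWc : ∀ ω, Continuous fun t => W t ω) (hρ : ρ ≠ 0) (ht : 0 < t) (htT : t ≤ T)
    (hA : MeasurableSet A) (hAN : ∀ σ ∈ A, |a.flow t σ 0 0| ≤ N) (f : ℝ →ᵇ ℝ) :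
    ∫ ω, A.indicator 1 (pr ω) * f (Y t ω) ∂μ =
      ∫ p : Ω × ℝ, A.indicator 1 (pr p.1) * f p.2 *
          heatKernel (ρ ^ 2 * t) (x - a.flow t (pr p.1) p.2 0) ∂μ.prod volume +
      ∫ r in Ioc 0 t, ∫ ω, a.parametrixOperator ρ t r
        (fun p => A.indicator 1 p.1 * f p.2) (pr ω, Y r ω) ∂μ := by
  have hint := hY.integrableOn_integral_parametrixOperator hρ ht.le htT
    (measurable_indicator_one_mul hA f) (abs_indicator_one_mul_le A f)
  refine tendsto_nhds_unique
    (hY.tendsto_integral_indicator_mul_integral_mul_heatKernel hρ ht hA f)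
    (((tendsto_setIntegral_Ioc_nhdsLT ht hint).const_add _).congr' ?_)
  filter_upwards [Ioo_mem_nhdsLT ht] with τ hτ
  exact (hY.integral_indicator_mul_integral_mul_heatKernel_eq hW hWc hρ hτ.1 hτ.2 htT hA hAN
    f).symm

theorem integral_eq_add_integral_parametrixOperator (hY : IsDrivenSolution μ a pr W ρ T x Y)
    (hW : IsFBM μ (1 / 2) W) (hWc : ∀ ω, Continuous fun t => W t ω) (hρ : ρ ≠ 0) (ht : 0 < t)
    (htT : t ≤ T) (hg : Measurable g) (hgG : ∀ p, |g p| ≤ G) :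
    ∫ ω, g (pr ω, Y t ω) ∂μ =
      ∫ p : Ω × ℝ, g (pr p.1, p.2) * heatKernel (ρ ^ 2 * t) (x - a.flow t (pr p.1) p.2 0)
        ∂μ.prod volume +
      ∫ r in Ioc 0 t, ∫ ω, a.parametrixOperator ρ t r g (pr ω, Y r ω) ∂μ := by
  have hpr := hY.measurable_env
  have hprY := hpr.prodMk (hY.measurable t)
  have hv : 0 < ρ ^ 2 * t := by positivity
  set k : Ω × ℝ → ℝ := fun p => heatKernel (ρ ^ 2 * t) (x - a.flow t (pr p.1) p.2 0)
  have hkm : Measurable k := by fun_prop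
  have := isFiniteMeasure_mapPosPart (φ := fun p : Ω × ℝ => (pr p.1, p.2))
    (a.integrable_heatKernel_sub_flow (μ := μ) hpr hv (measurable_const (a := x)) t 0)
  have hm₂ : ∀ {g : S × ℝ → ℝ}, Measurable g →
      ∫ p, g p ∂mapPosPart (μ.prod volume) (fun p : Ω × ℝ => (pr p.1, p.2)) k =
        ∫ p : Ω × ℝ, g (pr p.1, p.2) * k p ∂μ.prod volume := fun hg => by
    have hk : ∀ p, max (k p) 0 = k p := fun p => max_eq_left (heatKernel_nonneg _ _)
    simp only [integral_mapPosPart (φ := fun p : Ω × ℝ => (pr p.1, p.2)) (by fun_prop) hkm hg, hk]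
  have hflow : Measurable fun σ => |a.flow t σ 0 0| := by
    have : Measurable fun σ => a.flow t σ 0 0 := by fun_prop
    exact this.abs
  have hsum := integral_eq_add_integral_mul_of_forall_indicator
    (m₁ := μ.map fun ω => (pr ω, Y t ω))
    (m₂ := mapPosPart (μ.prod volume) (fun p : Ω × ℝ => (pr p.1, p.2)) k)
    (φ := fun p : (Ω × ℝ) × ℝ => (pr p.1.1, p.2)) (by fun_prop)
    (hY.measurable_parametrixKernel t) (hY.integrable_parametrixKernel hρ ht.le htT)
    (s := fun N : ℕ => {σ | |a.flow t σ 0 0| ≤ N}) (fun N => measurableSet_le hflow (by fun_prop))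
    (eq_univ_of_forall fun σ => mem_iUnion.2 (exists_nat_ge |a.flow t σ 0 0|)) ?_ hg hgG
  · rw [← hY.integral_prod_mul_parametrixKernel hρ ht.le htT hg hgG le_rfl, ← hm₂ hg, ← hsum,
      integral_map hprY.aemeasurable hg.aestronglyMeasurable]
  · intro N A hAN hA f
    have hgm := measurable_indicator_one_mul hA f
    rw [integral_map hprY.aemeasurable hgm.aestronglyMeasurable, hm₂ hgm,
      hY.integral_indicator_mul_eq hW hWc hρ ht htT hA hAN f,
      hY.integral_prod_mul_parametrixKernel hρ ht.le htT hgm (abs_indicator_one_mul_le A f) le_rfl]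

end IsDrivenSolution
end ParametrixExpansion

/-! ### Differentiability from difference quotients -/

section SlopeDiff

open scoped Topology

lemma slopeDiff_const_mul (c : ℝ) (F : ℝ → ℝ) (x h k : ℝ) :
    slopeDiff (fun s => c * F s) x h k = c * slopeDiff F x h k := by
  unfold slopeDiff; ring

lemma slopeDiff_add (F F' : ℝ → ℝ) (x h k : ℝ) :
    slopeDiff (fun s => F s + F' s) x h k = slopeDiff F x h k + slopeDiff F' x h k := by
  unfold slopeDiff; ring

lemma slopeDiff_integral {E : Type*} [MeasurableSpace E] {m : Measure E} {F : ℝ → E → ℝ}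
    (hF : ∀ s, Integrable (F s) m) (x h k : ℝ) :
    slopeDiff (fun s => ∫ e, F s e ∂m) x h k = ∫ e, slopeDiff (fun s => F s e) x h k ∂m := by
  have hslope : ∀ h, Integrable (fun e => (F (x + h) e - F x e) / h) m := fun h =>
    ((hF _).sub (hF _)).div_const h
  simp only [slopeDiff, integral_sub (hslope h) (hslope k), integral_div,
    integral_sub (hF _) (hF _)]

lemma abs_slopeDiff_le {F : ℝ → ℝ} {C : ℝ} (hF : ∀ s, |F s| ≤ C) (x h k : ℝ) :
    |slopeDiff F x h k| ≤ C * (2 / |h| + 2 / |k|) := by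
  have hslope : ∀ h, |(F (x + h) - F x) / h| ≤ C * (2 / |h|) := fun h => calc
    _ = |F (x + h) - F x| / |h| := abs_div _ _
    _ ≤ (C + C) / |h| := by
        gcongr
        exact (abs_sub _ _).trans (add_le_add (hF _) (hF _))
    _ = C * (2 / |h|) := by ring
  rw [mul_add]
  exact (abs_sub _ _).trans (add_le_add (hslope h) (hslope k))

/-- The slopes `(u (x + h) - u x) / h` are Cauchy as `h → 0`, uniformly in `x`, so their limit
`u'` is continuous along with them. -/
lemma contDiff_one_of_abs_slopeDiff_le {u ω : ℝ → ℝ} (hω : Filter.Tendsto ω (𝓝 0) (𝓝 0))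
    (hu : ∀ x h k, h ≠ 0 → k ≠ 0 → |slopeDiff u x h k| ≤ ω (|h| + |k|)) : ContDiff ℝ 1 u := by
  have hcauchy : UniformCauchySeqOn (fun h x => (u (x + h) - u x) / h) (𝓝[≠] 0) univ := by
    intro U hU
    obtain ⟨ε, hε, hεU⟩ := Metric.mem_uniformity_dist.1 hU
    have hsum : Filter.Tendsto (fun m : ℝ × ℝ => |m.1| + |m.2|) (𝓝[≠] 0 ×ˢ 𝓝[≠] 0) (𝓝 0) := by
      have : Continuous fun m : ℝ × ℝ => |m.1| + |m.2| := by fun_prop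
      refine Filter.Tendsto.mono_left ?_
        ((Filter.prod_mono nhdsWithin_le_nhds nhdsWithin_le_nhds).trans_eq nhds_prod_eq.symm)
      exact this.tendsto' (0, 0) 0 (by simp)
    filter_upwards [(hω.comp hsum).eventually (gt_mem_nhds hε),
      Filter.prod_mem_prod self_mem_nhdsWithin self_mem_nhdsWithin] with m hm ⟨hh, hk⟩ x _
    exact hεU ((hu x _ _ hh hk).trans_lt hm)
  have hslope : ∀ x, Filter.Tendsto (fun h => (u (x + h) - u x) / h) (𝓝[≠] 0) (𝓝 (deriv u x)) ∧
      DifferentiableAt ℝ u x := by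
    intro x
    obtain ⟨d, hd⟩ := cauchy_map_iff_exists_tendsto.1 (hcauchy.cauchy_map (mem_univ x))
    have hderiv : HasDerivAt u d x := hasDerivAt_iff_tendsto_slope_zero.2
      (hd.congr fun h => by rw [smul_eq_mul, div_eq_inv_mul])
    exact ⟨hderiv.deriv.symm ▸ hd, hderiv.differentiableAt⟩
  have hdiff : Differentiable ℝ u := fun x => (hslope x).2
  have hunif := hcauchy.tendstoUniformlyOn_of_tendsto fun x _ => (hslope x).1
  have hcont := hdiff.continuous
  exact contDiff_one_iff_deriv.2 ⟨hdiff, (tendstoUniformlyOn_univ.1 hunif).continuous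
    (Filter.Eventually.frequently (.of_forall fun h => by fun_prop))⟩

end SlopeDiff

/-! ### A Grönwall estimate with a weakly singular kernel -/

section SingularKernel

variable {a b c t : ℝ}

lemma integrableOn_sub_rpow (ha : -1 < a) (ht : 0 ≤ t) :
    IntegrableOn (fun r => (t - r) ^ a) (Ioc 0 t) := by
  simpa using integrableOn_const_mul_sub_rpow ha ht 1

lemma integrableOn_rpow (ha : -1 < a) (ht : 0 ≤ t) : IntegrableOn (fun r => r ^ a) (Ioc 0 t) :=
  (intervalIntegrable_iff_integrableOn_Ioc_of_le ht).1
    (intervalIntegral.intervalIntegrable_rpow' ha)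

lemma setIntegral_rpow (ha : -1 < a) (ht : 0 ≤ t) :
    ∫ r in Ioc 0 t, r ^ a = t ^ (a + 1) / (a + 1) := by
  rw [← intervalIntegral.integral_of_le ht, integral_rpow (.inl ha),
    Real.zero_rpow (by linarith), sub_zero]

lemma setIntegral_sub_rpow (ha : -1 < a) (ht : 0 ≤ t) :
    ∫ r in Ioc 0 t, (t - r) ^ a = t ^ (a + 1) / (a + 1) := by
  rw [← setIntegral_rpow ha ht, ← intervalIntegral.integral_of_le ht,
    ← intervalIntegral.integral_of_le ht,
    intervalIntegral.integral_comp_sub_left (fun r => r ^ a), sub_self, sub_zero]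

lemma sub_rpow_mul_rpow_le {r : ℝ} (ha : a ≤ 0) (hb : b ≤ 0) (hr : 0 < r) (hrt : r < t) :
    (t - r) ^ a * r ^ b ≤ (t / 2) ^ a * r ^ b + (t / 2) ^ b * (t - r) ^ a := by
  have ht := hr.trans hrt
  have := sub_pos.2 hrt
  rcases le_total r (t / 2) with h | h
  · have : (t - r) ^ a ≤ (t / 2) ^ a :=
      Real.rpow_le_rpow_of_nonpos (by positivity) (by linarith) ha
    exact le_add_of_le_of_nonneg (by gcongr) (by positivity)
  · have : r ^ b ≤ (t / 2) ^ b := Real.rpow_le_rpow_of_nonpos (by positivity) h hb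
    rw [mul_comm ((t - r) ^ a)]
    exact le_add_of_nonneg_of_le (by positivity) (by gcongr)

lemma integrableOn_sub_rpow_mul_rpow (ha : -1 < a) (ha₀ : a ≤ 0) (hb : -1 < b) (hb₀ : b ≤ 0)
    (ht : 0 ≤ t) : IntegrableOn (fun r => (t - r) ^ a * r ^ b) (Ioc 0 t) := by
  refine (((integrableOn_rpow hb ht).const_mul ((t / 2) ^ a)).add
    ((integrableOn_sub_rpow ha ht).const_mul ((t / 2) ^ b))).mono'
      (by fun_prop : Measurable fun r => (t - r) ^ a * r ^ b).aestronglyMeasurable ?_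
  filter_upwards [ae_restrict_mem measurableSet_Ioc, Measure.ae_ne (volume.restrict _) t]
    with r hr hrt
  have := Real.rpow_nonneg (sub_nonneg.2 hr.2) a
  have := Real.rpow_nonneg hr.1.le b
  rw [Real.norm_of_nonneg (by positivity)]
  exact sub_rpow_mul_rpow_le ha₀ hb₀ hr.1 (hr.2.lt_of_ne hrt)

lemma setIntegral_sub_rpow_mul_rpow_le (ha : -1 < a) (ha₀ : a ≤ 0) (hb : -1 < b) (hb₀ : b ≤ 0)
    (ht : 0 < t) :
    ∫ r in Ioc 0 t, (t - r) ^ a * r ^ b ≤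
      (2 ^ (-a) / (b + 1) + 2 ^ (-b) / (a + 1)) * t ^ (a + b + 1) := by
  have hI₁ := (integrableOn_rpow hb ht.le).const_mul ((t / 2) ^ a)
  have hI₂ := (integrableOn_sub_rpow ha ht.le).const_mul ((t / 2) ^ b)
  have hhalf : ∀ e : ℝ, (t / 2) ^ e = 2 ^ (-e) * t ^ e := fun e => by
    rw [Real.div_rpow ht.le zero_le_two, Real.rpow_neg zero_le_two, div_eq_inv_mul]
  calc ∫ r in Ioc 0 t, (t - r) ^ a * r ^ b
      ≤ ∫ r in Ioc 0 t, ((t / 2) ^ a * r ^ b + (t / 2) ^ b * (t - r) ^ a) := by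
        refine integral_mono_ae (integrableOn_sub_rpow_mul_rpow ha ha₀ hb hb₀ ht.le)
          (hI₁.add hI₂) ?_
        filter_upwards [ae_restrict_mem measurableSet_Ioc, Measure.ae_ne (volume.restrict _) t]
          with r hr hrt using sub_rpow_mul_rpow_le ha₀ hb₀ hr.1 (hr.2.lt_of_ne hrt)
    _ = (t / 2) ^ a * (t ^ (b + 1) / (b + 1)) + (t / 2) ^ b * (t ^ (a + 1) / (a + 1)) := by
        rw [integral_add hI₁ hI₂, integral_const_mul, integral_const_mul,
          setIntegral_rpow hb ht.le, setIntegral_sub_rpow ha ht.le]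
    _ = (2 ^ (-a) / (b + 1) + 2 ^ (-b) / (a + 1)) * t ^ (a + b + 1) := by
        simp only [hhalf, Real.rpow_add ht, Real.rpow_one]
        ring

lemma exp_neg_le_rpow_neg {ε y : ℝ} (hε : 0 ≤ ε) (hε₁ : ε ≤ 1) (hy : 0 < y) :
    rexp (-y) ≤ y ^ (-ε) := by
  have hlog := Real.log_le_sub_one_of_pos hy
  rw [Real.rpow_def_of_pos hy, exp_le_exp]
  nlinarith

lemma integrableOn_sub_rpow_mul_rpow_mul_exp (ha : -1 < a) (ha₀ : a ≤ 0) (hb : -1 < b)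
    (hb₀ : b ≤ 0) (ht : 0 ≤ t) (c l : ℝ) :
    IntegrableOn (fun r => c * (t - r) ^ a * (r ^ b * rexp (l * r))) (Ioc 0 t) := by
  have hexp : ∀ᵐ r ∂volume.restrict (Ioc 0 t), ‖rexp (l * r)‖ ≤ rexp (|l| * t) := by
    filter_upwards [ae_restrict_mem measurableSet_Ioc] with r hr
    rw [Real.norm_of_nonneg (exp_pos _).le, exp_le_exp]
    exact mul_le_mul (le_abs_self l) hr.2 hr.1.le (abs_nonneg l)
  have hI := ((integrableOn_sub_rpow_mul_rpow ha ha₀ hb hb₀ ht).mul_bdd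
    (by fun_prop : Measurable fun r => rexp (l * r)).aestronglyMeasurable hexp).const_mul c
  exact hI.congr (ae_of_all _ fun r => by ring)

lemma sub_rpow_mul_exp_le {ε l r : ℝ} (hε : 0 ≤ ε) (hε₁ : ε ≤ 1) (hl : 0 < l) (hrt : r < t) :
    (t - r) ^ a * rexp (l * r) ≤ l ^ (-ε) * rexp (l * t) * (t - r) ^ (a - ε) := by
  have htr := sub_pos.2 hrt
  calc (t - r) ^ a * rexp (l * r)
      = (t - r) ^ a * (rexp (l * t) * rexp (-(l * (t - r)))) := by
        rw [← exp_add]; ring_nf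
    _ ≤ (t - r) ^ a * (rexp (l * t) * (l * (t - r)) ^ (-ε)) := by
        gcongr
        exact exp_neg_le_rpow_neg hε hε₁ (by positivity)
    _ = l ^ (-ε) * rexp (l * t) * (t - r) ^ (a - ε) := by
        rw [Real.mul_rpow hl.le htr.le, sub_eq_add_neg a, Real.rpow_add htr]; ring

lemma exists_mul_rpow_neg_le_half {ε : ℝ} (hε : 0 < ε) (c : ℝ) :
    ∃ l, 0 < l ∧ c * l ^ (-ε) ≤ 1 / 2 := by
  have hlim := (tendsto_rpow_neg_atTop hε).const_mul c
  rw [mul_zero] at hlim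
  exact ((Filter.eventually_gt_atTop 0).and
    (hlim.eventually (Iic_mem_nhds one_half_pos))).exists

/-- The exponential weight turns the singular kernel `c (t - r) ^ a` into a contraction. -/
lemma exists_setIntegral_sub_rpow_mul_rpow_mul_exp_le {T : ℝ} (ha : -1 < a) (ha₀ : a ≤ 0)
    (hb : -1 < b) (hb₀ : b ≤ 0) (hc : 0 ≤ c) :
    ∃ l, 0 ≤ l ∧ ∀ t ∈ Ioc 0 T,
      ∫ r in Ioc 0 t, c * (t - r) ^ a * (r ^ b * rexp (l * r)) ≤
        1 / 2 * (t ^ b * rexp (l * t)) := by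
  set ε := (a + 1) / 2 with hε
  set C := 2 ^ (-(a - ε)) / (b + 1) + 2 ^ (-b) / (a - ε + 1)
  have hC : 0 ≤ C := by
    have : 0 < b + 1 := by linarith
    have : 0 < a - ε + 1 := by linarith
    positivity
  obtain ⟨l, hl₀, hl⟩ :=
    exists_mul_rpow_neg_le_half (by linarith : 0 < ε) (c * (C * T ^ (a - ε + 1)))
  refine ⟨l, hl₀.le, fun t ⟨ht, htT⟩ => ?_⟩
  have hkernel : ∀ r, 0 < r → r < t → c * (t - r) ^ a * (r ^ b * rexp (l * r)) ≤
      c * l ^ (-ε) * rexp (l * t) * ((t - r) ^ (a - ε) * r ^ b) := by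
    intro r hr hrt
    have h := sub_rpow_mul_exp_le (a := a) (ε := ε) (by linarith) (by linarith) hl₀ hrt
    calc c * (t - r) ^ a * (r ^ b * rexp (l * r))
        = c * r ^ b * ((t - r) ^ a * rexp (l * r)) := by ring
      _ ≤ c * r ^ b * (l ^ (-ε) * rexp (l * t) * (t - r) ^ (a - ε)) := by gcongr
      _ = _ := by ring
  have hpow : t ^ (a - ε + b + 1) ≤ T ^ (a - ε + 1) * t ^ b := by
    rw [add_right_comm, Real.rpow_add ht]
    gcongr
    linarith
  calc ∫ r in Ioc 0 t, c * (t - r) ^ a * (r ^ b * rexp (l * r))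
      ≤ ∫ r in Ioc 0 t, c * l ^ (-ε) * rexp (l * t) * ((t - r) ^ (a - ε) * r ^ b) := by
        refine integral_mono_ae
          (integrableOn_sub_rpow_mul_rpow_mul_exp ha ha₀ hb hb₀ ht.le c l)
          ((integrableOn_sub_rpow_mul_rpow (by linarith) (by linarith) hb hb₀ ht.le).const_mul _) ?_
        filter_upwards [ae_restrict_mem measurableSet_Ioc, Measure.ae_ne (volume.restrict _) t]
          with r hr hrt using hkernel r hr.1 (hr.2.lt_of_ne hrt)
    _ ≤ c * l ^ (-ε) * rexp (l * t) * (C * (T ^ (a - ε + 1) * t ^ b)) := by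
        rw [integral_const_mul]
        gcongr
        refine (setIntegral_sub_rpow_mul_rpow_le (by linarith) (by linarith) hb hb₀ ht).trans ?_
        gcongr
    _ = c * (C * T ^ (a - ε + 1)) * l ^ (-ε) * (t ^ b * rexp (l * t)) := by ring
    _ ≤ 1 / 2 * (t ^ b * rexp (l * t)) := by gcongr

lemma of_forall_imp_add_half {p : ℝ → Prop} {S₀ P : ℝ} (hp : IsClosed {S | p S}) (hP : 0 ≤ P)
    (hS₀ : 0 ≤ S₀) (h₀ : p S₀) (hstep : ∀ S, 0 ≤ S → p S → p (P + S / 2)) : p (2 * P) := by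
  have hlim : Filter.Tendsto (fun n : ℕ => 2 * P + (S₀ - 2 * P) * (1 / 2) ^ n) Filter.atTop
      (nhds (2 * P)) := by
    simpa using ((tendsto_pow_atTop_nhds_zero_of_lt_one (r := (1 / 2 : ℝ)) (by norm_num)
      (by norm_num)).const_mul (S₀ - 2 * P)).const_add (2 * P)
  have hmem : ∀ n : ℕ, 0 ≤ 2 * P + (S₀ - 2 * P) * (1 / 2) ^ n ∧
      p (2 * P + (S₀ - 2 * P) * (1 / 2) ^ n) := by
    intro n
    induction n with
    | zero => simpa using And.intro hS₀ h₀
    | succ n ih =>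
      rw [show 2 * P + (S₀ - 2 * P) * (1 / 2) ^ (n + 1) =
        P + (2 * P + (S₀ - 2 * P) * (1 / 2) ^ n) / 2 by ring]
      exact ⟨by linarith [ih.1], hstep _ ih.1 ih.2⟩
  exact hp.mem_of_tendsto hlim (.of_forall fun n => (hmem n).2)

end SingularKernel

/-! ### Regularity of the expectation in the initial value -/

section Regularity

variable {Ω S : Type*} [MeasurableSpace Ω] [MeasurableSpace S] {μ : Measure Ω}
  {a : RandomDrift S} {pr : Ω → S} {X : ℝ → ℝ → Ω → ℝ} {W : ℝ → Ω → ℝ}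
  {g : S × ℝ → ℝ} {ρ T G t l x h k : ℝ}

/-- The bound `C t ^ (-3/4) e ^ (l t) sup |g|` for the difference of the slopes over `[x, x + h]`
and `[x, x + k]` of `s ↦ E[g(pr, X^s_t)]`, for all `t ≤ T` and all bounded measurable `g`. -/
def HasSlopeBound (μ : Measure Ω) (pr : Ω → S) (X : ℝ → ℝ → Ω → ℝ) (T l x h k C : ℝ) : Prop :=
  ∀ t ∈ Ioc 0 T, ∀ (g : S × ℝ → ℝ) (G : ℝ), Measurable g → (∀ p, |g p| ≤ G) →
    |slopeDiff (fun s => ∫ ω, g (pr ω, X s t ω) ∂μ) x h k| ≤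
      G * (C * (t ^ (-(3 / 4) : ℝ) * rexp (l * t)))

lemma isClosed_setOf_hasSlopeBound : IsClosed {C | HasSlopeBound μ pr X T l x h k C} := by
  simp only [HasSlopeBound, Set.ofPred_forall]
  refine isClosed_biInter fun t _ => isClosed_iInter fun g => isClosed_iInter fun G =>
    isClosed_iInter fun _ => isClosed_iInter fun _ => isClosed_le ?_ ?_ <;> fun_prop

variable [IsProbabilityMeasure μ]

lemma hasSlopeBound_of_pos (hT : 0 < T) (hl : 0 ≤ l) :
    HasSlopeBound μ pr X T l x h k ((2 / |h| + 2 / |k|) * T ^ (3 / 4 : ℝ)) := by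
  rintro t ⟨ht, htT⟩ g G - hgG
  have := nonempty_of_isProbabilityMeasure μ
  have hG : 0 ≤ G := (abs_nonneg _).trans (hgG (pr (Classical.arbitrary Ω), 0))
  have hbound : ∀ s, |∫ ω, g (pr ω, X s t ω) ∂μ| ≤ G := fun s => by
    simpa using norm_integral_le_of_norm_le_const (μ := μ) (C := G)
      (f := fun ω => g (pr ω, X s t ω)) (ae_of_all _ fun ω => hgG _)
  have hpow : 1 ≤ T ^ (3 / 4 : ℝ) * t ^ (-(3 / 4) : ℝ) := calc
    1 = t ^ (3 / 4 : ℝ) * t ^ (-(3 / 4) : ℝ) := by rw [← Real.rpow_add ht]; norm_num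
    _ ≤ _ := by gcongr
  have hexp : 1 ≤ rexp (l * t) := Real.one_le_exp (by positivity)
  calc _ ≤ G * (2 / |h| + 2 / |k|) * 1 * 1 := by
        simpa only [mul_one] using abs_slopeDiff_le hbound x h k
    _ ≤ G * (2 / |h| + 2 / |k|) * (T ^ (3 / 4 : ℝ) * t ^ (-(3 / 4) : ℝ)) * rexp (l * t) := by
        gcongr
    _ = _ := by ring

lemma RandomDrift.abs_slopeDiff_integral_mul_heatKernel_le (a : RandomDrift S)
    (hpr : Measurable pr) (hρ : ρ ≠ 0) (ht : 0 < t) (htT : t ≤ T) (hg : Measurable g)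
    (hgG : ∀ p, |g p| ≤ G) (hh : h ≠ 0) (hk : k ≠ 0) (x : ℝ) :
    |slopeDiff (fun s => ∫ p : Ω × ℝ, g (pr p.1, p.2) *
        heatKernel (ρ ^ 2 * t) (s - a.flow t (pr p.1) p.2 0) ∂μ.prod volume) x h k| ≤
      G * (rexp (a.K * T) * (6 * √(|h| + |k|) * (ρ ^ 2) ^ (-(3 / 4) : ℝ)) *
        t ^ (-(3 / 4) : ℝ)) := by
  have hv : 0 < ρ ^ 2 * t := by positivity
  have := nonempty_of_isProbabilityMeasure μ
  rw [slopeDiff_integral fun s => a.integrable_mul_heatKernel_sub_flow (μ := μ) hpr hv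
    (measurable_const (a := s)) hg hgG t 0]
  simp only [slopeDiff_const_mul]
  refine abs_integral_mul_le_of_lintegral_enorm_le (by positivity) (fun p => hgG (pr p.1, p.2)) ?_
  set F : ℝ → ℝ := fun w => slopeDiff (fun s => heatKernel (ρ ^ 2 * t) (s - w)) x h k
  have hFm : Measurable F := by unfold F slopeDiff; fun_prop
  calc ∫⁻ p : Ω × ℝ, ‖F (a.flow t (pr p.1) p.2 0)‖ₑ ∂μ.prod volume
      = ∫⁻ ω, ∫⁻ z, ‖F (a.flow t (pr ω) z 0)‖ₑ ∂volume ∂μ :=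
        lintegral_prod _ (by fun_prop)
    _ ≤ ∫⁻ _, ENNReal.ofReal (rexp (a.K * T) * (6 * √(|h| + |k|) * (ρ ^ 2) ^ (-(3 / 4) : ℝ)) *
        t ^ (-(3 / 4) : ℝ)) ∂μ := by
        refine lintegral_mono fun ω => ?_
        refine (a.lintegral_comp_flow_le (pr ω) t 0 hFm.enorm).trans ?_
        rw [sub_zero, abs_of_pos ht, mul_assoc, ENNReal.ofReal_mul (exp_pos _).le,
          mul_assoc _ _ (t ^ _), ← Real.mul_rpow (sq_nonneg ρ) ht.le]
        gcongr
        exact lintegral_enorm_slopeDiff_heatKernel_le hv hh hk x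
    _ = _ := by simp

lemma HasSlopeBound.add_half {C : ℝ} (hC : HasSlopeBound μ pr X T l x h k C) (hC₀ : 0 ≤ C)
    (hX : ∀ x, IsDrivenSolution μ a pr W ρ T x (X x)) (hW : IsFBM μ (1 / 2) W)
    (hWc : ∀ ω, Continuous fun t => W t ω) (hρ : ρ ≠ 0) (hh : h ≠ 0) (hk : k ≠ 0) (hl₀ : 0 ≤ l)
    (hl : ∀ t ∈ Ioc 0 T, ∫ r in Ioc 0 t, a.parametrixConst ρ T * (t - r) ^ (-(1 / 2) : ℝ) *
      (r ^ (-(3 / 4) : ℝ) * rexp (l * r)) ≤ 1 / 2 * (t ^ (-(3 / 4) : ℝ) * rexp (l * t))) :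
    HasSlopeBound μ pr X T l x h k
      (rexp (a.K * T) * (6 * √(|h| + |k|) * (ρ ^ 2) ^ (-(3 / 4) : ℝ)) + C / 2) := by
  rintro t ⟨ht, htT⟩ g G hg hgG
  have := nonempty_of_isProbabilityMeasure μ
  have hG : 0 ≤ G := (abs_nonneg _).trans (hgG (pr (Classical.arbitrary Ω), 0))
  set P := rexp (a.K * T) * (6 * √(|h| + |k|) * (ρ ^ 2) ^ (-(3 / 4) : ℝ))
  set w : ℝ → ℝ := fun t => t ^ (-(3 / 4) : ℝ) * rexp (l * t)
  set L : ℝ → ℝ := fun r => slopeDiff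
    (fun s => ∫ ω, a.parametrixOperator ρ t r g (pr ω, X s r ω) ∂μ) x h k
  have hfirst : t ^ (-(3 / 4) : ℝ) ≤ w t :=
    le_mul_of_one_le_right (by positivity) (Real.one_le_exp (by positivity))
  have hL : |∫ r in Ioc 0 t, L r| ≤ G * C * (1 / 2 * w t) := calc
    _ ≤ ∫ r in Ioc 0 t, G * C * (a.parametrixConst ρ T * (t - r) ^ (-(1 / 2) : ℝ) * w r) := by
      refine norm_integral_le_of_norm_le (f := L) ((integrableOn_sub_rpow_mul_rpow_mul_exp
        (a := -(1 / 2)) (b := -(3 / 4)) (by norm_num) (by norm_num) (by norm_num) (by norm_num)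
        ht.le _ l).const_mul _) ?_
      filter_upwards [ae_restrict_mem measurableSet_Ioc, Measure.ae_ne (volume.restrict _) t]
        with r hr hrt
      refine (hC r ⟨hr.1, hr.2.trans htT⟩ _ _ (RandomDrift.measurable_parametrixOperator hg)
        (RandomDrift.abs_parametrixOperator_le hρ hr.1.le (hr.2.lt_of_ne hrt) htT hgG)).trans_eq ?_
      ring
    _ ≤ G * C * (1 / 2 * w t) := by
      rw [integral_const_mul]
      gcongr
      exact hl t ⟨ht, htT⟩
  have hexpansion := fun s =>
    (hX s).integral_eq_add_integral_parametrixOperator hW hWc hρ ht htT hg hgG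
  have hint := fun s => (hX s).integrableOn_integral_parametrixOperator hρ ht.le htT hg hgG
  simp only [hexpansion]
  rw [slopeDiff_add, slopeDiff_integral hint]
  calc _ ≤ G * (P * t ^ (-(3 / 4) : ℝ)) + G * C * (1 / 2 * w t) :=
        (abs_add_le _ _).trans (add_le_add (a.abs_slopeDiff_integral_mul_heatKernel_le
          (hX 0).measurable_env hρ ht htT hg hgG hh hk x) hL)
    _ ≤ G * (P * w t) + G * C * (1 / 2 * w t) := by gcongr
    _ = G * ((P + C / 2) * w t) := by ring

theorem IsDrivenSolution.contDiff_integral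
    (hX : ∀ x, IsDrivenSolution μ a pr W ρ T x (X x)) (hW : IsFBM μ (1 / 2) W)
    (hWc : ∀ ω, Continuous fun t => W t ω) (hρ : ρ ≠ 0) (hT : 0 < T) (hg : Measurable g)
    (hgG : ∀ p, |g p| ≤ G) : ContDiff ℝ 1 fun x => ∫ ω, g (pr ω, X x T ω) ∂μ := by
  obtain ⟨l, hl₀, hl⟩ := exists_setIntegral_sub_rpow_mul_rpow_mul_exp_le (a := -(1 / 2))
    (b := -(3 / 4)) (T := T) (by norm_num) (by norm_num) (by norm_num) (by norm_num)
    (a.parametrixConst_nonneg (ρ := ρ) (T := T))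
  set P : ℝ → ℝ := fun δ => rexp (a.K * T) * (6 * √δ * (ρ ^ 2) ^ (-(3 / 4) : ℝ)) with hP
  refine contDiff_one_of_abs_slopeDiff_le
    (ω := fun δ => G * (2 * P δ * (T ^ (-(3 / 4) : ℝ) * rexp (l * T)))) ?_ fun x h k hh hk => ?_
  · have : Continuous fun δ => G * (2 * P δ * (T ^ (-(3 / 4) : ℝ) * rexp (l * T))) := by fun_prop
    exact this.tendsto' 0 0 (by simp [hP])
  · have hbound : HasSlopeBound μ pr X T l x h k (2 * P (|h| + |k|)) :=
      of_forall_imp_add_half isClosed_setOf_hasSlopeBound (by positivity) (by positivity)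
        (hasSlopeBound_of_pos hT hl₀) fun C hC₀ hC => hC.add_half hC₀ hX hW hWc hρ hh hk hl₀ hl
    exact hbound T ⟨hT, le_rfl⟩ g G hg hgG

end Regularity

/-! ### Equations driven by a Brownian motion and an independent continuous process -/

section Independence

variable {Ω : Type*} {m₀ : MeasurableSpace Ω} {μ : Measure Ω}

lemma indep_sup_of_indep_of_le {m m' m₁ m₂ : MeasurableSpace Ω} [IsZeroOrProbabilityMeasure μ]
    (h : Indep m m' μ) (h₁₂ : Indep m₁ m₂ μ) (hm : m ≤ m₀) (hm' : m' ≤ m₀) (h₁ : m₁ ≤ m')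
    (h₂ : m₂ ≤ m') : Indep (m ⊔ m₁) m₂ μ := by
  have hgen : m ⊔ m₁ = .generateFrom
      {E | ∃ A C, MeasurableSet[m] A ∧ MeasurableSet[m₁] C ∧ E = A ∩ C} := by
    refine le_antisymm (sup_le (fun A hA => ?_) fun C hC => ?_) (MeasurableSpace.generateFrom_le ?_)
    · exact .basic _ ⟨A, univ, hA, .univ, (inter_univ A).symm⟩
    · exact .basic _ ⟨univ, C, .univ, hC, (univ_inter C).symm⟩
    · rintro _ ⟨A, C, hA, hC, rfl⟩
      exact .inter ((le_sup_left : m ≤ m ⊔ m₁) _ hA) ((le_sup_right : m₁ ≤ m ⊔ m₁) _ hC)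
  refine IndepSets.indep (sup_le hm (h₁.trans hm')) (h₂.trans hm') ?_
    (@MeasurableSpace.isPiSystem_measurableSet Ω m₂) hgen
    (@MeasurableSpace.generateFrom_measurableSet Ω m₂).symm ?_
  · rintro _ ⟨A, C, hA, hC, rfl⟩ _ ⟨A', C', hA', hC', rfl⟩ -
    exact ⟨A ∩ A', C ∩ C', hA.inter hA', hC.inter hC', inter_inter_inter_comm _ _ _ _⟩
  · rw [IndepSets_iff]
    rw [Indep_iff] at h h₁₂
    rintro _ D ⟨A, C, hA, hC, rfl⟩ hD
    rw [inter_assoc, h A (C ∩ D) hA ((h₁ _ hC).inter (h₂ _ hD)), h₁₂ C D hC hD,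
      h A C hA (h₁ _ hC), mul_assoc]

lemma indep_sup_generateFrom_null {m₁ m₂ : MeasurableSpace Ω} (h : Indep m₁ m₂ μ) :
    Indep (m₁ ⊔ .generateFrom {A | μ A = 0}) m₂ μ := by
  have hle : m₁ ⊔ .generateFrom {A | μ A = 0} ≤ eventuallyMeasurableSpace m₁ (ae μ) :=
    sup_le le_eventuallyMeasurableSpace <| MeasurableSpace.generateFrom_le fun A hA =>
      ⟨∅, @MeasurableSet.empty _ m₁, ae_eq_empty.2 hA⟩
  rw [Indep_iff] at h ⊢
  intro A D hA hD
  obtain ⟨A', hA', hAA'⟩ := hle _ hA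
  rw [measure_congr (hAA'.inter (Filter.EventuallyEq.refl _ D)), measure_congr hAA', h A' D hA' hD]

variable {B W : ℝ → Ω → ℝ}

lemma IsFBM.indep_sup_augPairFiltration [IsProbabilityMeasure μ] (hW : IsFBM μ (1 / 2) W)
    (hB : ∀ t, Measurable (B t)) (hBW : IndepFun (fun ω t => B t ω) (fun ω t => W t ω) μ)
    {s t : ℝ} (hs : 0 ≤ s) (hst : s < t) :
    Indep (.comap (fun ω t => B t ω) inferInstance ⊔ augPairFiltration μ B W s)
      (.comap (fun ω => W t ω - W s ω) inferInstance) μ := by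
  have hpath : ∀ {ι : Type} (V : ι → Ω → ℝ) (i : ι),
      Measurable[.comap (fun ω i => V i ω) inferInstance] (V i) := fun V i =>
    (measurable_pi_apply i).comp (comap_measurable fun ω i => V i ω)
  have hpast : Indep (.comap (fun ω t => B t ω) inferInstance ⊔
      .comap (fun ω (r : Icc 0 s) => W r ω) inferInstance)
      (.comap (fun ω => W t ω - W s ω) inferInstance) μ := by
    refine indep_sup_of_indep_of_le ((IndepFun_iff_Indep _ _ _).1 hBW)
      ((IndepFun_iff_Indep _ _ _).1 (hW.indepFun_increment hs hst))
      (measurable_pi_iff.2 hB).comap_le (measurable_pi_iff.2 hW.meas).comap_le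
      (Measurable.comap_le ?_) ((hpath W t).sub (hpath W s)).comap_le
    exact @measurable_pi_iff _ _ _ (.comap (fun ω t => W t ω) inferInstance) _ _ |>.2
      fun r => hpath W r
  refine indep_of_indep_of_le_left (indep_sup_generateFrom_null hpast)
    (sup_le (le_sup_left.trans le_sup_left) (sup_le (iSup₂_le fun r hr => sup_le ?_ ?_)
      le_sup_right))
  · exact (hpath B r).comap_le.trans (le_sup_left.trans le_sup_left)
  · exact (hpath (fun r : Icc 0 s => W r) ⟨r, hr⟩).comap_le.trans
      (le_sup_right.trans le_sup_left)

lemma augPairFiltration_le [μ.IsComplete] (hB : ∀ t, Measurable (B t))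
    (hW : ∀ t, Measurable (W t)) (s : ℝ) : augPairFiltration μ B W s ≤ m₀ :=
  sup_le (iSup₂_le fun r _ => sup_le (hB r).comap_le (hW r).comap_le)
    (MeasurableSpace.generateFrom_le fun _ hA => measurableSet_of_null hA)

end Independence

section MixedEquation

/-- The space of continuous real paths, with the σ-algebra generated by the evaluations. -/
abbrev ContinuousPath : Type := {σ : ℝ → ℝ // Continuous σ}

lemma ContinuousPath.measurable_eval : Measurable fun p : ContinuousPath × ℝ => p.1.1 p.2 :=
  (measurable_uncurry_of_continuous_of_measurable (u := fun r (σ : ContinuousPath) => σ.1 r)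
    (fun σ => σ.2) fun r => (measurable_pi_apply r).comp measurable_subtype_coe).comp
    measurable_swap

variable {Ω : Type*} [MeasurableSpace Ω] {μ : Measure Ω} {B W : ℝ → Ω → ℝ} {ρ₁ ρ₂ T C : ℝ}
  {M K : ℝ≥0} {b b₁ b₂ : ℝ → ℝ → ℝ} {X : ℝ → Ω → ℝ} {x : ℝ}

lemma ContinuousPath.measurable_comp_add_mul (hb : Measurable fun p : ℝ × ℝ => b p.1 p.2) (ρ : ℝ) :
    Measurable fun p : ContinuousPath × ℝ × ℝ => b p.2.1 (p.2.2 + ρ * p.1.1 p.2.1) :=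
  have hσ : Measurable fun p : ContinuousPath × ℝ × ℝ => p.1.1 p.2.1 :=
    ContinuousPath.measurable_eval.comp (measurable_fst.prodMk measurable_snd.fst)
  hb.comp (measurable_snd.fst.prodMk (measurable_snd.snd.add (hσ.const_mul ρ)))

/-- The drift of `X - ρ σ` in the environment `σ`, where `X` has drift `b₁ + b₂`. The Lipschitz part
is cut off outside `[0, T]`, where nothing is assumed about it. -/
def RandomDrift.shift (ρ T : ℝ) (hb₁ : Measurable fun p : ℝ × ℝ => b₁ p.1 p.2)
    (hM : ∀ t y, |b₁ t y| ≤ M) (hb₂ : Measurable fun p : ℝ × ℝ => b₂ p.1 p.2)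
    (hK : ∀ t ∈ Icc 0 T, LipschitzWith K (b₂ t))
    (hC : ∀ t ∈ Icc 0 T, ∀ y, |b₂ t y| ≤ C * (1 + |y|)) : RandomDrift ContinuousPath where
  bdd σ r y := b₁ r (y + ρ * σ.1 r)
  lip σ r y := (Icc 0 T).indicator (fun r => b₂ r (y + ρ * σ.1 r)) r
  M := M
  K := K
  measurable_bdd := ContinuousPath.measurable_comp_add_mul hb₁ ρ
  measurable_lip := (ContinuousPath.measurable_comp_add_mul hb₂ ρ).indicator
    (measurableSet_Icc.preimage measurable_snd.fst)
  abs_bdd_le σ r y := hM _ _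
  lipschitzWith_lip σ r := by
    by_cases hr : r ∈ Icc 0 T
    · refine .of_dist_le_mul fun y z => ?_
      simpa [hr] using (hK r hr).dist_le_mul (y + ρ * σ.1 r) (z + ρ * σ.1 r)
    · simpa [hr] using LipschitzWith.const' (0 : ℝ)
  exists_abs_lip_zero_le σ := by
    obtain ⟨N, hN⟩ := (isCompact_Icc (a := 0) (b := T)).exists_bound_of_continuousOn
      (f := fun r => C * (1 + |ρ * σ.1 r|)) (by have := σ.2; fun_prop)
    refine ⟨|N|, fun r => ?_⟩
    by_cases hr : r ∈ Icc 0 T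
    · simpa [hr] using ((hC r hr _).trans (le_abs_self _)).trans ((hN r hr).trans (le_abs_self N))
    · simp [hr]

theorem isDrivenSolution_sub_mul [IsProbabilityMeasure μ] [μ.IsComplete] (hT : 0 ≤ T)
    (hB : ∀ t, Measurable (B t)) (hBc : ∀ ω, Continuous fun t => B t ω) (hW : IsFBM μ (1 / 2) W)
    (hBW : IndepFun (fun ω t => B t ω) (fun ω t => W t ω) μ)
    (hb₁ : Measurable fun p : ℝ × ℝ => b₁ p.1 p.2) (hM : ∀ t y, |b₁ t y| ≤ M)
    (hb₂ : Measurable fun p : ℝ × ℝ => b₂ p.1 p.2)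
    (hK : ∀ t ∈ Icc 0 T, LipschitzWith K (b₂ t))
    (hC : ∀ t ∈ Icc 0 T, ∀ y, |b₂ t y| ≤ C * (1 + |y|))
    (hXc : ∀ ω, ContinuousOn (fun t => X t ω) (Icc 0 T))
    (hXm : ∀ t ∈ Icc 0 T, Measurable[augPairFiltration μ B W t] (X t))
    (hX : ∀ᵐ ω ∂μ, ∀ t ∈ Icc 0 T, X t ω =
      x + (∫ r in Ioc 0 t, (b₁ r (X r ω) + b₂ r (X r ω))) + ρ₁ * B t ω + ρ₂ * W t ω) :
    IsDrivenSolution μ (.shift ρ₁ T hb₁ hM hb₂ hK hC) (fun ω => ⟨fun t => B t ω, hBc ω⟩) W ρ₂ T x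
      fun t ω => X (projIcc 0 T hT t) ω - ρ₁ * B t ω where
  measurable_env := (measurable_pi_iff.2 hB).subtype_mk
  measurable t := ((hXm _ (projIcc 0 T hT t).2).mono
    (augPairFiltration_le hB hW.meas _) le_rfl).sub ((hB t).const_mul ρ₁)
  continuous ω := ((hXc ω).comp_continuous (continuous_projIcc (h := hT)).subtype_val
    fun t => (projIcc 0 T hT t).2).sub ((hBc ω).const_mul ρ₁)
  ae_eq := by
    filter_upwards [hX, hW.ae_eq_zero] with ω hω hW₀ t ht
    have hdrift : ∫ r in Ioc 0 t, (b₁ r (X r ω) + b₂ r (X r ω)) = ∫ r in 0..t,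
        (RandomDrift.shift ρ₁ T hb₁ hM hb₂ hK hC).drift ⟨fun t => B t ω, hBc ω⟩ r
          (X (projIcc 0 T hT r) ω - ρ₁ * B r ω) := by
      rw [intervalIntegral.integral_of_le ht.1]
      refine setIntegral_congr_fun measurableSet_Ioc fun r hr => ?_
      have hrT : r ∈ Icc 0 T := ⟨hr.1.le, hr.2.trans ht.2⟩
      simp [RandomDrift.drift, RandomDrift.shift, hrT, projIcc_of_mem hT hrT]
    rw [projIcc_of_mem hT ht, hω t ht, hW₀, hdrift]
    ring
  indepFun s s' hs hss' hs'T := by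
    have hsT : s ∈ Icc 0 T := ⟨hs, hss'.le.trans hs'T⟩
    rw [IndepFun_iff_Indep]
    refine indep_of_indep_of_le_left (hW.indep_sup_augPairFiltration hB hBW hs hss')
      (Measurable.comap_le ?_)
    have hpath : Measurable[.comap (fun ω t => B t ω) inferInstance ⊔ augPairFiltration μ B W s]
        fun ω t => B t ω := (comap_measurable _).mono le_sup_left le_rfl
    simp only [projIcc_of_mem hT hsT]
    exact hpath.subtype_mk.prodMk (((hXm s hsT).mono le_sup_right le_rfl).sub
      (((measurable_pi_apply s).comp hpath).const_mul ρ₁))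

end MixedEquation

theorem stmt9_general {Ω : Type*} [MeasurableSpace Ω] (μ : Measure Ω) [IsProbabilityMeasure μ]
    (hμc : μ.IsComplete) (T : ℝ) (hT : 0 < T) (ρ₁ ρ₂ : ℝ) (hρ₂ : ρ₂ ≠ 0) (B W : ℝ → Ω → ℝ)
    (hB : ∀ t, Measurable (B t)) (hBcont : ∀ ω, Continuous fun t => B t ω)
    (hW : IsFBM μ (1 / 2) W) (hWcont : ∀ ω, Continuous fun t => W t ω)
    (hindep : IndepFun (fun ω => fun t : ℝ => B t ω) (fun ω => fun t : ℝ => W t ω) μ)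
    (b btilde bhat : ℝ → ℝ → ℝ) (hdecomp : ∀ t x, b t x = btilde t x + bhat t x)
    (htmeas : Measurable fun p : ℝ × ℝ => btilde p.1 p.2)
    (htbdd : ∃ M : ℝ, ∀ t x, |btilde t x| ≤ M)
    (hhmeas : Measurable fun p : ℝ × ℝ => bhat p.1 p.2) (Klip Cgr : ℝ)
    (hhlip : ∀ t ∈ Set.Icc (0 : ℝ) T, ∀ x y : ℝ, |bhat t x - bhat t y| ≤ Klip * |x - y|)
    (hhgrowth : ∀ t ∈ Set.Icc (0 : ℝ) T, ∀ x : ℝ, |bhat t x| ≤ Cgr * (1 + |x|))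
    (X : ℝ → ℝ → Ω → ℝ)
    (hXsol : ∀ x : ℝ,
      (∀ ω, ContinuousOn (fun t => X x t ω) (Set.Icc 0 T)) ∧
      (∀ t ∈ Set.Icc (0 : ℝ) T, Measurable[augPairFiltration μ B W t] (X x t)) ∧
      (∀ᵐ ω ∂μ, ∀ t ∈ Set.Icc (0 : ℝ) T,
          X x t ω = x + (∫ u in Set.Ioc (0 : ℝ) t, b u (X x u ω)) +
            ρ₁ * B t ω + ρ₂ * W t ω))
    (Φ : ℝ → ℝ) (hΦ : Measurable Φ) (hΦbdd : ∃ G : ℝ, ∀ y, |Φ y| ≤ G) :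
    ContDiff ℝ 1 fun x : ℝ => ∫ ω, Φ (X x T ω) ∂μ := by
  obtain ⟨M, hM⟩ := htbdd
  obtain ⟨G, hG⟩ := hΦbdd
  simp only [hdecomp] at hXsol
  have hlip : ∀ t ∈ Icc 0 T, LipschitzWith Klip.toNNReal (bhat t) := fun t ht =>
    .of_dist_le_mul fun x y => (hhlip t ht x y).trans
      (mul_le_mul_of_nonneg_right (le_coe_toNNReal _) (abs_nonneg _))
  have hY := fun x => isDrivenSolution_sub_mul hT.le hB hBcont hW hindep htmeas
    (fun t y => (hM t y).trans (le_coe_toNNReal M)) hhmeas hlip hhgrowth (hXsol x).1 (hXsol x).2.1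
    (hXsol x).2.2
  have hg : Measurable fun p : ContinuousPath × ℝ => Φ (p.2 + ρ₁ * p.1.1 T) :=
    hΦ.comp (measurable_snd.add ((ContinuousPath.measurable_eval.comp
      (measurable_fst.prodMk (measurable_const (a := T)))).const_mul ρ₁))
  simpa using IsDrivenSolution.contDiff_integral hY hW hWcont hρ₂ hT hg fun p => hG _

/-- Lemma `u(x)` / Theorem `Volatility2`, smoothness part: for the unique
strong solution `X^x` of `X^x_t = x + ∫_0^t b(u,X^x_u)du + ρ₁B^H_t + ρ₂W_t`, the map
`x ↦ E[Φ(X^x_T)]` belongs to `C¹(ℝ)` for every `Φ ∈ C_c^∞(ℝ)`. -/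
theorem stmt9 {Ω : Type*} [MeasurableSpace Ω] (μ : Measure Ω) [IsProbabilityMeasure μ]
    (hμc : μ.IsComplete) (H T : ℝ) (hH0 : 0 < H) (hH : H < 1 / 2) (hT : 0 < T)
    (ρ₁ ρ₂ : ℝ) (hρ₁ : ρ₁ ≠ 0) (hρ₂ : ρ₂ ≠ 0)
    (B W : ℝ → Ω → ℝ) (hB : IsFBM μ H B) (hBcont : ∀ ω, Continuous fun t => B t ω)
    (hW : IsFBM μ (1 / 2) W) (hWcont : ∀ ω, Continuous fun t => W t ω)
    (hindep : IndepFun (fun ω => fun t : ℝ => B t ω) (fun ω => fun t : ℝ => W t ω) μ)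
    (b btilde bhat : ℝ → ℝ → ℝ)
    (hdecomp : ∀ t x, b t x = btilde t x + bhat t x)
    (htmeas : Measurable fun p : ℝ × ℝ => btilde p.1 p.2)
    (htbdd : ∃ M : ℝ, ∀ t x, |btilde t x| ≤ M)
    (hhmeas : Measurable fun p : ℝ × ℝ => bhat p.1 p.2)
    (Klip Cgr : ℝ)
    (hhlip : ∀ t ∈ Set.Icc (0 : ℝ) T, ∀ x y : ℝ, |bhat t x - bhat t y| ≤ Klip * |x - y|)
    (hhgrowth : ∀ t ∈ Set.Icc (0 : ℝ) T, ∀ x : ℝ, |bhat t x| ≤ Cgr * (1 + |x|))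
    (X : ℝ → ℝ → Ω → ℝ)
    (hXsol : ∀ x : ℝ,
      (∀ ω, ContinuousOn (fun t => X x t ω) (Set.Icc 0 T)) ∧
      (∀ t ∈ Set.Icc (0 : ℝ) T, Measurable[augPairFiltration μ B W t] (X x t)) ∧
      (∀ᵐ ω ∂μ, ∀ t ∈ Set.Icc (0 : ℝ) T,
          X x t ω = x + (∫ u in Set.Ioc (0 : ℝ) t, b u (X x u ω)) +
            ρ₁ * B t ω + ρ₂ * W t ω))
    (Φ : ℝ → ℝ) (hΦsmooth : ContDiff ℝ (⊤ : ℕ∞) Φ) (hΦsupp : HasCompactSupport Φ) :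
    ContDiff ℝ 1 fun x : ℝ => ∫ ω, Φ (X x T ω) ∂μ := by
  obtain ⟨G, hG⟩ := hΦsupp.exists_bound_of_continuous hΦsmooth.continuous
  exact stmt9_general μ hμc T hT ρ₁ ρ₂ hρ₂ B W hB.meas hBcont hW hWcont hindep b btilde bhat hdecomp
    htmeas htbdd hhmeas Klip Cgr hhlip hhgrowth X hXsol Φ hΦsmooth.continuous.measurable ⟨G, hG⟩
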